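/- arXiv:1608.05162 — 3 statements merged into one kernel-verified Lean document; each statement's English description precedes it below -/
import Mathlib

section
/- Let R be a complete Noetherian local Cohen–Macaulay normal domain such that every rank-one reflexive R-module whose class in Cl(R) is a torsion element is a maximal Cohen–Macaulay R-module, and assume the divisor class group Cl(R) is finite. If M = ⊕_{i=0}^n M_i is a basic R-module giving a splitting NCCR of R, then every rank-one reflexive R-module is isomorphic to some M_i; in particular Cl(R) = { [M_0], [M_1], …, [M_n] }. -/
/-!
Let `M = ⨁ M i`, `Λ = End_R(M)`, `d = dim R`, and let `N` be divisorial. Each `Hom_R(N, M i)` is again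
divisorial; as `Cl(R)` is finite its class is torsion, so it is maximal Cohen–Macaulay by hypothesis.
Therefore the `Λ`-module `X = Hom_R(N, M)` has an `R`-regular sequence of length `d` (Rees).
Since `Λ` has global dimension `d`, the module `X` is projective over `Λ`: killing the terms of
the regular sequence raises the degree of `Ext`, and Nakayama gives `Ext_Λ^1(X, -) = 0` from
`Ext_Λ^{d+1} = 0` (`projective_of_isWeaklyRegular`).

Projectivity of `X` forces `N` to be one of the `M i` (`exists_equiv_of_projective_hom`). A finite
dual basis of `X` presents the identity of the divisorial module `Hom_R(N, M 0)` as a sum of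
endomorphisms, each induced by a single map `N → M i`. Endomorphisms of a divisorial module over
a normal domain are scalars (`exists_eq_smul`), so locality of `R` makes one of them
invertible; the corresponding map `N → M i` is an isomorphism (`bijective_of_extends`).
-/

/- ## Preliminary definitions -/

open Module TensorProduct CategoryTheory

universe u

section Defs

variable (R : Type u) [CommRing R]

/-- `N ∈ add_R M` : `N` is isomorphic to a direct summand of a finite direct sum of
copies of `M`. -/
def MemAdd (M N : Type u) [AddCommGroup M] [Module R M] [AddCommGroup N] [Module R N] : Prop :=
  ∃ (k : ℕ) (P : ModuleCat.{u} R), Nonempty ((N × P) ≃ₗ[R] (Fin k → M))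

/-- `M` is a generator, i.e. `R ∈ add_R M`. -/
def IsGeneratorModule (M : Type u) [AddCommGroup M] [Module R M] : Prop := MemAdd R M R

/-- `M` is an indecomposable module: it is nonzero and admits no nontrivial
direct sum decomposition. -/
def IsIndecomposableModule (M : Type u) [AddCommGroup M] [Module R M] : Prop :=
  Nontrivial M ∧ ∀ A B : Submodule R M, IsCompl A B → A = ⊥ ∨ B = ⊥

/-- `M` is steady : `M` is a generator and `End_R(M) ∈ add_R M`. -/
def IsSteadyModule (M : Type u) [AddCommGroup M] [Module R M] : Prop :=
  IsGeneratorModule R M ∧ MemAdd R M (Module.End R M)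

/-- The family `(M i)` (the indecomposable decomposition of `M = ⊕ i, M i`) is semi-steady:
`M` is a generator and, for each `i`, `Hom_R(M i, M) ∈ add_R M` or
`Hom_R(M i, M) ∈ add_R M^*`. -/
def IsSemiSteadyFamily {m : ℕ} (M : Fin m → Type u) [∀ i, AddCommGroup (M i)]
    [∀ i, Module R (M i)] : Prop :=
  IsGeneratorModule R (∀ j, M j) ∧
  ∀ i, MemAdd R (∀ j, M j) (M i →ₗ[R] ∀ j, M j) ∨
       MemAdd R (Module.Dual R (∀ j, M j)) (M i →ₗ[R] ∀ j, M j)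

/-- `M` has rank one: after tensoring with the fraction field of `R`, it becomes
one-dimensional. -/
def HasRankOne (M : Type u) [AddCommGroup M] [Module R M] : Prop :=
  Module.finrank (FractionRing R) (FractionRing R ⊗[R] M) = 1

/-- A divisorial module: a finitely generated rank-one reflexive module. -/
def IsDivisorialModule (M : Type u) [AddCommGroup M] [Module R M] : Prop :=
  Module.Finite R M ∧ Module.IsReflexive R M ∧ HasRankOne R M

/-- The depth of a module over a (local) ring, defined as
`inf { i | Ext^i_R(R/m, M) ≠ 0 }`. -/
noncomputable def moduleDepth (hR : IsLocalRing R) (M : Type u) [AddCommGroup M]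
    [Module R M] : ℕ∞ :=
  letI := hR
  sInf {i : ℕ∞ | ∃ k : ℕ, i = (k : ℕ∞) ∧
    ¬ Subsingleton ↥(((Ext R (ModuleCat.{u} R) k).obj
        (Opposite.op (ModuleCat.of R (IsLocalRing.ResidueField R)))).obj (ModuleCat.of R M))}

/-- `M` is a maximal Cohen-Macaulay module over the local ring `R`:
its depth equals (i.e. is at least) the Krull dimension of `R`. -/
def IsMCM (M : Type u) [AddCommGroup M] [Module R M] : Prop :=
  ∀ hR : IsLocalRing R, ringKrullDim R ≤ (moduleDepth R hR M : WithBot ℕ∞)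

end Defs

section GlobalDim

variable (Λ : Type u) [Ring Λ]

/-- The global dimension of the ring `Λ` is at most `d`, expressed via vanishing of
`Ext^{d+1}` on the category of `Λ`-modules. -/
def GlobalDimLE (d : ℕ) : Prop :=
  ∀ M N : ModuleCat.{u} Λ,
    Subsingleton ↥(((Ext ℤ (ModuleCat.{u} Λ) (d + 1)).obj (Opposite.op M)).obj N)

/-- The global dimension of the ring `Λ`. -/
noncomputable def globalDim : ℕ∞ :=
  sInf {d : ℕ∞ | ∃ k : ℕ, d = (k : ℕ∞) ∧ GlobalDimLE Λ k}

end GlobalDim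

section Order

variable (R : Type u) [CommRing R]

/-- `Λ` is a non-singular `R`-order: `Λ` is a module-finite `R`-algebra which is
maximal Cohen-Macaulay as an `R`-module, and `gl.dim Λ_p = dim R_p` for every
prime `p` of `R`. -/
def IsNonsingularOrder (Λ : Type u) [Ring Λ] [Algebra R Λ] : Prop :=
  Module.Finite R Λ ∧ IsMCM R Λ ∧
  ∀ p : PrimeSpectrum R,
    (globalDim (Localization.AtPrime p.asIdeal ⊗[R] Λ) : WithBot ℕ∞) =
      ringKrullDim (Localization.AtPrime p.asIdeal)

/-- The nonzero finitely generated reflexive module `M` gives a non-commutative crepant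
resolution (NCCR) of `R`, i.e. `End_R(M)` is a non-singular `R`-order. -/
def GivesNCCR (M : Type u) [AddCommGroup M] [Module R M] : Prop :=
  Module.Finite R M ∧ Module.IsReflexive R M ∧ Nontrivial M ∧
  IsNonsingularOrder R (Module.End R M)

end Order

section ClassGroup

variable (R : Type u) [CommRing R] [IsDomain R]

/-- Data exhibiting the abelian group `Cl` as the divisor class group of the normal
domain `R`: `cl` assigns to each divisorial (rank-one reflexive) module its class,
two divisorial modules have the same class iff they are isomorphic, every class comes
from a divisorial module, the class of `R` is zero, and the class of the divisorial
product `(M ⊗ N)^{**}` is the sum of the classes. -/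
structure DivisorClassGroupData (Cl : Type u) [AddCommGroup Cl] where
  cl : ModuleCat.{u} R → Cl
  cl_surjective : ∀ c : Cl, ∃ M : ModuleCat.{u} R, IsDivisorialModule R ↥M ∧ cl M = c
  cl_eq_iff : ∀ M N : ModuleCat.{u} R, IsDivisorialModule R ↥M → IsDivisorialModule R ↥N →
    (cl M = cl N ↔ Nonempty (↥M ≃ₗ[R] ↥N))
  cl_ring : cl (ModuleCat.of R R) = 0
  cl_add : ∀ M N : ModuleCat.{u} R, IsDivisorialModule R ↥M → IsDivisorialModule R ↥N →
    cl M + cl N = cl (ModuleCat.of R (Module.Dual R (Module.Dual R (↥M ⊗[R] ↥N))))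

end ClassGroup

universe v w

/-! ### The two versions of `Ext`, and finiteness of `Ext` -/

section ExtBridge

/-- Vanishing of the derived-functor `Ext` (computed from a projective resolution, with
`S`-linear structure) implies vanishing of the `Ext` group of the derived category.
The two are related through the description of classes in `Abelian.Ext` by cocycles
on a projective resolution. -/
theorem subsingleton_abelianExt_of_ext {S : Type*} [Ring S] {C : Type w} [Category.{v} C]
    [Abelian C] [Linear S C] [EnoughProjectives C] [HasExt.{v} C] (X Y : C) (n : ℕ)
    (h : Subsingleton ↥(((Ext S C n).obj (Opposite.op X)).obj Y)) :
    Subsingleton (Abelian.Ext X Y n) := by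
  let P := projectiveResolution X
  have e := P.isoExt (R := S) n Y
  have hz : Limits.IsZero ((P.complex.linearYonedaObj S Y).homology n) :=
    (ModuleCat.isZero_of_subsingleton _).of_iso e.symm
  rw [← HomologicalComplex.exactAt_iff_isZero_homology, HomologicalComplex.exactAt_iff,
    ShortComplex.moduleCat_exact_iff] at hz
  refine subsingleton_of_forall_eq 0 fun α => ?_
  obtain ⟨f, hf, rfl⟩ := P.extMk_surjective α (n + 1) rfl
  obtain ⟨g, hg⟩ : ∃ g : P.complex.X ((ComplexShape.up ℕ).prev n) ⟶ Y,
      P.complex.d n _ ≫ g = f := hz f (by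
    change (P.complex.d _ n) ≫ f = 0
    rw [CochainComplex.next]
    exact hf)
  cases n with
  | zero =>
    have h0 : f = 0 := by
      rw [← hg, P.complex.shape, Limits.zero_comp]
      simp
    subst h0
    simp
  | succ p =>
    rw [P.extMk_eq_zero_iff f _ rfl hf p rfl]
    have hp : (ComplexShape.up ℕ).prev (p + 1) = p := CochainComplex.prev_nat_succ p
    revert g
    rw [hp]
    exact fun g hg => ⟨g, hg⟩

end ExtBridge

section Lin
open scoped ModuleCat.Algebra
open Abelian

variable {R : Type u} [CommRing R] [IsNoetherianRing R] {Λ : Type u} [Ring Λ] [Algebra R Λ]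
  [Module.Finite R Λ]

/-- Over a module-finite algebra `Λ` over a Noetherian ring `R`, the groups `Ext_Λ^n(X, Y)`
of finite `Λ`-modules are finite `R`-modules; dimension shifting reduces this to `Hom`. -/
theorem finite_ext (X Y : ModuleCat.{u} Λ) [Module.Finite Λ X] [Module.Finite Λ Y] (n : ℕ) :
    Module.Finite R (Abelian.Ext X Y n) := by
  have : IsNoetherianRing Λ := IsNoetherianRing.of_finite R Λ
  induction n generalizing X with
  | zero =>
    have : Module.Finite R Y := Module.Finite.trans Λ Y
    suffices h : Module.Finite R (X ⟶ Y) from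
      Module.Finite.equiv (Ext.linearEquiv₀ (R := R) (X := X) (Y := Y)).symm
    obtain ⟨s, hs⟩ := Module.Finite.fg_top (R := Λ) (M := X)
    let ev : (X ⟶ Y) →ₗ[R] (s → Y) :=
      { toFun f x := f.hom x
        map_add' f g := by ext; simp
        map_smul' f g := by ext; simp }
    refine Module.Finite.of_injective ev fun f g hfg => ?_
    apply ModuleCat.hom_ext
    refine LinearMap.ext_on hs fun x hx => ?_
    exact congrFun hfg ⟨x, hx⟩
  | succ n ih =>
    obtain ⟨k, π, hπ⟩ := Module.Finite.exists_fin' Λ X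
    have hS := LinearMap.shortExact_shortComplexKer (f := π) hπ
    have : Projective (π.shortComplexKer).X₂ :=
      (IsProjective.iff_projective _).mp (inferInstanceAs (Module.Projective Λ (Fin k → Λ)))
    have := ih (π.shortComplexKer).X₁
    refine Module.Finite.of_surjective
      (hS.extClass.precompOfLinear R Y (add_comm 1 n)) fun x => ?_
    exact Ext.contravariant_sequence_exact₃ hS Y x (Ext.eq_zero_of_projective _) (add_comm 1 n)

end Lin

/-! ### Modules of depth at least the global dimension are projective -/

section Step
open scoped ModuleCat.Algebra Pointwise
open Abelian

variable {R : Type u} [CommRing R] [IsNoetherianRing R] [IsLocalRing R]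
  {Λ : Type u} [Ring Λ] [Algebra R Λ] [Module.Finite R Λ]

/-- If `r ∈ 𝔪` is regular on `X`, the long exact sequence of `0 → X → X → X / rX → 0` shows that
vanishing of `Ext^{n+1}(X / rX, Y)` makes `r` act surjectively on the finite `R`-module
`Ext^n(X, Y)`, which is therefore zero by Nakayama. -/
theorem subsingleton_ext_of_quotient (X Y : ModuleCat.{u} Λ) [Module.Finite Λ X]
    [Module.Finite Λ Y] (r : R) (hr : r ∈ IsLocalRing.maximalIdeal R)
    (hreg : IsSMulRegular X r) (n : ℕ)
    (h : Subsingleton (Ext (ModuleCat.of Λ (X ⧸ LinearMap.range (r • 𝟙 X : X ⟶ X).hom)) Y (n + 1))) :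
    Subsingleton (Ext X Y n) := by
  have := finite_ext (R := R) X Y n
  let S : ShortComplex (ModuleCat.{u} Λ) :=
    ShortComplex.mk (r • 𝟙 X : X ⟶ X)
      (ModuleCat.ofHom (LinearMap.range (r • 𝟙 X : X ⟶ X).hom).mkQ) (by
        apply ModuleCat.hom_ext
        exact LinearMap.range_mkQ_comp _)
  have hS : S.ShortExact := ModuleCat.shortComplex_shortExact S
    (LinearMap.exact_map_mkQ_range _) (fun a b hab => hreg hab) (Submodule.mkQ_surjective _)
  have key : (⊤ : Submodule R (Ext X Y n)) ≤ IsLocalRing.maximalIdeal R • ⊤ := by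
    intro e _
    obtain ⟨e', he'⟩ := Ext.contravariant_sequence_exact₁ hS Y e (add_comm 1 n)
      (h.elim _ _)
    have : r • e' = e := by
      rw [← he']
      simp [S, Ext.mk₀_smul]
    rw [← this]
    exact Submodule.smul_mem_smul hr trivial
  have hbot := Submodule.eq_bot_of_le_smul_of_le_jacobson_bot (IsLocalRing.maximalIdeal R)
    (⊤ : Submodule R (Ext X Y n)) Module.Finite.fg_top key
    (IsLocalRing.maximalIdeal_le_jacobson _)
  exact (Submodule.subsingleton_iff R).mp (subsingleton_of_bot_eq_top hbot.symm)

/-- A sequence in `𝔪` of length `ℓ`, regular on `X`, improves vanishing of `Ext^{n+ℓ}(-, Y)` to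
vanishing of `Ext^n(X, Y)`. -/
theorem subsingleton_ext_of_isWeaklyRegular (Y : ModuleCat.{u} Λ) [Module.Finite Λ Y]
    (rs : List R) (hrs : ∀ r ∈ rs, r ∈ IsLocalRing.maximalIdeal R) (n : ℕ)
    (h : ∀ Z : ModuleCat.{u} Λ, Subsingleton (Ext Z Y (n + rs.length)))
    (X : ModuleCat.{u} Λ) [Module.Finite Λ X]
    (hreg : RingTheory.Sequence.IsWeaklyRegular X rs) :
    Subsingleton (Ext X Y n) := by
  induction rs generalizing X n with
  | nil => exact h X
  | cons r rs ih =>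
    rw [RingTheory.Sequence.isWeaklyRegular_cons_iff] at hreg
    refine subsingleton_ext_of_quotient X Y r (hrs r (by simp)) hreg.1 n ?_
    refine ih (fun s hs => hrs s (by simp [hs])) (n + 1) ?_ _ ?_
    · intro Z
      have := h Z
      rwa [List.length_cons, ← add_assoc, add_right_comm] at this
    · let Z := ModuleCat.of Λ (X ⧸ LinearMap.range (r • 𝟙 X : X ⟶ X).hom)
      -- Over `R`, the `Λ`-module `Z` is the quotient `X / rX` of the regular sequence API.
      let q : X →ₗ[R] Z :=
        { toFun := (LinearMap.range (r • 𝟙 X : X ⟶ X).hom).mkQ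
          map_add' := map_add _
          map_smul' := fun a x => map_smul (LinearMap.range (r • 𝟙 X : X ⟶ X).hom).mkQ
            (algebraMap R Λ a) x }
      have hq : Function.Surjective q :=
        Submodule.mkQ_surjective (LinearMap.range (r • 𝟙 X : X ⟶ X).hom)
      have hk : r • (⊤ : Submodule R X) = LinearMap.ker q := by
        ext x
        rw [LinearMap.mem_ker]
        change _ ↔ (LinearMap.range (r • 𝟙 X : X ⟶ X).hom).mkQ x = 0
        rw [Submodule.mkQ_apply, Submodule.Quotient.mk_eq_zero,
          Submodule.mem_smul_pointwise_iff_exists]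
        simp
      let e : QuotSMulTop r X ≃ₗ[R] Z :=
        (Submodule.quotEquivOfEq _ _ hk).trans (q.quotKerEquivOfSurjective hq)
      exact (e.isWeaklyRegular_congr rs).mp hreg.2

theorem projective_of_subsingleton_ext [IsNoetherianRing Λ] (X : ModuleCat.{u} Λ)
    [Module.Finite Λ X]
    (h : ∀ Y : ModuleCat.{u} Λ, Module.Finite Λ Y → Subsingleton (Ext X Y 1)) :
    Module.Projective Λ X := by
  obtain ⟨k, π, hπ⟩ := Module.Finite.exists_fin' Λ X
  have hS := LinearMap.shortExact_shortComplexKer (f := π) hπ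
  have := h (π.shortComplexKer).X₁ (inferInstanceAs (Module.Finite Λ (LinearMap.ker π)))
  obtain ⟨s, hs⟩ := Ext.covariant_sequence_exact₃ X hS (Ext.mk₀ (𝟙 X)) (zero_add 1)
    (Subsingleton.elim _ _)
  obtain ⟨s, rfl⟩ := Ext.homEquiv₀.symm.surjective s
  have hs' : s ≫ (π.shortComplexKer).g = 𝟙 X := by
    apply Ext.homEquiv₀.symm.injective
    simpa using hs
  exact Module.Projective.of_split (P := X) (M := Fin k → Λ) s.hom π
    (by simpa using congrArg ModuleCat.Hom.hom hs')

/-- Over a module-finite `R`-algebra of global dimension at most `d`, a finite module carrying a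
regular sequence in `𝔪` of length `d` is projective. -/
theorem projective_of_isWeaklyRegular {d : ℕ}
    (hΛ : ∀ X Y : ModuleCat.{u} Λ, Subsingleton (Ext X Y (d + 1)))
    (X : Type u) [AddCommGroup X] [Module R X] [Module Λ X] [IsScalarTower R Λ X]
    [Module.Finite R X] (rs : List R) (hrs : ∀ r ∈ rs, r ∈ IsLocalRing.maximalIdeal R)
    (hlen : rs.length = d) (hreg : RingTheory.Sequence.IsWeaklyRegular X rs) :
    Module.Projective Λ X := by
  have : IsNoetherianRing Λ := IsNoetherianRing.of_finite R Λ
  have : Module.Finite Λ X := Module.Finite.of_restrictScalars_finite R Λ X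
  obtain ⟨W, ⟨e⟩⟩ : ∃ W : ModuleCat.{u} Λ, Nonempty (W ≃ₗ[Λ] X) :=
    ⟨ModuleCat.of Λ X, ⟨LinearEquiv.refl Λ X⟩⟩
  have : Module.Finite Λ W := Module.Finite.equiv e.symm
  let e' : W ≃ₗ[R] X :=
    { e.toAddEquiv with
      map_smul' := fun r x =>
        (e.map_smul (algebraMap R Λ r) x).trans (algebraMap_smul Λ r (e x)) }
  have hW : Module.Projective Λ W := by
    refine projective_of_subsingleton_ext W fun Y hY => ?_
    refine subsingleton_ext_of_isWeaklyRegular Y rs hrs 1 (fun Z => ?_) W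
      ((e'.isWeaklyRegular_congr rs).mpr hreg)
    rw [hlen, add_comm]
    exact hΛ Z Y
  exact Module.Projective.of_equiv e

end Step

/-! ### Projectivity over a non-singular order -/

section Depth

variable {R : Type u} [CommRing R] [IsLocalRing R]

/-- A maximal Cohen–Macaulay module `L` satisfies `Ext^k(R / 𝔪, L) = 0` for all `k < dim R`. -/
theorem IsMCM.subsingleton_ext {d : ℕ} (hd : ringKrullDim R = d) {L : Type u} [AddCommGroup L]
    [Module R L] (hL : IsMCM R L) {k : ℕ} (hk : k < d) :
    Subsingleton (Abelian.Ext (ModuleCat.of R (IsLocalRing.ResidueField R))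
      (ModuleCat.of R L) k) := by
  refine subsingleton_abelianExt_of_ext (S := R) _ _ _ ?_
  by_contra hne
  have h1 : moduleDepth R inferInstance L ≤ (k : ℕ∞) := sInf_le ⟨k, rfl, hne⟩
  have h2 : ((d : ℕ∞) : WithBot ℕ∞) ≤ ((k : ℕ∞) : WithBot ℕ∞) :=
    (hd.symm.le.trans (hL inferInstance)).trans (WithBot.coe_le_coe.mpr h1)
  have h3 : d ≤ k := by exact_mod_cast h2
  omega

/-- `Ext^k(Z, Y)` vanishes when the identity of `Y` is a sum of maps factoring through objects `L i`
with `Ext^k(Z, L i) = 0`; this covers finite direct sums without choosing a biproduct. -/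
theorem subsingleton_ext_of_sum_eq_id {ι : Type} [Fintype ι] {C : Type v} [Category.{u} C]
    [Abelian C] [HasExt.{w} C] {Z Y : C} {L : ι → C} (π : ∀ i, Y ⟶ L i) (σ : ∀ i, L i ⟶ Y)
    (hid : ∑ i, π i ≫ σ i = 𝟙 Y) {k : ℕ} (h : ∀ i, Subsingleton (Abelian.Ext Z (L i) k)) :
    Subsingleton (Abelian.Ext Z Y k) := by
  refine subsingleton_of_forall_eq 0 fun α => ?_
  rw [← Abelian.Ext.comp_mk₀_id α, ← hid, Abelian.Ext.mk₀_sum, Abelian.Ext.comp_sum]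
  refine Finset.sum_eq_zero fun i _ => ?_
  rw [← Abelian.Ext.mk₀_comp_mk₀, ← Abelian.Ext.comp_assoc_of_third_deg_zero,
    (h i).elim (α.comp (Abelian.Ext.mk₀ (π i)) (add_zero k)) 0, Abelian.Ext.zero_comp]

/-- If every `Hom(N, M i)` is maximal Cohen–Macaulay, then `Hom(N, ⨁ M i)` has a regular sequence
in `𝔪` of length `dim R`, by Rees' theorem. -/
theorem exists_isRegular_hom_pi [IsNoetherianRing R] {d : ℕ} (hd : ringKrullDim R = d)
    {N : Type u} [AddCommGroup N] [Module R N] {n : ℕ} (M : Fin n → Type u)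
    [∀ i, AddCommGroup (M i)] [∀ i, Module R (M i)]
    [Module.Finite R (N →ₗ[R] ∀ i, M i)] [Nontrivial (N →ₗ[R] ∀ i, M i)]
    (h : ∀ i, IsMCM R (N →ₗ[R] M i)) :
    ∃ rs : List R, rs.length = d ∧ (∀ r ∈ rs, r ∈ IsLocalRing.maximalIdeal R) ∧
      RingTheory.Sequence.IsRegular (N →ₗ[R] ∀ i, M i) rs := by
  refine ModuleCat.exists_isRegular_of_exists_subsingleton_ext (IsLocalRing.maximalIdeal R) d
    (ModuleCat.of R (N →ₗ[R] ∀ i, M i)) ?_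
    (ModuleCat.of R (IsLocalRing.ResidueField R)) ?_ fun k hk => ?_
  · refine lt_top_iff_ne_top.mpr fun htop => ?_
    have := Submodule.eq_bot_of_le_smul_of_le_jacobson_bot (IsLocalRing.maximalIdeal R)
      (⊤ : Submodule R (N →ₗ[R] ∀ i, M i)) Module.Finite.fg_top htop.ge
      (IsLocalRing.maximalIdeal_le_jacobson _)
    exact top_ne_bot this
  · change Module.support R (R ⧸ IsLocalRing.maximalIdeal R) = _
    rw [Module.support_eq_zeroLocus, Ideal.annihilator_quotient]
  · refine subsingleton_ext_of_sum_eq_id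
      (fun i => ModuleCat.ofHom (LinearMap.compRight R (LinearMap.proj i)))
      (fun i => ModuleCat.ofHom (LinearMap.compRight R (LinearMap.single R M i))) ?_
      fun i => (h i).subsingleton_ext hd hk
    ext f x j
    simp [ModuleCat.hom_sum, Finset.sum_apply]

end Depth

section GlobalDimension

/-- A finite global dimension is attained. The case where no `GlobalDimLE Λ k` holds is excluded
since then `globalDim Λ = ⊤`. -/
theorem globalDimLE_of_globalDim_eq {Λ : Type u} [Ring Λ] {d : ℕ} (h : globalDim Λ = d) :
    GlobalDimLE Λ d := by
  have hne : {e : ℕ∞ | ∃ k : ℕ, e = (k : ℕ∞) ∧ GlobalDimLE Λ k}.Nonempty := by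
    by_contra hempty
    rw [Set.not_nonempty_iff_eq_empty] at hempty
    rw [globalDim, hempty, sInf_empty] at h
    exact ENat.natCast_ne_top d h.symm
  obtain ⟨k, hk, hk'⟩ := csInf_mem hne
  rw [← globalDim, h] at hk
  obtain rfl : d = k := by exact_mod_cast hk
  exact hk'

variable {R : Type u} [CommRing R] [IsLocalRing R]

/-- A local ring is its own localization at the maximal ideal. -/
noncomputable def IsLocalRing.equivLocalization :
    R ≃ₐ[R] Localization.AtPrime (IsLocalRing.maximalIdeal R) :=
  IsLocalization.atUnits R (IsLocalRing.maximalIdeal R).primeCompl fun x hx => by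
    simpa [Ideal.primeCompl, IsUnit.mem_submonoid_iff] using hx

/-- `projective_of_isWeaklyRegular` when the bound on the global dimension is known for an
isomorphic algebra `Λ'`; the module is transported to `Λ'` along the isomorphism. -/
theorem projective_of_algEquiv [IsNoetherianRing R] {Λ Λ' : Type u} [Ring Λ] [Algebra R Λ]
    [Ring Λ'] [Algebra R Λ'] [Module.Finite R Λ] (f : Λ ≃ₐ[R] Λ') {d : ℕ}
    (hΛ' : GlobalDimLE Λ' d)
    (X : Type u) [AddCommGroup X] [Module R X] [Module Λ X] [IsScalarTower R Λ X]
    [Module.Finite R X] (rs : List R) (hrs : ∀ r ∈ rs, r ∈ IsLocalRing.maximalIdeal R)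
    (hlen : rs.length = d) (hreg : RingTheory.Sequence.IsWeaklyRegular X rs) :
    Module.Projective Λ X := by
  have : Module.Finite R Λ' := Module.Finite.equiv f.toLinearEquiv
  let _ : Module Λ' X := Module.compHom X (f.symm : Λ' →+* Λ)
  have hsmul : ∀ (a : Λ') (x : X), a • x = f.symm a • x := fun _ _ => rfl
  have : IsScalarTower R Λ' X := ⟨fun r a x => by rw [hsmul, hsmul, map_smul, smul_assoc]⟩
  have : Module.Projective Λ' X := projective_of_isWeaklyRegular
    (fun Y Z => subsingleton_abelianExt_of_ext Y Z _ (hΛ' Y Z)) X rs hrs hlen hreg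
  let g : Λ' ≃+* Λ := f.symm.toRingEquiv
  have : RingHomInvPair (g : Λ' →+* Λ) (g.symm : Λ →+* Λ') := RingHomInvPair.of_ringEquiv g
  have : RingHomInvPair (g.symm : Λ →+* Λ') (g : Λ' →+* Λ) := RingHomInvPair.of_ringEquiv g.symm
  let e : X ≃ₛₗ[(g : Λ' →+* Λ)] X :=
    { AddEquiv.refl X with map_smul' := hsmul }
  exact Module.Projective.of_equiv e

/-- Over a non-singular order `Λ`, a module whose depth over `R` is `dim R` is projective. The
condition `gl.dim Λ_𝔭 = dim R_𝔭` is used at the maximal ideal, where localizing changes nothing. -/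
theorem projective_of_isNonsingularOrder [IsNoetherianRing R] {Λ : Type u} [Ring Λ] [Algebra R Λ]
    (hΛ : IsNonsingularOrder R Λ) {d : ℕ} (hd : ringKrullDim R = d)
    (X : Type u) [AddCommGroup X] [Module R X] [Module Λ X] [IsScalarTower R Λ X]
    [Module.Finite R X] (rs : List R) (hrs : ∀ r ∈ rs, r ∈ IsLocalRing.maximalIdeal R)
    (hlen : rs.length = d) (hreg : RingTheory.Sequence.IsWeaklyRegular X rs) :
    Module.Projective Λ X := by
  obtain ⟨hfin, -, hgl⟩ := hΛ
  have hgl' := hgl ⟨IsLocalRing.maximalIdeal R, inferInstance⟩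
  rw [← ringKrullDim_eq_of_ringEquiv (IsLocalRing.equivLocalization (R := R)).toRingEquiv, hd]
    at hgl'
  exact projective_of_algEquiv ((Algebra.TensorProduct.lid R Λ).symm.trans
      (Algebra.TensorProduct.congr IsLocalRing.equivLocalization AlgEquiv.refl))
    (globalDimLE_of_globalDim_eq (by exact_mod_cast hgl')) X rs hrs hlen hreg

end GlobalDimension

/-! ### Rank-one modules -/

section RankOne

variable (R : Type u) [CommRing R] [IsDomain R]

/-- `A` is nonzero and isomorphic to an `R`-submodule of the fraction field of `R`. This is the
rank-one torsion-free condition, stated so that no finiteness enters. -/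
def EmbedsInFractionField (A : Type u) [AddCommGroup A] [Module R A] : Prop :=
  Nontrivial A ∧ ∃ e : A →ₗ[R] FractionRing R, Function.Injective e

variable {R}

section
variable {A B N : Type u} [AddCommGroup A] [Module R A] [AddCommGroup B] [Module R B]
  [AddCommGroup N] [Module R N]

/-- Any element of a rank-one torsion-free module is, up to a nonzero denominator, a multiple of a
given nonzero one. -/
theorem EmbedsInFractionField.proportional (hA : EmbedsInFractionField R A) {a : A} (ha : a ≠ 0)
    (b : A) : ∃ s r : R, s ≠ 0 ∧ s • b = r • a := by
  obtain ⟨-, e, he⟩ := hA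
  have hea : e a ≠ 0 := fun h => ha (he (by rw [h, map_zero]))
  obtain ⟨r, s, hs, h⟩ := IsFractionRing.div_surjective (A := R) (e b / e a)
  have hs0 : algebraMap R (FractionRing R) s ≠ 0 :=
    IsFractionRing.to_map_ne_zero_of_mem_nonZeroDivisors hs
  refine ⟨s, r, nonZeroDivisors.ne_zero hs, he ?_⟩
  rw [map_smul, map_smul, Algebra.smul_def, Algebra.smul_def]
  rw [div_eq_div_iff hs0 hea] at h
  rw [h, mul_comm]

omit [IsDomain R] in
theorem EmbedsInFractionField.isTorsionFree (hA : EmbedsInFractionField R A) :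
    IsTorsionFree R A := by
  obtain ⟨-, e, he⟩ := hA
  exact he.moduleIsTorsionFree e (by simp)

theorem EmbedsInFractionField.hasRankOne (hA : EmbedsInFractionField R A) : HasRankOne R A := by
  obtain ⟨hA1, e, he⟩ := id hA
  obtain ⟨a, ha⟩ := exists_ne (0 : A)
  refine (finrank_eq_one_iff_of_nonzero' ((1 : FractionRing R) ⊗ₜ[R] a) ?_).mpr ?_
  · intro h
    have := congrArg (e.liftBaseChange (FractionRing R)) h
    simp only [LinearMap.liftBaseChange_tmul, one_smul, map_zero] at this
    exact ha (he (by rw [this, map_zero]))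
  · intro w
    induction w with
    | zero => exact ⟨0, by simp⟩
    | tmul k b =>
      obtain ⟨s, r, hs, h⟩ := hA.proportional ha b
      have hs0 : algebraMap R (FractionRing R) s ≠ 0 := by
        simpa using hs
      refine ⟨k * (algebraMap R (FractionRing R) s)⁻¹ * algebraMap R (FractionRing R) r, ?_⟩
      have hk : k = s • (k * (algebraMap R (FractionRing R) s)⁻¹) := by
        rw [Algebra.smul_def]; field_simp
      conv_rhs => rw [hk]
      rw [TensorProduct.smul_tmul, h, ← TensorProduct.smul_tmul, TensorProduct.smul_tmul',
        smul_eq_mul, mul_one, Algebra.smul_def, mul_comm]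
    | add x y hx hy =>
      obtain ⟨c, rfl⟩ := hx
      obtain ⟨d, rfl⟩ := hy
      exact ⟨c + d, add_smul _ _ _⟩

/-- A reflexive module is torsion-free, hence embeds in `Frac R ⊗ N`, which is a line when `N` has
rank one. -/
theorem IsDivisorialModule.embeds (hN : IsDivisorialModule R N) : EmbedsInFractionField R N := by
  obtain ⟨h1, h2, h3⟩ := hN
  have hfin : Module.Finite (FractionRing R) (FractionRing R ⊗[R] N) :=
    Module.finite_of_finrank_pos (by rw [h3]; exact one_pos)
  constructor
  · by_contra h
    rw [not_nontrivial_iff_subsingleton] at h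
    have : finrank (FractionRing R) (FractionRing R ⊗[R] N) = 0 :=
      finrank_zero_of_subsingleton
    rw [h3] at this
    exact one_ne_zero this
  · let f : (FractionRing R ⊗[R] N) ≃ₗ[FractionRing R] FractionRing R :=
      LinearEquiv.ofFinrankEq _ _ (by rw [h3, finrank_self])
    refine ⟨(f.toLinearMap.restrictScalars R) ∘ₗ TensorProduct.mk R (FractionRing R) N 1, ?_⟩
    have hloc : IsLocalizedModule (nonZeroDivisors R) (TensorProduct.mk R (FractionRing R) N 1) :=
      (isLocalizedModule_iff_isBaseChange (nonZeroDivisors R) (FractionRing R) _).mpr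
        (TensorProduct.isBaseChange R N (FractionRing R))
    refine f.injective.comp ?_
    rw [injective_iff_map_eq_zero]
    intro x hx
    obtain ⟨c, hc⟩ := (IsLocalizedModule.eq_zero_iff (nonZeroDivisors R) _).mp hx
    refine (Module.bijective_dual_eval R N).1 ?_
    ext φ
    have : (c : R) * φ x = 0 := by
      have := congrArg φ hc
      simpa [Submonoid.smul_def] using this
    simpa [nonZeroDivisors.ne_zero c.2] using this

/-- Over a normal domain, an endomorphism of a finite rank-one torsion-free module is multiplication
by an element of `R`: it is multiplication by some `c ∈ Frac R`, integral by Cayley–Hamilton. -/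
theorem exists_eq_smul [IsIntegrallyClosed R] [Module.Finite R A]
    (hA : EmbedsInFractionField R A) (φ : A →ₗ[R] A) : ∃ t : R, ∀ y, φ y = t • y := by
  obtain ⟨hA1, e, he⟩ := id hA
  have htf := hA.isTorsionFree
  obtain ⟨x, hx⟩ := exists_ne (0 : A)
  have hex : e x ≠ 0 := fun h => hx (he (by rw [h, map_zero]))
  let c : FractionRing R := e (φ x) / e x
  have hc : ∀ y, e (φ y) = c * e y := by
    intro y
    obtain ⟨s, r, hs, h⟩ := hA.proportional hx y
    have hs0 : algebraMap R (FractionRing R) s ≠ 0 := by simpa using hs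
    have h1 := congrArg (fun z => e (φ z)) h
    have h2 := congrArg e h
    simp only [map_smul, Algebra.smul_def] at h1 h2
    apply mul_left_cancel₀ hs0
    rw [h1, mul_left_comm, h2]
    simp only [c]
    field_simp
  obtain ⟨p, hp, hp0⟩ := LinearMap.exists_monic_and_aeval_eq_zero R φ
  have hpow : ∀ (n : ℕ) y, e ((φ ^ n) y) = c ^ n * e y := by
    intro n
    induction n with
    | zero => simp
    | succ n ih => intro y; rw [pow_succ, Module.End.mul_apply, ih, hc, pow_succ, mul_assoc]
  have hae : ∀ (q : Polynomial R) y, e (Polynomial.aeval φ q y) = Polynomial.aeval c q * e y := by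
    intro q y
    induction q using Polynomial.induction_on' with
    | add p q hp hq => simp [hp, hq, add_mul]
    | monomial n a =>
      simp [Polynomial.aeval_monomial, Module.algebraMap_end_apply, hpow, Algebra.smul_def,
        mul_assoc]
  have hint : IsIntegral R c := by
    refine ⟨p, hp, ?_⟩
    have := hae p x
    rw [hp0] at this
    simp only [LinearMap.zero_apply, map_zero, zero_eq_mul, hex, or_false] at this
    exact this
  obtain ⟨t, ht⟩ := IsIntegrallyClosed.algebraMap_eq_of_integral hint
  refine ⟨t, fun y => he ?_⟩
  rw [hc, map_smul, Algebra.smul_def, ht]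

end

end RankOne

/-! ### Divisorial modules and projectivity of `Hom` -/

section Divisorial

variable {R : Type u} [CommRing R] [IsDomain R]
variable {A B N L : Type u} [AddCommGroup A] [Module R A] [AddCommGroup B] [Module R B]
  [AddCommGroup N] [Module R N] [AddCommGroup L] [Module R L]

theorem EmbedsInFractionField.eq_zero_of_apply_eq_zero (hA : EmbedsInFractionField R A)
    [IsTorsionFree R B] (f : A →ₗ[R] B) {a : A} (ha : a ≠ 0) (h : f a = 0) : f = 0 := by
  ext b
  obtain ⟨s, r, hs, hsr⟩ := hA.proportional ha b
  have h1 := congrArg f hsr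
  rw [map_smul, map_smul, h, smul_zero] at h1
  exact (smul_eq_zero.mp h1).resolve_left hs

omit [IsDomain R] in
theorem IsDivisorialModule.exists_dual_ne_zero (hN : IsDivisorialModule R N) {x : N}
    (hx : x ≠ 0) : ∃ φ : Dual R N, φ x ≠ 0 := by
  have := hN.2.1
  by_contra! h
  exact hx ((Module.bijective_dual_eval R N).1 (by ext φ; simpa using h φ))

theorem embeds_hom (hN : IsDivisorialModule R N) (hL : EmbedsInFractionField R L) :
    EmbedsInFractionField R (N →ₗ[R] L) := by
  have hNe := hN.embeds
  have htf := hL.isTorsionFree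
  obtain ⟨hL1, e, he⟩ := id hL
  obtain ⟨hN1, -⟩ := id hNe
  obtain ⟨x, hx⟩ := exists_ne (0 : N)
  obtain ⟨m, hm⟩ := exists_ne (0 : L)
  obtain ⟨φ, hφ⟩ := hN.exists_dual_ne_zero hx
  refine ⟨⟨φ.smulRight m, 0, fun h => ?_⟩, e ∘ₗ LinearMap.applyₗ x, ?_⟩
  · have := congrArg (fun f => f x) h
    simp [hφ, hm] at this
  · rw [LinearMap.coe_comp]
    refine he.comp ?_
    rw [injective_iff_map_eq_zero]
    intro f hf
    exact hNe.eq_zero_of_apply_eq_zero f hx hf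

/-- `Hom(N, L)` is divisorial when `N` and `L` are. For surjectivity of the evaluation map, a
functional `Θ` on the dual of `Hom(N, L)` sends `l ∘ ev_x` to `l (g x)` for a unique `g : N → L`,
by reflexivity of `L`; then `Θ` is evaluation at `g`, because the dual of `Hom(N, L)` has rank one
and one nonzero functional of the form `l ∘ ev_x` suffices to test this. -/
theorem IsDivisorialModule.hom [IsNoetherianRing R] (hN : IsDivisorialModule R N)
    (hL : IsDivisorialModule R L) : IsDivisorialModule R (N →ₗ[R] L) := by
  have hH := embeds_hom hN hL.embeds
  have htf := hL.embeds.isTorsionFree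
  have := hN.1
  have := hL.1
  have := hL.2.1
  have hHfin : Module.Finite R (N →ₗ[R] L) := inferInstance
  refine ⟨hHfin, ⟨?_, ?_⟩, hH.hasRankOne⟩
  · rw [injective_iff_map_eq_zero]
    intro h hh
    ext x
    refine (Module.bijective_dual_eval R L).1 ?_
    ext l
    have := LinearMap.congr_fun hh (l ∘ₗ LinearMap.applyₗ x)
    simpa using this
  · intro Θ
    let g : N →ₗ[R] L := (Module.evalEquiv R L).symm.toLinearMap ∘ₗ
      { toFun := fun x => (Θ ∘ₗ LinearMap.lcomp R R (LinearMap.applyₗ (R := R) (M₂ := L) x))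
        map_add' := fun x y => by
          ext l
          have h : l ∘ₗ LinearMap.applyₗ (R := R) (M₂ := L) (x + y) =
              l ∘ₗ LinearMap.applyₗ x + l ∘ₗ LinearMap.applyₗ y := by ext; simp
          exact (congrArg Θ h).trans (map_add Θ _ _)
        map_smul' := fun r x => by
          ext l
          have h : l ∘ₗ LinearMap.applyₗ (R := R) (M₂ := L) (r • x) =
              r • (l ∘ₗ LinearMap.applyₗ x) := by ext; simp
          exact (congrArg Θ h).trans (map_smul Θ r _) }
    have hg : ∀ (l : Dual R L) x, Θ (l ∘ₗ LinearMap.applyₗ x) = l (g x) := by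
      intro l x
      simp [g]
      rfl
    refine ⟨g, ?_⟩
    ext ψ
    have := hH.1
    obtain ⟨f, hf⟩ := exists_ne (0 : N →ₗ[R] L)
    obtain ⟨x, hx⟩ : ∃ x, f x ≠ 0 := by
      by_contra! h
      exact hf (LinearMap.ext h)
    obtain ⟨l, hl⟩ := hL.exists_dual_ne_zero hx
    have hDual : EmbedsInFractionField R (Dual R (N →ₗ[R] L)) := by
      have hne : (l ∘ₗ LinearMap.applyₗ x : Dual R (N →ₗ[R] L)) ≠ 0 := fun h => by
        have := LinearMap.congr_fun h f
        simp [hl] at this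
      refine ⟨⟨_, _, hne⟩, Algebra.linearMap R (FractionRing R) ∘ₗ LinearMap.applyₗ f, ?_⟩
      rw [LinearMap.coe_comp]
      refine (IsFractionRing.injective R (FractionRing R)).comp ?_
      rw [injective_iff_map_eq_zero]
      intro φ hφ
      exact hH.eq_zero_of_apply_eq_zero φ hf hφ
    have hne : (l ∘ₗ LinearMap.applyₗ x : Dual R (N →ₗ[R] L)) ≠ 0 := fun h => by
      have := LinearMap.congr_fun h f
      simp [hl] at this
    obtain ⟨s, r, hs, hsr⟩ := hDual.proportional hne ψ
    have h1 := congrArg Θ hsr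
    have h2 := LinearMap.congr_fun hsr g
    simp only [map_smul, hg, LinearMap.smul_apply, LinearMap.comp_apply,
      LinearMap.applyₗ_apply_apply] at h1 h2
    rw [← h2] at h1
    simpa [hs, eq_comm] using h1

/-- A map `f : N → L` of divisorial modules along which every map into a fixed divisorial module
`B` extends is an isomorphism: since `End B = R`, also every functional on `N` extends to `L`, so
`f` has a bijective dual, and reflexivity gives the claim. -/
theorem bijective_of_extends [IsIntegrallyClosed R] (hN : IsDivisorialModule R N)
    (hL : IsDivisorialModule R L) (hB : IsDivisorialModule R B) (f : N →ₗ[R] L)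
    (hext : ∀ h : N →ₗ[R] B, ∃ β : L →ₗ[R] B, β ∘ₗ f = h) : Function.Bijective f := by
  have htfB := hB.embeds.isTorsionFree
  have hBfin := hB.1
  have := hN.2.1
  have := hL.2.1
  obtain ⟨x, hx⟩ : ∃ x, f x ≠ 0 := by
    by_contra! h
    obtain rfl : f = 0 := LinearMap.ext h
    obtain ⟨hH, -⟩ := embeds_hom hN hB.embeds
    obtain ⟨h, hh⟩ := exists_ne (0 : N →ₗ[R] B)
    obtain ⟨β, hβ⟩ := hext h
    exact hh (by rw [← hβ, LinearMap.comp_zero])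
  let F : (L →ₗ[R] B) ≃ₗ[R] (N →ₗ[R] B) := LinearEquiv.ofBijective (LinearMap.lcomp R B f) <| by
    refine ⟨?_, hext⟩
    rw [injective_iff_map_eq_zero]
    intro β hβ
    exact hL.embeds.eq_zero_of_apply_eq_zero β hx (LinearMap.congr_fun hβ x)
  have hF : ∀ h y, F.symm h (f y) = h y := fun h y => LinearMap.congr_fun (F.apply_symm_apply h) y
  have := hB.embeds.1
  obtain ⟨b, hb⟩ := exists_ne (0 : B)
  have hdual : Function.Bijective (f.dualMap) := by
    constructor
    · rw [injective_iff_map_eq_zero]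
      intro β hβ
      exact hL.embeds.eq_zero_of_apply_eq_zero β hx (LinearMap.congr_fun hβ x)
    · intro a
      have h1 : ∀ c : L, ∃ t : R, ∀ y : B, F.symm (a.smulRight y) c = t • y := fun c =>
        exists_eq_smul hB.embeds
          (LinearMap.applyₗ c ∘ₗ F.symm.toLinearMap ∘ₗ LinearMap.smulRightₗ a)
      choose a' ha' using h1
      refine ⟨{ toFun := a', map_add' := fun c d => ?_, map_smul' := fun r c => ?_ }, ?_⟩
      · apply smul_left_injective R hb
        simp only [add_smul, ← ha', map_add]
      · apply smul_left_injective R hb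
        simp only [smul_eq_mul, mul_smul, ← ha', map_smul, RingHom.id_apply]
      · ext y
        apply smul_left_injective R hb
        change a' (f y) • b = a y • b
        rw [← ha', hF, LinearMap.smulRight_apply]
  have hdd : Function.Bijective f.dualMap.dualMap :=
    (LinearEquiv.ofBijective f.dualMap hdual).dualMap.bijective
  have hcomp : (Module.Dual.eval R L : L → _) ∘ f = f.dualMap.dualMap ∘ Module.Dual.eval R N := by
    ext; rfl
  have h3 : Function.Bijective ((Module.Dual.eval R L : L → _) ∘ f) := by
    rw [hcomp]
    exact hdd.comp (Module.bijective_dual_eval R N)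
  exact (Function.Bijective.of_comp_iff' (Module.bijective_dual_eval R L) f).mp h3

/-- If `Hom(N, M)` is a finite projective module over `End M`, where `M = ⨁ M i`, then `N` is one of
the `M i`. A finite dual basis writes every `h : N → M 0` as a sum of composites
`N → M i → M 0`, functorially in `h`; for each summand this operation is an endomorphism of the
divisorial module `Hom(N, M 0)`, that is, a scalar. These scalars sum to `1`, so one is a unit
because `R` is local, and the corresponding `N → M i` has the extension property of
`bijective_of_extends` with `B = M 0`. -/
theorem exists_equiv_of_projective_hom [IsIntegrallyClosed R] [IsLocalRing R] [IsNoetherianRing R]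
    (hN : IsDivisorialModule R N) {n : ℕ} (M : Fin (n + 1) → Type u) [∀ i, AddCommGroup (M i)]
    [∀ i, Module R (M i)] (hM : ∀ i, IsDivisorialModule R (M i))
    [Module.Finite (Module.End R (∀ i, M i)) (N →ₗ[R] ∀ i, M i)]
    [Module.Projective (Module.End R (∀ i, M i)) (N →ₗ[R] ∀ i, M i)] :
    ∃ i, Nonempty (N ≃ₗ[R] M i) := by
  obtain ⟨m, p, g, -, -, hpg⟩ := Module.Finite.exists_comp_eq_id_of_projective
    (Module.End R (∀ i, M i)) (N →ₗ[R] ∀ i, M i)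
  have hH := hN.hom (hM 0)
  have hHe := hH.embeds
  have := hHe.isTorsionFree
  have := hH.1
  let f : Fin m → (N →ₗ[R] ∀ i, M i) := fun k => p (Pi.single k 1)
  -- The dual basis expansion: scalars of `End M` act on `Hom(N, M)` by composition.
  have hexp : ∀ h, h = ∑ k, g h k ∘ₗ f k := by
    intro h
    conv_lhs => rw [← LinearMap.id_apply (R := Module.End R (∀ i, M i)) h, ← hpg,
      LinearMap.comp_apply, pi_eq_sum_univ' (g h), map_sum]
    refine Finset.sum_congr rfl fun k _ => ?_
    rw [map_smul]
    rfl
  let α : Fin m → (i : Fin (n + 1)) → (N →ₗ[R] M 0) →ₗ[R] (M i →ₗ[R] M 0) := fun k i =>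
    { toFun := fun h => LinearMap.proj 0 ∘ₗ (g (LinearMap.single R M 0 ∘ₗ h) k) ∘ₗ
        LinearMap.single R M i
      map_add' := fun h h' => by
        rw [LinearMap.comp_add, map_add]
        rfl
      map_smul' := fun r h => by
        have : LinearMap.single R M 0 ∘ₗ (r • h) =
            (algebraMap R (Module.End R (∀ i, M i)) r) • (LinearMap.single R M 0 ∘ₗ h) := by
          ext x j
          exact congrFun (map_smul (LinearMap.single R M 0) r (h x)) j
        rw [this, map_smul]
        ext; simp }
  have hT : ∀ k i, ∃ t : R, ∀ h : N →ₗ[R] M 0, α k i h ∘ₗ LinearMap.proj i ∘ₗ f k = t • h :=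
    fun k i => exists_eq_smul hHe (LinearMap.lcomp R (M 0) (LinearMap.proj i ∘ₗ f k) ∘ₗ α k i)
  choose t ht using hT
  have hsum : ∑ k, ∑ i, t k i = 1 := by
    have := hHe.1
    obtain ⟨h, hh⟩ := exists_ne (0 : N →ₗ[R] M 0)
    apply smul_left_injective R hh
    simp only [Finset.sum_smul, ← ht, one_smul]
    ext x
    have h1 := congrFun (LinearMap.congr_fun (hexp (LinearMap.single R M 0 ∘ₗ h)) x) 0
    simp only [LinearMap.comp_apply, LinearMap.single_apply, Pi.single_eq_same] at h1
    rw [h1]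
    simp only [LinearMap.sum_apply, Finset.sum_apply, LinearMap.comp_apply, α, LinearMap.coe_mk,
      AddHom.coe_mk, LinearMap.proj_apply]
    refine Finset.sum_congr rfl fun k _ => ?_
    have h2 : f k x = ∑ i, LinearMap.single R M i (f k x i) := by
      simpa using (Finset.univ_sum_single (f k x)).symm
    conv_rhs => rw [h2, map_sum, Finset.sum_apply]
  obtain ⟨k, i, hki⟩ : ∃ k i, IsUnit (t k i) := by
    by_contra! h
    have : (1 : R) ∈ IsLocalRing.maximalIdeal R := by
      rw [← hsum]
      exact Ideal.sum_mem _ fun k _ => Ideal.sum_mem _ fun i _ =>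
        (IsLocalRing.mem_maximalIdeal _).mpr (h k i)
    exact (IsLocalRing.mem_maximalIdeal _).mp this isUnit_one
  obtain ⟨u, hu⟩ := hki
  refine ⟨i, ⟨LinearEquiv.ofBijective _ (bijective_of_extends hN (hM i) (hM 0)
    (LinearMap.proj i ∘ₗ f k) fun h => ⟨α k i ((↑u⁻¹ : R) • h), ?_⟩)⟩⟩
  rw [ht, ← hu, smul_smul, Units.mul_inv, one_smul]

end Divisorial

/-- Let `R` be a complete Noetherian local Cohen-Macaulay normal domain
such that every rank-one reflexive `R`-module whose torsion class in `Cl(R)` is torsion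
is maximal Cohen-Macaulay, and assume the divisor class group `Cl(R)` is finite. If
`M = ⊕_{i=0}^n M i` is a basic `R`-module giving a splitting NCCR of `R`, then every
rank-one reflexive `R`-module is isomorphic to some `M i`; in particular
`Cl(R) = { [M 0], …, [M n] }`. -/
theorem divisorial_iso_summand_of_finite_classGroup
    (R : Type u) [CommRing R] [IsNoetherianRing R] [IsDomain R] [IsIntegrallyClosed R]
    [IsLocalRing R] [IsAdicComplete (IsLocalRing.maximalIdeal R) R]
    (hCM : IsMCM R R)
    (Cl : Type u) [AddCommGroup Cl] (hCl : DivisorClassGroupData R Cl)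
    (htors : ∀ N : ModuleCat.{u} R, IsDivisorialModule R ↥N →
      IsOfFinAddOrder (hCl.cl N) → IsMCM R ↥N)
    (hfin : Finite Cl)
    (n : ℕ) (M : Fin (n + 1) → Type u) [∀ i, AddCommGroup (M i)] [∀ i, Module R (M i)]
    (hsplit : ∀ i, IsDivisorialModule R (M i))
    (hind : ∀ i, IsIndecomposableModule R (M i))
    (hbasic : ∀ i j, i ≠ j → ¬ Nonempty (M i ≃ₗ[R] M j))
    (hNCCR : GivesNCCR R (∀ i, M i)) :
    (∀ N : ModuleCat.{u} R, IsDivisorialModule R ↥N → ∃ i, Nonempty (↥N ≃ₗ[R] M i)) ∧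
      ∀ c : Cl, ∃ i, c = hCl.cl (ModuleCat.of R (M i)) := by
  have main : ∀ N : ModuleCat.{u} R, IsDivisorialModule R ↥N →
      ∃ i, Nonempty (↥N ≃ₗ[R] M i) := by
    intro N hN
    obtain ⟨d, hd⟩ : ∃ d : ℕ, ringKrullDim R = d := by
      have hlt : (IsLocalRing.maximalIdeal R).height ≠ ⊤ :=
        Ideal.height_ne_top (IsLocalRing.maximalIdeal.isMaximal R).ne_top
      refine ⟨(IsLocalRing.maximalIdeal R).height.toNat, ?_⟩
      rw [← IsLocalRing.maximalIdeal_height_eq_ringKrullDim]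
      exact congrArg _ (ENat.natCast_toNat hlt).symm
    have hmcm : ∀ i, IsMCM R (N →ₗ[R] M i) := fun i =>
      htors (ModuleCat.of R (N →ₗ[R] M i)) (hN.hom (hsplit i)) (isOfFinAddOrder_of_finite _)
    have := hN.1
    have := hNCCR.1
    have hXfin : Module.Finite R (N →ₗ[R] ∀ i, M i) := inferInstance
    have : Nontrivial (N →ₗ[R] ∀ i, M i) := by
      have := (hN.hom (hsplit 0)).embeds.1
      obtain ⟨h, hh⟩ := exists_ne (0 : N →ₗ[R] M 0)
      refine ⟨LinearMap.single R M 0 ∘ₗ h, 0, fun h0 => hh ?_⟩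
      ext x
      simpa using congrFun (LinearMap.congr_fun h0 x) 0
    obtain ⟨rs, hlen, hrs, hreg⟩ := exists_isRegular_hom_pi hd M hmcm
    have : IsScalarTower R (Module.End R (∀ i, M i)) (N →ₗ[R] ∀ i, M i) :=
      ⟨fun r a x => rfl⟩
    have := projective_of_isNonsingularOrder hNCCR.2.2.2 hd (N →ₗ[R] ∀ i, M i) rs hrs hlen
      hreg.toIsWeaklyRegular
    have : Module.Finite (Module.End R (∀ i, M i)) (N →ₗ[R] ∀ i, M i) :=
      Module.Finite.of_restrictScalars_finite R _ _
    exact exists_equiv_of_projective_hom hN M hsplit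
  refine ⟨main, fun c => ?_⟩
  obtain ⟨N, hN, rfl⟩ := hCl.cl_surjective c
  obtain ⟨i, hi⟩ := main N hN
  exact ⟨i, (hCl.cl_eq_iff N _ hN (hsplit i)).mpr hi⟩
end

section
/- Let R be a complete Noetherian local normal domain and let M = ⊕_{i=0}^n M_i be a basic splitting R-module (each M_i a rank-one reflexive module) such that the index set {0, …, n} is partitioned into I = { i : Hom_R(M_i, M) ≅ M } and I^* = { i : Hom_R(M_i, M) ≅ M^* }. If i ∈ I, j ∈ I^*, and k ∈ {0, …, n} satisfy Hom_R(M_i, M_j) ≅ M_k, then k ∈ I^*, i.e. Hom_R(M_k, M) ≅ M^*. -/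
/-!
In the divisor class group, let `d l` be the class of `M l` and `S = {d l}`. The hypotheses say
`S - d i = S` and `S - d j = -S`, whence `S - (d j - d i) = -S + d i = -(S - d i) = -S`.

Running this computation on modules avoids any appeal to uniqueness of decompositions. For
rank-one reflexive `A, B, C` one has `Hom(Hom(A, B), C) ≅ (A ⊗ Hom(B, C))^{**}`, that is,
`Hom(Hom(A, B), C) ≅ Hom(A, Hom(B, C)^*)^*`, which is `nonempty_hom_hom_equiv`. Summing over the
`C = M l` with `A = M i`, `B = M j` gives
`Hom(M k, M) ≅ Hom(M i, Hom(M j, M)^*)^* ≅ Hom(M i, M^{**})^* ≅ Hom(M i, M)^* ≅ M^*`.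

To prove the isomorphism for `A, B, C`, embed them in the fraction field `K`, where `Hom(A, B)`
becomes the colon module `B / A = {x | x A ⊆ B}`. It then reads
`C / (B / A) = 1 / ((1 / (C / B)) / A)` (`div_div_eq`), which follows from `1 / (1 / C) = C` and
from `1 / (A (1 / A)) = 1`; the latter is where integral closedness of `R` enters.
-/

/- ## Preliminary definitions -/

open Module TensorProduct CategoryTheory

universe u

/-! ### Colon modules in the fraction field -/

section FractionalIdeals

set_option linter.unusedSectionVars false

variable {R : Type u} [CommRing R] [IsDomain R] {K : Type u} [Field K] [Algebra R K]
  [IsFractionRing R K]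

/-- An `R`-linear map between submodules of `K` is `K`-homogeneous, by clearing denominators. -/
lemma apply_mul_comm_of_submodule {A B : Submodule R K} (f : A →ₗ[R] B) (a b : A) :
    (f a : K) * b = f b * a := by
  by_cases hb : (b : K) = 0
  · have : b = 0 := Subtype.ext hb
    simp [this]
  obtain ⟨p, q, hq, hpq⟩ := IsFractionRing.div_surjective (A := R) ((a : K) / b)
  have hq0 : algebraMap R K q ≠ 0 := by
    simpa using nonZeroDivisors.ne_zero hq
  have h1 : algebraMap R K q * a = algebraMap R K p * b := by
    field_simp at hpq
    linear_combination -hpq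
  have h2 : q • a = p • b := Subtype.ext (by simpa [Algebra.smul_def] using h1)
  have h3 : algebraMap R K q * f a = algebraMap R K p * f b := by
    have := congrArg (fun z : B => (z : K)) (congrArg f h2)
    simpa [Algebra.smul_def] using this
  apply mul_left_cancel₀ hq0
  linear_combination (b : K) * h3 - (f b : K) * h1

/-- Every homomorphism between nonzero `R`-submodules of the fraction field is multiplication by
an element of `K`, so that `Hom_R(A, B)` is the colon module `B : A`. -/
lemma exists_hom_equiv_div (A B : Submodule R K) (hA : A ≠ ⊥) :
    ∃ e : (A →ₗ[R] B) ≃ₗ[R] (B / A : Submodule R K), ∀ f a, (e f : K) * a = f a := by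
  obtain ⟨a, ha, ha0⟩ := Submodule.exists_mem_ne_zero_of_ne_bot hA
  let φ : (B / A : Submodule R K) →ₗ[R] (A →ₗ[R] B) :=
    LinearMap.mk₂ R (fun x y => ⟨(x : K) * y, x.2 y y.2⟩)
      (fun x y z => Subtype.ext (by simp [add_mul]))
      (fun c x y => Subtype.ext (by simp))
      (fun x y z => Subtype.ext (by simp [mul_add]))
      (fun c x y => Subtype.ext (by simp))
  have hφ (x : (B / A : Submodule R K)) (y : A) : (φ x y : K) = x * y := rfl
  have hbij : Function.Bijective φ := by
    refine ⟨fun x y hxy => ?_, fun f => ?_⟩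
    · have h : (φ x ⟨a, ha⟩ : K) = φ y ⟨a, ha⟩ := by rw [hxy]
      rw [hφ, hφ] at h
      exact Subtype.ext (mul_right_cancel₀ ha0 h)
    · have key (b : A) : (f ⟨a, ha⟩ : K) / a * b = f b := by
        rw [div_mul_eq_mul_div, apply_mul_comm_of_submodule f ⟨a, ha⟩ b]
        field_simp
      refine ⟨⟨(f ⟨a, ha⟩ : K) / a, fun b hb => ?_⟩, ?_⟩
      · rw [key ⟨b, hb⟩]
        exact (f ⟨b, hb⟩).2
      · ext b
        exact key b
  refine ⟨(LinearEquiv.ofBijective φ hbij).symm, fun f b => ?_⟩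
  have h := (LinearEquiv.ofBijective φ hbij).apply_symm_apply f
  rw [← hφ]
  exact congrArg (fun g : A →ₗ[R] B => (g b : K)) h

lemma exists_equiv_one : ∃ e : R ≃ₗ[R] (1 : Submodule R K), ∀ r, (e r : K) = algebraMap R K r := by
  rw [Submodule.one_eq_range]
  exact ⟨LinearEquiv.ofInjective _ (IsFractionRing.injective R K), fun r => rfl⟩

lemma exists_dual_equiv_div (A : Submodule R K) (hA : A ≠ ⊥) :
    ∃ e : Dual R A ≃ₗ[R] (1 / A : Submodule R K),
      ∀ f a, (e f : K) * a = algebraMap R K (f a) := by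
  obtain ⟨e, he⟩ := exists_equiv_one (R := R) (K := K)
  obtain ⟨d, hd⟩ := exists_hom_equiv_div A 1 hA
  exact ⟨(LinearEquiv.congrRight e).trans d, fun f a => (hd _ a).trans (he _)⟩

lemma div_ne_bot {A B : Submodule R K} (hA : A.FG) (hB : B ≠ ⊥) : B / A ≠ ⊥ := by
  obtain ⟨b, hb, hb0⟩ := Submodule.exists_mem_ne_zero_of_ne_bot hB
  obtain ⟨r, hr, hrA⟩ := FractionalIdeal.isFractional_of_fg (S := nonZeroDivisors R) hA
  have hr0 : algebraMap R K r ≠ 0 := by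
    simpa using nonZeroDivisors.ne_zero hr
  refine (Submodule.ne_bot_iff _).2 ⟨algebraMap R K r * b, fun y hy => ?_, mul_ne_zero hr0 hb0⟩
  obtain ⟨s, hs⟩ := hrA y hy
  have : algebraMap R K r * b * y = s • b := by
    rw [Algebra.smul_def, hs, Algebra.smul_def]; ring
  rw [this]
  exact B.smul_mem s hb

lemma div_fg [IsNoetherianRing R] {A B : Submodule R K} (hA : A ≠ ⊥) (hB : B.FG) :
    (B / A).FG := by
  obtain ⟨a, ha, ha0⟩ := Submodule.exists_mem_ne_zero_of_ne_bot hA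
  have : IsNoetherian R B := isNoetherian_of_fg_of_noetherian B hB
  have h : IsNoetherian R (B / A : Submodule R K) := by
    let φ : (B / A : Submodule R K) →ₗ[R] B :=
      { toFun := fun x => ⟨(x : K) * a, x.2 a ha⟩
        map_add' := fun x y => Subtype.ext (by simp [add_mul])
        map_smul' := fun c x => Subtype.ext (by simp) }
    refine isNoetherian_of_injective φ fun x y hxy => ?_
    have : (x : K) * a = y * a := congrArg Subtype.val hxy
    exact Subtype.ext (mul_right_cancel₀ ha0 this)
  exact Module.Finite.iff_fg.1 inferInstance

/-- `R : (A A⁻¹) = R` over a Noetherian normal domain: if `x A A⁻¹ ⊆ R` then multiplication by `x`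
preserves the finitely generated module `A⁻¹`, so `x` is integral over `R`. -/
lemma mem_one_of_forall_mul_mem [IsNoetherianRing R] [IsIntegrallyClosed R] {A : Submodule R K}
    (hA : A ≠ ⊥) (hA' : A.FG) {x : K}
    (h : ∀ u ∈ (1 / A : Submodule R K), ∀ a ∈ A, x * u * a ∈ (1 : Submodule R K)) :
    x ∈ (1 : Submodule R K) := by
  have hint : IsIntegral R x := by
    refine isIntegral_of_smul_mem_submodule (1 / A : Submodule R K)
      (div_ne_bot hA' ?_) (div_fg hA ?_) x fun u hu a ha => h u hu a ha
    · exact one_ne_zero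
    · exact Submodule.one_eq_span (R := R) (A := K) ▸ Submodule.fg_span_singleton 1
  obtain ⟨r, hr⟩ := IsIntegrallyClosed.isIntegral_iff.1 hint
  exact Submodule.mem_one.2 ⟨r, hr⟩

/-- A finitely generated submodule of `K` that is reflexive as a module is divisorial. -/
lemma one_div_one_div_le [IsNoetherianRing R] {C : Submodule R K} (hC : C ≠ ⊥) (hC' : C.FG)
    [IsReflexive R C] : 1 / (1 / C) ≤ C := by
  intro x hx
  obtain ⟨u, hu, hu0⟩ := Submodule.exists_mem_ne_zero_of_ne_bot
    (div_ne_bot (B := (1 : Submodule R K)) hC' one_ne_zero)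
  obtain ⟨e, he⟩ := exists_equiv_one (R := R) (K := K)
  obtain ⟨d, hd⟩ := exists_dual_equiv_div C hC
  -- Multiplication by `x` is a functional on `C^* = R : C`, so it is evaluation at some `c ∈ C`.
  let μ : (1 / C : Submodule R K) →ₗ[R] (1 : Submodule R K) :=
    { toFun := fun y => ⟨x * y, hx y y.2⟩
      map_add' := fun y z => Subtype.ext (by simp [mul_add])
      map_smul' := fun r y => Subtype.ext (by simp) }
  obtain ⟨c, hc⟩ := (bijective_dual_eval R C).2 (e.symm.toLinearMap ∘ₗ μ ∘ₗ d.toLinearMap)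
  have h1 : d.symm ⟨u, hu⟩ c = e.symm (μ ⟨u, hu⟩) := by
    simpa using LinearMap.congr_fun hc (d.symm ⟨u, hu⟩)
  have h2 : u * c = x * u := by
    have := hd (d.symm ⟨u, hu⟩) c
    rw [h1, ← he, LinearEquiv.apply_symm_apply, LinearEquiv.apply_symm_apply] at this
    exact this
  have h3 : x = c := mul_right_cancel₀ hu0 (by rw [← h2, mul_comm])
  exact h3 ▸ c.2

/-- The identity `C : (B : A) = R : ((R : (C : B)) : A)` of colon modules, for `C` divisorial. -/
lemma div_div_eq [IsNoetherianRing R] [IsIntegrallyClosed R] {A B C : Submodule R K}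
    (hA : A ≠ ⊥) (hA' : A.FG) (hB : B ≠ ⊥) (hB' : B.FG)
    (hC : 1 / (1 / C) ≤ C) : C / (B / A) = 1 / ((1 / (C / B)) / A) := by
  apply le_antisymm
  · intro x hx y hy
    -- `x y (B B⁻¹) (A A⁻¹) ⊆ R`, and both factors in parentheses have trivial colon into `R`.
    refine mem_one_of_forall_mul_mem hA hA' fun u hu a ha => ?_
    refine mem_one_of_forall_mul_mem hB hB' fun v hv b hb => ?_
    have h1 : u * b ∈ B / A := fun a' ha' => by
      obtain ⟨r, hr⟩ := Submodule.mem_one.1 (hu a' ha')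
      have : u * b * a' = r • b := by rw [Algebra.smul_def, hr]; ring
      rw [this]; exact B.smul_mem r hb
    have h2 : x * (u * b) * v ∈ C / B := fun b' hb' => by
      obtain ⟨r, hr⟩ := Submodule.mem_one.1 (hv b' hb')
      have : x * (u * b) * v * b' = r • (x * (u * b)) := by rw [Algebra.smul_def, hr]; ring
      rw [this]; exact C.smul_mem r (hx _ h1)
    have h3 := hy a ha _ h2
    have : x * y * u * a * v * b = y * a * (x * (u * b) * v) := by ring
    rw [this]; exact h3
  · intro x hx z hz
    -- `C / (B / A)` is divisorial since `C` is, and it contains `A (C / B)`.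
    refine hC fun w hw => ?_
    have h1 : z * w ∈ (1 / (C / B)) / A := fun a ha c hc => by
      have := hw _ (hc _ (hz a ha))
      have e : z * w * a * c = w * (c * (z * a)) := by ring
      rw [e]; exact this
    have := hx _ h1
    rwa [← mul_assoc] at this

end FractionalIdeals

/-! ### Rank-one reflexive modules -/

section Modules

variable {R : Type u} [CommRing R] [IsDomain R]

/-- A rank-one reflexive module `M` is torsion-free, hence embeds in `K ⊗ M ≅ K`. -/
lemma IsDivisorialModule.exists_equiv {M : Type u} [AddCommGroup M] [Module R M]
    (h : IsDivisorialModule R M) :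
    ∃ A : Submodule R (FractionRing R), A ≠ ⊥ ∧ A.FG ∧ Nonempty (M ≃ₗ[R] A) := by
  obtain ⟨hfin, hrefl, hrank⟩ := h
  obtain ⟨e⟩ := nonempty_linearEquiv_of_finrank_eq_one hrank
  let ψ : M →ₗ[R] FractionRing R :=
    (e.symm.toLinearMap.restrictScalars R) ∘ₗ (TensorProduct.mk R (FractionRing R) M 1)
  have hψ : Function.Injective ψ := by
    refine (injective_iff_map_eq_zero ψ).2 fun m hm => ?_
    -- If `1 ⊗ m = 0`, then every functional on `M` kills `m`, so `m = 0` by reflexivity.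
    have h1 : (1 : FractionRing R) ⊗ₜ[R] m = 0 := e.symm.injective (by simpa [ψ] using hm)
    refine (bijective_dual_eval R M).1 (LinearMap.ext fun f => ?_)
    have h2 := congrArg (LinearMap.lTensor (FractionRing R) f) h1
    have h3 := congrArg (TensorProduct.rid R (FractionRing R)) h2
    simpa using h3
  have E := LinearEquiv.ofInjective ψ hψ
  refine ⟨LinearMap.range ψ, fun hbot => ?_, ?_, ⟨E⟩⟩
  · have hs : Subsingleton M := by
      have : Subsingleton (LinearMap.range ψ) := by rw [hbot]; infer_instance
      exact E.toEquiv.subsingleton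
    have : Subsingleton (FractionRing R ⊗[R] M) := inferInstance
    have h0 : Module.finrank (FractionRing R) (FractionRing R ⊗[R] M) = 0 :=
      Module.finrank_zero_of_subsingleton
    rw [HasRankOne, h0] at hrank
    exact zero_ne_one hrank
  · exact Module.Finite.iff_fg.1 inferInstance

/-- For rank-one reflexive modules, `Hom(Hom(A, B), C)` is the reflexive hull of
`A ⊗ Hom(B, C)`; the latter is written as `Hom(A, Hom(B, C)^*)^*` by tensor-hom adjunction. -/
lemma nonempty_hom_hom_equiv [IsNoetherianRing R] [IsIntegrallyClosed R]
    {A B C : Type u} [AddCommGroup A] [Module R A] [AddCommGroup B] [Module R B]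
    [AddCommGroup C] [Module R C] (hA : IsDivisorialModule R A) (hB : IsDivisorialModule R B)
    (hC : IsDivisorialModule R C) :
    Nonempty (((A →ₗ[R] B) →ₗ[R] C) ≃ₗ[R] Dual R (A →ₗ[R] Dual R (B →ₗ[R] C))) := by
  obtain ⟨A', hA0, hAf, ⟨a⟩⟩ := hA.exists_equiv
  obtain ⟨B', hB0, hBf, ⟨b⟩⟩ := hB.exists_equiv
  obtain ⟨C', hC0, hCf, ⟨c⟩⟩ := hC.exists_equiv
  have : IsReflexive R C := hC.2.1
  have : IsReflexive R C' := IsReflexive.of_split c.symm.toLinearMap c.toLinearMap (by ext; simp)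
  have hdd : 1 / (1 / C') ≤ C' := one_div_one_div_le hC0 hCf
  have hone : (1 : Submodule R (FractionRing R)) ≠ ⊥ := one_ne_zero
  have hBA : B' / A' ≠ ⊥ := div_ne_bot hAf hB0
  have hCB : C' / B' ≠ ⊥ := div_ne_bot hBf hC0
  have hX : 1 / (C' / B') / A' ≠ ⊥ :=
    div_ne_bot hAf (div_ne_bot (div_fg hB0 hCf) hone)
  obtain ⟨e1, -⟩ := exists_hom_equiv_div A' B' hA0
  obtain ⟨e2, -⟩ := exists_hom_equiv_div (B' / A') C' hBA
  obtain ⟨e3, -⟩ := exists_hom_equiv_div B' C' hB0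
  obtain ⟨e4, -⟩ := exists_dual_equiv_div (C' / B') hCB
  obtain ⟨e5, -⟩ := exists_hom_equiv_div A' (1 / (C' / B')) hA0
  obtain ⟨e6, -⟩ := exists_dual_equiv_div (1 / (C' / B') / A') hX
  let l1 : (A →ₗ[R] B) ≃ₗ[R] (B' / A' : Submodule R _) := (a.arrowCongr b).trans e1
  let l2 : (B →ₗ[R] C) ≃ₗ[R] (C' / B' : Submodule R _) := (b.arrowCongr c).trans e3
  let l3 : Dual R (B →ₗ[R] C) ≃ₗ[R] (1 / (C' / B') : Submodule R _) := l2.symm.dualMap.trans e4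
  let l4 : (A →ₗ[R] Dual R (B →ₗ[R] C)) ≃ₗ[R] (1 / (C' / B') / A' : Submodule R _) :=
    (a.arrowCongr l3).trans e5
  exact ⟨(l1.arrowCongr c).trans <| e2.trans <|
    (LinearEquiv.ofEq _ _ (div_div_eq hA0 hAf hB0 hBf hdd)).trans <|
    e6.symm.trans l4.dualMap⟩

/-- The dual of a finite product is the product of the duals. -/
def dualPiEquiv {m : ℕ} (N : Fin m → Type u) [∀ l, AddCommGroup (N l)] [∀ l, Module R (N l)] :
    (∀ l, Dual R (N l)) ≃ₗ[R] Dual R (∀ l, N l) :=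
  LinearMap.lsum R N R

end Modules

/-- Let `R` be a complete Noetherian local normal domain and let
`M = ⊕_{i=0}^n M i` be a basic splitting `R`-module (each `M i` a rank-one reflexive
module) such that the index set is partitioned into `I = { i | Hom_R(M i, M) ≅ M }` and
`I^* = { i | Hom_R(M i, M) ≅ M^* }`. If `i ∈ I`, `j ∈ I^*`, and `k` satisfies
`Hom_R(M i, M j) ≅ M k`, then `k ∈ I^*`, i.e. `Hom_R(M k, M) ≅ M^*`. -/
theorem hom_class_in_I_star
    (R : Type u) [CommRing R] [IsNoetherianRing R] [IsDomain R] [IsIntegrallyClosed R]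
    [IsLocalRing R] [IsAdicComplete (IsLocalRing.maximalIdeal R) R]
    (n : ℕ) (M : Fin (n + 1) → Type u) [∀ i, AddCommGroup (M i)] [∀ i, Module R (M i)]
    (hsplit : ∀ i, IsDivisorialModule R (M i))
    (hind : ∀ i, IsIndecomposableModule R (M i))
    (hbasic : ∀ i j, i ≠ j → ¬ Nonempty (M i ≃ₗ[R] M j))
    (hcover : ∀ i, Nonempty ((M i →ₗ[R] ∀ l, M l) ≃ₗ[R] (∀ l, M l)) ∨
      Nonempty ((M i →ₗ[R] ∀ l, M l) ≃ₗ[R] Module.Dual R (∀ l, M l)))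
    (hdisj : ∀ i, ¬ (Nonempty ((M i →ₗ[R] ∀ l, M l) ≃ₗ[R] (∀ l, M l)) ∧
      Nonempty ((M i →ₗ[R] ∀ l, M l) ≃ₗ[R] Module.Dual R (∀ l, M l))))
    (i j k : Fin (n + 1))
    (hi : Nonempty ((M i →ₗ[R] ∀ l, M l) ≃ₗ[R] (∀ l, M l)))
    (hj : Nonempty ((M j →ₗ[R] ∀ l, M l) ≃ₗ[R] Module.Dual R (∀ l, M l)))
    (hk : Nonempty ((M i →ₗ[R] M j) ≃ₗ[R] M k)) :
    Nonempty ((M k →ₗ[R] ∀ l, M l) ≃ₗ[R] Module.Dual R (∀ l, M l)) := by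
  obtain ⟨ei⟩ := hi
  obtain ⟨ej⟩ := hj
  obtain ⟨ek⟩ := hk
  have hloc (l) := nonempty_hom_hom_equiv (hsplit i) (hsplit j) (hsplit l)
  let e (l) := (hloc l).some
  have hrefl (l) : IsReflexive R (M l) := (hsplit l).2.1
  -- `M` itself is reflexive, being a finite product of reflexive modules.
  let dd : Dual R (Dual R (∀ l, M l)) ≃ₗ[R] (∀ l, M l) :=
    (dualPiEquiv M).dualMap.trans <| (dualPiEquiv fun l => Dual R (M l)).symm.trans <|
      LinearEquiv.piCongrRight fun l => (Module.evalEquiv R (M l)).symm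
  -- `Hom(M j, M) ≅ M^*` dualizes to `∏ Hom(M j, M l)^* ≅ M`.
  let s : (∀ l, Dual R (M j →ₗ[R] M l)) ≃ₗ[R] (∀ l, M l) :=
    (dualPiEquiv fun l => (M j →ₗ[R] M l)).trans <|
      (LinearEquiv.linearMapPi (R := R) R).symm.dualMap.trans <| ej.symm.dualMap.trans dd
  let t : (∀ l, M i →ₗ[R] Dual R (M j →ₗ[R] M l)) ≃ₗ[R] (∀ l, M l) :=
    (LinearEquiv.linearMapPi (R := R) R).trans <| (LinearEquiv.congrRight s).trans ei
  exact ⟨(ek.symm.arrowCongr (LinearEquiv.refl R _)).trans <|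
    (LinearEquiv.linearMapPi (R := R) R).symm.trans <|
    (LinearEquiv.piCongrRight e).trans <| (dualPiEquiv fun l => (M i →ₗ[R] Dual R (M j →ₗ[R] M l))).trans t.symm.dualMap⟩
end

section
/- Let R be a 2-dimensional complete Noetherian local normal domain containing an algebraically closed field of characteristic zero. Then the following conditions are equivalent: (i) R has a steady NCCR; (ii) R has a semi-steady NCCR; (iii) R has an NCCR; (iv) R is of finite Cohen–Macaulay representation type, i.e. R has only finitely many isomorphism classes of indecomposable maximal Cohen–Macaulay R-modules. -/
/-! The two deep implications are Auslander's correspondence between finite Cohen–Macaulay type and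
endomorphism rings of global dimension two; the others are formal.

Over a two-dimensional normal local domain `R` with maximal ideal `m`, a finite module is maximal
Cohen–Macaulay exactly when it has depth at least two (`isMCM_iff`), and exactly when it is
reflexive (`DepthTwo.reflexive`, `depthTwo_of_reflexive`). Depth two is used in the elementary form
`Hom(R/m, M) = 0` and `Hom(R, M) → Hom(m, M)` surjective. Its main consequence is a Hartogs
principle, `DepthTwo.mem_range'`: what holds locally on the punctured spectrum holds globally.
There the local rings are discrete valuation rings or fields, and torsion-free modules are locally
free, expressed without localizing by `exists_dualBasis`.

Suppose `M` gives an NCCR and `X` has depth two. Presenting `X` by powers of `M` up to the closed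
point shows that `Hom(X, M)` is a second syzygy over `End M` (`projective_hom`), hence projective,
hence a summand of a power of `End M`. Dualizing back into `M` exhibits `X` as a summand of a power
of `M` (`retract_of_gldim`). By Krull–Schmidt over the complete ring `R`, the indecomposable
modules of depth two are among the finitely many indecomposable summands of `M`
(`finiteType_of_NCCR`).

Conversely, let `M` be the sum of the indecomposable modules of depth two, finitely many up to
isomorphism, so that every module of depth two is in `add M`. Second syzygies over `End M` have the
form `Hom(X, M)`, a retract of `Hom(X**, M)`, which is projective; so the global dimension of
`End M` is at most two (`gldim_end_le_two`), and a depth count excludes smaller values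
(`not_gldim_end_le_one`). On the punctured spectrum `End M` is locally a matrix ring over `Rₚ`
(`globalDim_localized`). Finally `R`, `End M` and the modules `Hom(Mᵢ, M)` have depth two and lie
in `add M`, which makes this NCCR steady and semi-steady (`steady_of_finiteType`). -/

/- ## Preliminary definitions -/

open Module TensorProduct CategoryTheory

universe u

section NCCRExistence

variable (R : Type u) [CommRing R]

/-- `R` has an NCCR. -/
def HasNCCR : Prop := ∃ M : ModuleCat.{u} R, GivesNCCR R ↥M

/-- `R` has a steady NCCR. -/
def HasSteadyNCCR : Prop := ∃ M : ModuleCat.{u} R, GivesNCCR R ↥M ∧ IsSteadyModule R ↥M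

/-- `R` has a semi-steady NCCR: a module with indecomposable decomposition
`⊕ i, M i` which is semi-steady and gives an NCCR. -/
def HasSemiSteadyNCCR : Prop :=
  ∃ (m : ℕ) (M : Fin m → ModuleCat.{u} R),
    (∀ i, Module.Finite R ↥(M i)) ∧ (∀ i, IsIndecomposableModule R ↥(M i)) ∧
    GivesNCCR R (∀ i, ↥(M i)) ∧ IsSemiSteadyFamily R (fun i => ↥(M i))

/-- `R` is of finite Cohen-Macaulay representation type: there are only finitely many
isomorphism classes of indecomposable maximal Cohen-Macaulay `R`-modules. -/
def HasFiniteCMType : Prop :=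
  ∃ (m : ℕ) (N : Fin m → ModuleCat.{u} R), ∀ L : ModuleCat.{u} R,
    Module.Finite R ↥L → IsIndecomposableModule R ↥L → IsMCM R ↥L →
      ∃ i, Nonempty (↥L ≃ₗ[R] ↥(N i))

end NCCRExistence

namespace NCCR

/-! ### The two Ext functors -/

section ExtBridge

variable {A : Type*} [Ring A] {C : Type (u+1)} [Category.{u} C] [Abelian C] [Linear A C]
  [EnoughProjectives C]

/-- The bifunctor `Ext`, defined by projective resolutions, vanishes in a positive degree exactly
when `Abelian.Ext`, for which the long exact sequences are available, does. -/
theorem ext_succ_iff [HasExt.{u} C] (X Y : C) (n : ℕ) :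
    Subsingleton ↥(((Ext A C (n + 1)).obj (Opposite.op X)).obj Y) ↔
      Subsingleton (Abelian.Ext X Y (n + 1)) := by
  let P := ProjectiveResolution.of X
  have h1 : Subsingleton ↥(((Ext A C (n + 1)).obj (Opposite.op X)).obj Y) ↔
      ∀ f : P.complex.X (n + 1) ⟶ Y, P.complex.d (n + 2) (n + 1) ≫ f = 0 →
        ∃ g : P.complex.X n ⟶ Y, P.complex.d (n + 1) n ≫ g = f := by
    rw [← ModuleCat.isZero_iff_subsingleton, (P.isoExt (n+1) Y).isZero_iff,
      ← HomologicalComplex.exactAt_iff_isZero_homology,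
      HomologicalComplex.exactAt_iff' _ n (n+1) (n+2) (by simp) (by simp),
      ShortComplex.moduleCat_exact_iff]
    rfl
  rw [h1]
  constructor
  · intro h
    refine subsingleton_of_forall_eq 0 fun α => ?_
    obtain ⟨f, hf, rfl⟩ := P.extMk_surjective α (n + 2) rfl
    rw [P.extMk_eq_zero_iff f _ _ _ n rfl]
    exact h f hf
  · intro h f hf
    rw [← P.extMk_eq_zero_iff f (n+2) rfl hf n rfl]
    exact Subsingleton.elim _ _

/-- In degree zero the bifunctor `Ext` vanishes exactly when there are no nonzero morphisms. -/
theorem ext_zero_iff (X Y : C) :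
    Subsingleton ↥(((Ext A C 0).obj (Opposite.op X)).obj Y) ↔ ∀ f : X ⟶ Y, f = 0 := by
  let P := ProjectiveResolution.of X
  have h1 : Subsingleton ↥(((Ext A C 0).obj (Opposite.op X)).obj Y) ↔
      ∀ f : P.complex.X 0 ⟶ Y, P.complex.d 1 0 ≫ f = 0 → f = 0 := by
    rw [← ModuleCat.isZero_iff_subsingleton, (P.isoExt 0 Y).isZero_iff,
      ← HomologicalComplex.exactAt_iff_isZero_homology,
      HomologicalComplex.exactAt_iff' _ 0 0 1 (by simp) (by simp),
      ShortComplex.moduleCat_exact_iff]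
    constructor
    · intro h f hf
      obtain ⟨g, hg⟩ := h f hf
      rw [← hg]
      change P.complex.d 0 0 ≫ g = 0
      rw [P.complex.shape _ _ (by simp)]
      exact Limits.zero_comp
    · intro h f hf
      exact ⟨0, by rw [map_zero]; exact (h f hf).symm⟩
  rw [h1]
  constructor
  · intro h f
    let f' : ((ChainComplex.single₀ C).obj X).X 0 ⟶ Y := f
    change f' = 0
    have := h (P.π.f 0 ≫ f') (by
      rw [← Category.assoc, P.complex_d_comp_π_f_zero]; exact Limits.zero_comp)
    refine (cancel_epi (P.π.f 0)).1 (this.trans Limits.comp_zero.symm)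
  · intro h f hf
    obtain ⟨g, hg⟩ := Limits.CokernelCofork.IsColimit.desc' P.isColimitCokernelCofork f hf
    rw [← hg, h g]
    exact Limits.comp_zero
end ExtBridge

/-! ### Global dimension -/

section GlDim

variable {Λ : Type u} [Ring Λ]

/-- The Ext-vanishing definition of global dimension, in terms of projective dimensions. -/
theorem gldim_iff (d : ℕ) :
    GlobalDimLE Λ d ↔ ∀ X : ModuleCat.{u} Λ, HasProjectiveDimensionLE X d := by
  constructor
  · intro h X
    exact hasProjectiveDimensionLT_of_enoughInjectives X (d + 1) fun Y =>
      (ext_succ_iff (A := ℤ) X Y d).1 (h X Y)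
  · intro h X Y
    have := h X
    exact (ext_succ_iff (A := ℤ) X Y d).2 (HasProjectiveDimensionLT.subsingleton X (d + 1) (d+1) le_rfl Y)

theorem gldim_mono {d e : ℕ} (hde : d ≤ e) (h : GlobalDimLE Λ d) : GlobalDimLE Λ e := by
  rw [gldim_iff] at h ⊢
  intro X
  have := h X
  exact hasProjectiveDimensionLT_of_ge X (d + 1) (e + 1) (by omega)

theorem globalDim_eq {d : ℕ} (h : GlobalDimLE Λ d) (h' : ∀ e, d = e + 1 → ¬ GlobalDimLE Λ e) :
    globalDim Λ = d := by
  refine le_antisymm (sInf_le ⟨d, rfl, h⟩) (le_sInf ?_)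
  rintro _ ⟨e, rfl, he⟩
  by_contra hlt
  have : e < d := by exact_mod_cast not_le.1 hlt
  obtain ⟨c, rfl⟩ : ∃ c, d = c + 1 := ⟨d - 1, by omega⟩
  exact h' c rfl (gldim_mono (by omega) he)

theorem gldimLE_of_eq {d : ℕ} (h : globalDim Λ = d) : GlobalDimLE Λ d := by
  have hne : {d : ℕ∞ | ∃ k : ℕ, d = (k : ℕ∞) ∧ GlobalDimLE Λ k}.Nonempty := by
    by_contra hn
    rw [Set.not_nonempty_iff_eq_empty] at hn
    unfold globalDim at h
    rw [hn, sInf_empty] at h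
    exact ENat.top_ne_natCast _ h
  obtain ⟨k, hk, hk'⟩ := csInf_mem hne
  have : (k : ℕ∞) = d := hk.symm.trans h
  rw [← (Nat.cast_injective this : k = d)]
  exact hk'

attribute [local instance] RingHomInvPair.of_ringEquiv in
theorem gldim_congr {Λ' : Type u} [Ring Λ'] (e : Λ ≃+* Λ') {d : ℕ} (h : GlobalDimLE Λ d) :
    GlobalDimLE Λ' d := by
  rw [gldim_iff] at h ⊢
  intro X
  let X' : ModuleCat.{u} Λ := (ModuleCat.restrictScalars e.toRingHom).obj X
  have := h X'
  let e' : X' ≃ₛₗ[RingHomClass.toRingHom e] X :=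
    { toFun := fun x => x
      invFun := fun x => x
      left_inv := fun _ => rfl
      right_inv := fun _ => rfl
      map_add' := fun _ _ => rfl
      map_smul' := fun _ _ => rfl }
  exact ModuleCat.hasProjectiveDimensionLE_of_semiLinearEquiv e e' d

theorem pd_zero_iff (X : Type u) [AddCommGroup X] [Module Λ X] :
    HasProjectiveDimensionLE (ModuleCat.of Λ X) 0 ↔ Module.Projective Λ X := by
  rw [← projective_iff_hasProjectiveDimensionLE_zero, ← IsProjective.iff_projective]

/-- Dimension shift: passing to a syzygy lowers the projective dimension by one. -/
theorem pd_succ_iff {P X : Type u} [AddCommGroup X] [Module Λ X] [AddCommGroup P] [Module Λ P]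
    [Module.Projective Λ P] (f : P →ₗ[Λ] X) (hf : Function.Surjective f) (n : ℕ) :
    HasProjectiveDimensionLE (ModuleCat.of Λ X) (n + 1) ↔
      HasProjectiveDimensionLE (ModuleCat.of Λ (LinearMap.ker f)) n := by
  have hS := LinearMap.shortExact_shortComplexKer hf
  have : Projective (ModuleCat.of Λ P) := (IsProjective.iff_projective P).1 inferInstance
  exact hS.hasProjectiveDimensionLT_X₃_iff n this

/-- In global dimension at most one, submodules of projectives are projective. -/
theorem projective_of_gldim_one (h : GlobalDimLE Λ 1) {P : Type u} [AddCommGroup P] [Module Λ P]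
    [Module.Projective Λ P] (K : Submodule Λ P) : Module.Projective Λ K := by
  rw [gldim_iff] at h
  have h1 := (pd_succ_iff K.mkQ K.mkQ_surjective 0).1 (h _)
  rw [pd_zero_iff] at h1
  rwa [Submodule.ker_mkQ] at h1

/-- In global dimension at most two, second syzygies are projective. -/
theorem projective_ker_of_gldim_two (h : GlobalDimLE Λ 2) {P Q : Type u} [AddCommGroup P]
    [Module Λ P] [AddCommGroup Q] [Module Λ Q]
    [Module.Projective Λ P] [Module.Projective Λ Q] (f : P →ₗ[Λ] Q) :
    Module.Projective Λ (LinearMap.ker f) := by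
  rw [gldim_iff] at h
  have h1 := (pd_succ_iff (LinearMap.range f).mkQ (Submodule.mkQ_surjective _) 1).1 (h _)
  rw [Submodule.ker_mkQ, pd_succ_iff f.rangeRestrict f.surjective_rangeRestrict 0, pd_zero_iff,
    LinearMap.ker_rangeRestrict] at h1
  exact h1

/-- `Ext¹(Λ/I, N) = 0` says that every linear map `I → N` extends to `Λ`. -/
theorem ext_one_iff (I : Submodule Λ Λ) (N : Type u) [AddCommGroup N] [Module Λ N] :
    Subsingleton (Abelian.Ext (ModuleCat.of Λ (Λ ⧸ I)) (ModuleCat.of Λ N) 1) ↔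
      ∀ g : I →ₗ[Λ] N, ∃ v : N, ∀ x : I, g x = (x : Λ) • v := by
  have hS := LinearMap.shortExact_shortComplexKer I.mkQ_surjective
  have hP : Projective (ModuleCat.of Λ Λ) := (IsProjective.iff_projective Λ).1 inferInstance
  have e : (LinearMap.ker I.mkQ) = I := Submodule.ker_mkQ I
  constructor
  · intro h g
    let g' : LinearMap.ker I.mkQ →ₗ[Λ] N := g ∘ₗ (LinearEquiv.ofEq _ _ e).toLinearMap
    obtain ⟨x₂, hx₂⟩ := Abelian.Ext.contravariant_sequence_exact₁ hS
      (Y := ModuleCat.of Λ N) (Abelian.Ext.mk₀ (ModuleCat.ofHom g')) (n₁ := 1) rfl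
      (@Subsingleton.elim _ h _ _)
    obtain ⟨k, rfl⟩ := (Abelian.Ext.mk₀_bijective _ _).2 x₂
    rw [Abelian.Ext.mk₀_comp_mk₀] at hx₂
    have h2 := (Abelian.Ext.mk₀_bijective _ _).1 hx₂
    refine ⟨k.hom (1 : Λ), fun x => ?_⟩
    have h3 := congrArg (fun t => t.hom (⟨(x : Λ), e.symm ▸ x.2⟩ : LinearMap.ker I.mkQ)) h2
    have h4 : k.hom (x : Λ) = g x := h3
    rw [← h4, ← map_smul]
    simp
  · intro h
    refine subsingleton_of_forall_eq 0 fun α => ?_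
    have : Projective (LinearMap.shortComplexKer I.mkQ).X₂ := hP
    obtain ⟨x₁, rfl⟩ := Abelian.Ext.contravariant_sequence_exact₃ hS (ModuleCat.of Λ N) α
      (Abelian.Ext.eq_zero_of_projective _) (n₀ := 0) rfl
    obtain ⟨k, rfl⟩ := (Abelian.Ext.mk₀_bijective _ _).2 x₁
    obtain ⟨v, hv⟩ := h (k.hom ∘ₗ (LinearEquiv.ofEq _ _ e).symm.toLinearMap)
    have : k = (LinearMap.shortComplexKer I.mkQ).f ≫
        ModuleCat.ofHom (LinearMap.toSpanSingleton Λ N v) := by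
      refine ModuleCat.hom_ext (LinearMap.ext fun x : LinearMap.ker I.mkQ => ?_)
      exact hv ⟨x.1, e.le x.2⟩
    rw [this, ← Abelian.Ext.mk₀_comp_mk₀, hS.extClass_comp_assoc]

/-- Injective dimension can be tested on cyclic modules. -/
theorem injdim_of_cyclic (d : ℕ) (N : ModuleCat.{u} Λ)
    (h : ∀ I : Submodule Λ Λ, Subsingleton (Abelian.Ext (ModuleCat.of Λ (Λ ⧸ I)) N (d + 1))) :
    HasInjectiveDimensionLT N (d + 1) := by
  induction d generalizing N with
  | zero =>
    rw [zero_add, ← injective_iff_hasInjectiveDimensionLT_one]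
    have hB : Module.Baer Λ N := by
      intro I g
      obtain ⟨v, hv⟩ := (ext_one_iff I N).1 (h I) g
      exact ⟨LinearMap.toSpanSingleton Λ N v, fun x hx => (hv ⟨x, hx⟩).symm⟩
    have := hB.injective
    exact Module.injective_object_of_injective_module Λ N
  | succ d ih =>
    obtain ⟨p⟩ := EnoughInjectives.presentation N
    have hS : (ShortComplex.mk _ _ (Limits.cokernel.condition p.f)).ShortExact :=
      { exact := ShortComplex.exact_cokernel p.f }
    have hJ : HasInjectiveDimensionLT p.J 1 := inferInstance
    refine hS.hasInjectiveDimensionLT_X₁ (d + 1) (ih _ fun I => ?_)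
      (hasInjectiveDimensionLT_of_ge p.J 1 _ (by omega))
    refine subsingleton_of_forall_eq 0 fun α => ?_
    obtain ⟨x, rfl⟩ := Abelian.Ext.covariant_sequence_exact₃ _ hS α rfl
      (@Subsingleton.elim _ (h I) _ _)
    rw [Abelian.Ext.eq_zero_of_injective x, Abelian.Ext.zero_comp]

/-- Auslander's theorem: the global dimension is detected by cyclic modules. -/
theorem gldim_of_cyclic (d : ℕ)
    (h : ∀ I : Submodule Λ Λ, HasProjectiveDimensionLE (ModuleCat.of Λ (Λ ⧸ I)) d) :
    GlobalDimLE Λ d := by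
  intro X Y
  refine (ext_succ_iff (A := ℤ) X Y d).2 ?_
  have := injdim_of_cyclic d Y fun I => by
    have := h I
    exact HasProjectiveDimensionLT.subsingleton _ (d + 1) (d+1) le_rfl Y
  exact HasInjectiveDimensionLT.subsingleton Y (d + 1) (d+1) le_rfl X

end GlDim

/-! ### Modules of depth two -/

open IsLocalRing

section Depth
variable {R : Type u} [CommRing R] [IsLocalRing R]

/-- Depth at least two over a local ring with maximal ideal `m`, made explicit:
`Hom(R/m, M) = 0`, and every linear map `m → M` is multiplication by a vector of `M`,
which says `Ext¹(R/m, M) = 0`. -/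
structure DepthTwo (R : Type u) [CommRing R] [IsLocalRing R] (M : Type u) [AddCommGroup M]
    [Module R M] : Prop where
  d1 : ∀ x : M, (∀ r ∈ maximalIdeal R, r • x = 0) → x = 0
  d2 : ∀ φ : maximalIdeal R →ₗ[R] M, ∃ v : M, ∀ x, φ x = (x : R) • v

variable {M X Y : Type u} [AddCommGroup M] [Module R M] [AddCommGroup X] [Module R X]
  [AddCommGroup Y] [Module R Y]

/-- `Hom(R/m, M) = 0` says that no nonzero vector of `M` is annihilated by `m`. -/
theorem d1_iff : (∀ f : ModuleCat.of R (ResidueField R) ⟶ ModuleCat.of R M, f = 0) ↔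
    ∀ x : M, (∀ r ∈ maximalIdeal R, r • x = 0) → x = 0 := by
  constructor
  · intro h x hx
    let g : (R ⧸ maximalIdeal R) →ₗ[R] M :=
      (maximalIdeal R).liftQ (LinearMap.toSpanSingleton R M x) fun r hr => hx r hr
    have h1 := h (ModuleCat.ofHom (X := ResidueField R) g)
    have h2 : g (Submodule.Quotient.mk 1) = 0 :=
      congrArg (fun t => t.hom (Submodule.Quotient.mk 1 : R ⧸ maximalIdeal R)) h1
    have h3 : (1 : R) • x = 0 := h2
    rwa [one_smul] at h3
  · intro h f
    refine ModuleCat.hom_ext (LinearMap.ext fun y : R ⧸ maximalIdeal R => ?_)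
    refine h _ fun r hr => ?_
    have : r • y = 0 := by
      obtain ⟨s, rfl⟩ := Submodule.Quotient.mk_surjective _ y
      rw [← Submodule.Quotient.mk_smul, Submodule.Quotient.mk_eq_zero]
      exact Ideal.mul_mem_right _ _ hr
    exact (map_smul f.hom r y).symm.trans ((congrArg f.hom this).trans (map_zero f.hom))

/-- In dimension two, maximal Cohen–Macaulay means depth at least two. -/
theorem isMCM_iff (hdim : ringKrullDim R = 2) : IsMCM R M ↔ DepthTwo R M := by
  have key : DepthTwo R M ↔
      Subsingleton ↥(((Ext R (ModuleCat.{u} R) 0).obj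
        (Opposite.op (ModuleCat.of R (IsLocalRing.ResidueField R)))).obj (ModuleCat.of R M)) ∧
      Subsingleton ↥(((Ext R (ModuleCat.{u} R) (0 + 1)).obj
        (Opposite.op (ModuleCat.of R (IsLocalRing.ResidueField R)))).obj (ModuleCat.of R M)) := by
    rw [ext_zero_iff, d1_iff, ext_succ_iff]
    have := ext_one_iff (Λ := R) (maximalIdeal R) M
    constructor
    · intro h
      exact ⟨h.d1, this.2 h.d2⟩
    · intro h
      exact ⟨h.1, this.1 h.2⟩
  rw [key]
  constructor
  · intro h
    have h := h inferInstance
    rw [hdim] at h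
    have h' : (2 : ℕ∞) ≤ moduleDepth R inferInstance M :=
      WithBot.coe_le_coe.1 h
    constructor
    · by_contra hc
      have := h'.trans (sInf_le ⟨0, rfl, hc⟩)
      exact absurd this (by decide)
    · by_contra hc
      have := h'.trans (sInf_le ⟨0 + 1, rfl, hc⟩)
      exact absurd this (by decide)
  · rintro ⟨h0, h1⟩ hR
    rw [hdim]
    have : (2 : ℕ∞) ≤ moduleDepth R hR M := by
      refine le_sInf ?_
      rintro _ ⟨k, rfl, hk⟩
      match k, hk with
      | 0, hk => exact absurd h0 hk
      | 1, hk => exact absurd h1 hk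
      | k + 2, _ => exact_mod_cast (by omega : 2 ≤ k + 2)
    exact WithBot.coe_le_coe.2 this

/-- A module `X` of depth two inside `Y`, where `Y` has no vector killed by `m`, contains every
vector that a power of `m` multiplies into it. -/
theorem DepthTwo.mem_range (hX : DepthTwo R X) (f : X →ₗ[R] Y) (hf : Function.Injective f)
    (hY : ∀ x : Y, (∀ r ∈ maximalIdeal R, r • x = 0) → x = 0) (y : Y) (n : ℕ)
    (hy : ∀ r ∈ maximalIdeal R ^ n, r • y ∈ LinearMap.range f) : y ∈ LinearMap.range f := by
  have one : ∀ y : Y, (∀ r ∈ maximalIdeal R, r • y ∈ LinearMap.range f) →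
      y ∈ LinearMap.range f := by
    intro y hy
    let e := LinearEquiv.ofInjective f hf
    let ψ : maximalIdeal R →ₗ[R] LinearMap.range f :=
      LinearMap.codRestrict _ ((LinearMap.toSpanSingleton R Y y) ∘ₗ (maximalIdeal R).subtype)
        fun r => hy r r.2
    obtain ⟨v, hv⟩ := hX.d2 (e.symm.toLinearMap ∘ₗ ψ)
    refine ⟨v, ?_⟩
    rw [← sub_eq_zero]
    refine hY _ fun r hr => ?_
    have h1 := hv ⟨r, hr⟩
    have h2 : ψ ⟨r, hr⟩ = e (r • v) := by
      rw [← h1]; simp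
    have h3 : r • y = f (r • v) := congrArg Subtype.val h2
    rw [smul_sub, h3, map_smul, sub_self]
  induction n generalizing y with
  | zero => simpa using hy 1 (by simp)
  | succ n ih =>
    refine ih y fun r hr => one _ fun s hs => ?_
    rw [smul_smul]
    refine hy _ ?_
    rw [pow_succ']
    exact Ideal.mul_mem_mul hs hr

theorem DepthTwo.of_retract (hX : DepthTwo R X) (i : Y →ₗ[R] X) (p : X →ₗ[R] Y)
    (h : p ∘ₗ i = LinearMap.id) : DepthTwo R Y := by
  have h' : ∀ y, p (i y) = y := fun y => LinearMap.congr_fun h y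
  constructor
  · intro x hx
    rw [← h' x, hX.d1 (i x) fun r hr => by rw [← map_smul, hx r hr, map_zero], map_zero]
  · intro φ
    obtain ⟨v, hv⟩ := hX.d2 (i ∘ₗ φ)
    refine ⟨p v, fun x => ?_⟩
    rw [← h' (φ x), ← map_smul, ← hv]
    rfl

theorem DepthTwo.of_equiv (hX : DepthTwo R X) (e : X ≃ₗ[R] Y) : DepthTwo R Y :=
  hX.of_retract e.symm.toLinearMap e.toLinearMap (by ext; simp)

theorem DepthTwo.pi {ι : Type} {Z : ι → Type u} [∀ i, AddCommGroup (Z i)] [∀ i, Module R (Z i)]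
    (h : ∀ i, DepthTwo R (Z i)) : DepthTwo R (∀ i, Z i) := by
  constructor
  · intro x hx
    funext i
    exact (h i).d1 _ fun r hr => congrFun (hx r hr) i
  · intro φ
    choose v hv using fun i => (h i).d2 (LinearMap.proj i ∘ₗ φ)
    exact ⟨v, fun x => funext fun i => hv i x⟩

/-- `Hom(X, Y)` has depth two as soon as `Y` has, whatever `X` is. -/
theorem DepthTwo.hom (hY : DepthTwo R Y) : DepthTwo R (X →ₗ[R] Y) := by
  constructor
  · intro f hf
    ext x
    exact hY.d1 _ fun r hr => LinearMap.congr_fun (hf r hr) x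
  · intro φ
    choose v hv using fun a : X => hY.d2 (LinearMap.applyₗ a ∘ₗ φ)
    have hv' : ∀ a (r : maximalIdeal R), φ r a = (r : R) • v a := hv
    refine ⟨{ toFun := v, map_add' := ?_, map_smul' := ?_ }, fun r => LinearMap.ext fun a => hv' a r⟩
    · intro a b
      rw [← sub_eq_zero]
      refine hY.d1 _ fun r hr => ?_
      rw [smul_sub, smul_add, ← hv' _ ⟨r, hr⟩, ← hv' _ ⟨r, hr⟩, ← hv' _ ⟨r, hr⟩, map_add, sub_self]
    · intro c a
      rw [← sub_eq_zero]
      refine hY.d1 _ fun r hr => ?_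
      rw [RingHom.id_apply, smul_sub, smul_comm r c, ← hv' _ ⟨r, hr⟩, ← hv' _ ⟨r, hr⟩, map_smul,
        sub_self]

/-- Kernels between a module of depth two and one of depth one have depth two. -/
theorem DepthTwo.ker (hX : DepthTwo R X)
    (hY : ∀ x : Y, (∀ r ∈ maximalIdeal R, r • x = 0) → x = 0) (f : X →ₗ[R] Y) :
    DepthTwo R (LinearMap.ker f) := by
  constructor
  · intro x hx
    exact Subtype.ext (hX.d1 x fun r hr => congrArg Subtype.val (hx r hr))
  · intro φ
    obtain ⟨v, hv⟩ := hX.d2 ((LinearMap.ker f).subtype ∘ₗ φ)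
    refine ⟨⟨v, hY _ fun r hr => ?_⟩, fun x => Subtype.ext (hv x)⟩
    rw [← map_smul, ← hv ⟨r, hr⟩]
    exact (φ ⟨r, hr⟩).2

/-- By Krull's principal ideal theorem, `m` is not principal in dimension two. -/
theorem not_principal [IsNoetherianRing R] (hdim : ringKrullDim R = 2) (s : R)
    (h : ∀ r ∈ maximalIdeal R, s ∣ r) (hs : s ∈ maximalIdeal R) : False := by
  have h1 : maximalIdeal R = Ideal.span {s} := by
    refine le_antisymm (fun r hr => Ideal.mem_span_singleton.2 (h r hr)) ?_
    rwa [Ideal.span_singleton_le_iff_mem]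
  have h2 : (maximalIdeal R).height ≤ 1 := by
    have : (maximalIdeal R).IsPrincipal := ⟨⟨s, h1⟩⟩
    exact Ideal.height_le_one_of_isPrincipal_of_mem_minimalPrimes (maximalIdeal R) _
      (by simp [Ideal.minimalPrimes_eq_subsingleton_self])
  have h3 := maximalIdeal_height_eq_ringKrullDim (R := R)
  rw [hdim] at h3
  have h4 : (maximalIdeal R).height = 2 := WithBot.coe_injective h3
  rw [h4] at h2
  exact absurd h2 (by decide)

theorem exists_ne_zero_mem (hdim : ringKrullDim R = 2) : ∃ r ∈ maximalIdeal R, r ≠ 0 := by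
  by_contra! hc
  have h3 := maximalIdeal_height_eq_ringKrullDim (R := R)
  have : maximalIdeal R = ⊥ := (Submodule.eq_bot_iff _).2 hc
  rw [hdim, this] at h3
  have h4 : (⊥ : Ideal R).height = 2 := WithBot.coe_injective h3
  rw [Ideal.height_bot] at h4
  exact absurd h4 (by decide)

/-- A normal local domain of dimension two has depth two. A map `m → R` is multiplication by
an element `q` of the fraction field; either `q m ⊆ m` and `q` is integral, or `m` is
principal. -/
theorem depthTwo_self [IsNoetherianRing R] [IsDomain R] [IsIntegrallyClosed R]
    (hdim : ringKrullDim R = 2) : DepthTwo R R := by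
  obtain ⟨r₀, hr₀, hr₀'⟩ := exists_ne_zero_mem hdim
  constructor
  · intro x hx
    exact (mul_eq_zero.1 (hx r₀ hr₀)).resolve_left hr₀'
  · intro φ
    have comm : ∀ r s : maximalIdeal R, (r : R) * φ s = s * φ r := by
      intro r s
      rw [← smul_eq_mul, ← map_smul, ← smul_eq_mul, ← map_smul]
      congr 1
      exact Subtype.ext (mul_comm _ _)
    by_cases hc : ∀ s, φ s ∈ maximalIdeal R
    · let K := FractionRing R
      let q : K := algebraMap R K (φ ⟨r₀, hr₀⟩) / algebraMap R K r₀
      have hr₀K : algebraMap R K r₀ ≠ 0 := by simpa using hr₀'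
      have hq : ∀ s : maximalIdeal R, q * algebraMap R K s = algebraMap R K (φ s) := by
        intro s
        have := congrArg (algebraMap R K) (comm ⟨r₀, hr₀⟩ s)
        simp only [map_mul] at this
        simp only [q]
        rw [div_mul_eq_mul_div, div_eq_iff hr₀K]
        linear_combination - this
      let N : Submodule R K := Submodule.map (Algebra.linearMap R K) (maximalIdeal R)
      have hqint : IsIntegral R q := by
        refine isIntegral_of_smul_mem_submodule (M := K) N ?_ ?_ q ?_
        · intro h
          have : algebraMap R K r₀ ∈ N := ⟨r₀, hr₀, rfl⟩
          rw [h] at this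
          exact hr₀K this
        · exact (IsNoetherian.noetherian (maximalIdeal R)).map _
        · rintro _ ⟨s, hs, rfl⟩
          exact ⟨φ ⟨s, hs⟩, hc _, (hq ⟨s, hs⟩).symm⟩
      obtain ⟨v, hv⟩ := IsIntegrallyClosed.isIntegral_iff.1 hqint
      refine ⟨v, fun x => IsFractionRing.injective R K ?_⟩
      rw [← hq, ← hv, ← map_mul, smul_eq_mul, mul_comm]
    · push Not at hc
      obtain ⟨s, hs⟩ := hc
      have hu : IsUnit (φ s) := by simpa using hs
      refine (not_principal hdim s (fun r hr => ?_) s.2).elim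
      have := comm ⟨r, hr⟩ s
      rw [← hu.dvd_mul_right]
      exact ⟨_, this⟩

end Depth

/-! ### The punctured spectrum -/

section Punctured
variable {R : Type u} [CommRing R] [IsLocalRing R]

variable {M X Y : Type u} [AddCommGroup M] [Module R M] [AddCommGroup X] [Module R X]
  [AddCommGroup Y] [Module R Y]

/-- In a two-dimensional local domain, only `m` contains a nonzero prime properly. -/
theorem eq_max_of_lt [IsDomain R] (hdim : ringKrullDim R = 2) (P Q : Ideal R) [P.IsPrime]
    [Q.IsPrime] (hP : P ≠ ⊥) (hPQ : P < Q) : Q = maximalIdeal R := by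
  by_contra hQ
  have h1 : Q < maximalIdeal R := lt_of_le_of_ne (le_maximalIdeal Ideal.IsPrime.ne_top') hQ
  have a1 := Ideal.height_add_one_le_of_lt_of_isPrime (bot_lt_iff_ne_bot.2 hP)
  have a2 := Ideal.height_add_one_le_of_lt_of_isPrime hPQ
  have a3 := Ideal.height_add_one_le_of_lt_of_isPrime h1
  have h3 := maximalIdeal_height_eq_ringKrullDim (R := R)
  rw [hdim] at h3
  have h4 : (maximalIdeal R).height = 2 := WithBot.coe_injective h3
  rw [h4] at a3
  have : (0 + 1 + 1 + 1 : ℕ∞) ≤ 2 := by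
    refine le_trans ?_ a3
    gcongr
    refine le_trans ?_ a2
    gcongr
    exact le_trans (by gcongr; exact bot_le) a1
  exact absurd this (by decide)

/-- An ideal contained in no nonmaximal prime contains a power of `m`. -/
theorem exists_pow_le [IsNoetherianRing R] (J : Ideal R)
    (hJ : ∀ p : Ideal R, p.IsPrime → p ≠ maximalIdeal R → ∃ r ∈ J, r ∉ p) :
    ∃ n : ℕ, maximalIdeal R ^ n ≤ J := by
  have h1 : maximalIdeal R ≤ J.radical := by
    rw [Ideal.radical_eq_sInf]
    refine le_sInf ?_
    rintro p ⟨hp, hp'⟩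
    by_contra hc
    obtain ⟨r, hr, hr'⟩ := hJ p hp' fun h => hc h.ge
    exact hr' (hp hr)
  obtain ⟨n, hn⟩ := Ideal.exists_radical_pow_le_of_fg J (IsNoetherian.noetherian _)
  exact ⟨n, (Ideal.pow_right_mono h1 n).trans hn⟩

/-- Over a Noetherian local ring, a vector that lies in a submodule of depth two locally on the
punctured spectrum lies in it. -/
theorem DepthTwo.mem_range' [IsNoetherianRing R] (hX : DepthTwo R X) (f : X →ₗ[R] Y)
    (hf : Function.Injective f)
    (hY : ∀ x : Y, (∀ r ∈ maximalIdeal R, r • x = 0) → x = 0) (y : Y)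
    (hy : ∀ p : Ideal R, p.IsPrime → p ≠ maximalIdeal R →
      ∃ r ∉ p, r • y ∈ LinearMap.range f) : y ∈ LinearMap.range f := by
  let J : Ideal R := (LinearMap.range f).comap (LinearMap.toSpanSingleton R Y y)
  obtain ⟨n, hn⟩ := exists_pow_le J fun p hp hp' => by
    obtain ⟨r, hr, hr'⟩ := hy p hp hp'
    exact ⟨r, hr', hr⟩
  exact hX.mem_range f hf hY y n fun r hr => hn hr

/-- A vector that vanishes on the punctured spectrum vanishes in a module of positive depth. -/
theorem eq_zero_of_locally [IsNoetherianRing R]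
    (hY : ∀ x : Y, (∀ r ∈ maximalIdeal R, r • x = 0) → x = 0) (y : Y)
    (hy : ∀ p : Ideal R, p.IsPrime → p ≠ maximalIdeal R → ∃ r ∉ p, r • y = 0) : y = 0 := by
  have h0 : DepthTwo R PUnit.{u+1} :=
    ⟨fun _ _ => rfl, fun _ => ⟨0, fun _ => rfl⟩⟩
  obtain ⟨z, rfl⟩ := h0.mem_range' (0 : PUnit.{u+1} →ₗ[R] Y) (fun _ _ _ => rfl) hY y
    fun p hp hp' => by
      obtain ⟨r, hr, hr'⟩ := hy p hp hp'
      exact ⟨r, hr, by rw [hr']; exact zero_mem _⟩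
  rfl

theorem d1_of_torsionFree [IsDomain R] (hdim : ringKrullDim R = 2) [Module.IsTorsionFree R X] :
    ∀ x : X, (∀ r ∈ maximalIdeal R, r • x = 0) → x = 0 := by
  obtain ⟨r, hr, hr'⟩ := exists_ne_zero_mem hdim
  intro x hx
  exact (smul_eq_zero.1 (hx r hr)).resolve_left hr'

theorem ne_bot_max [IsDomain R] (hdim : ringKrullDim R = 2) : (⊥ : Ideal R) ≠ maximalIdeal R := by
  obtain ⟨r, hr, hr'⟩ := exists_ne_zero_mem hdim
  rintro h
  rw [← h] at hr
  exact hr' hr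

variable [IsNoetherianRing R] [IsDomain R]

/-- A finitely generated module of depth two over a two-dimensional local domain is
torsion-free. If `p` is an associated prime of height one and `x ∈ m \ p`, then multiplication
by `x` on the `p`-torsion is injective, and its cokernel is supported at `m`, hence zero. -/
theorem DepthTwo.torsionFree (hdim : ringKrullDim R = 2) [Module.Finite R X]
    (hX : DepthTwo R X) : Module.IsTorsionFree R X := by
  rw [Module.isTorsionFree_iff_smul_eq_zero]
  by_contra! hc
  obtain ⟨r, x, hrx, h2⟩ := hc
  have hr0 : r ≠ 0 := by tauto
  have hx0 : x ≠ 0 := by tauto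
  have hrx : r • x = 0 := by tauto
  obtain ⟨p, hp, hle⟩ := exists_le_isAssociatedPrime_of_isNoetherianRing R x hx0
  have hrp : r ∈ p := hle (by simpa [Submodule.mem_colon] using hrx)
  obtain ⟨hpp, t, ht⟩ := (isAssociatedPrime_iff_exists_injective_linearMap p X).1 hp
  have hpbot : p ≠ ⊥ := by rintro rfl; exact hr0 hrp
  let t0 : X := t (Submodule.Quotient.mk 1)
  have ht0 : t0 ≠ 0 := by
    intro h
    have := ht (h.trans (map_zero t).symm)
    rw [Submodule.Quotient.mk_eq_zero] at this
    exact hpp.ne_top ((Ideal.eq_top_iff_one _).2 this)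
  have ht1 : ∀ r ∈ p, r • t0 = 0 := by
    intro r hr
    rw [← map_smul, ← Submodule.Quotient.mk_smul, (Submodule.Quotient.mk_eq_zero p).2, map_zero]
    simpa using hr
  have hpm : p ≠ maximalIdeal R := by
    rintro rfl
    exact ht0 (hX.d1 t0 ht1)
  obtain ⟨y, hym, hyp⟩ : ∃ y ∈ maximalIdeal R, y ∉ p := by
    by_contra! hc
    exact hpm (le_antisymm (le_maximalIdeal hpp.ne_top) hc)
  let ev : X →ₗ[R] (p →ₗ[R] X) :=
    { toFun := fun x => (LinearMap.toSpanSingleton R X x) ∘ₗ p.subtype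
      map_add' := fun a b => by ext; simp
      map_smul' := fun a b => LinearMap.ext fun r => smul_comm (r : R) a b }
  let T := LinearMap.ker ev
  have hT : DepthTwo R T := hX.ker (hX.hom (X := p)).d1 ev
  have hpT : ∀ r ∈ p, ∀ z : T, r • z = 0 := fun r hr z =>
    Subtype.ext (LinearMap.congr_fun (show ev z = 0 from z.2) ⟨r, hr⟩)
  have htT : t0 ∈ T := by
    change ev t0 = 0
    ext ⟨r, hr⟩
    exact ht1 r hr
  have hloc : ∀ q : Ideal R, q.IsPrime → q ≠ maximalIdeal R → (∃ r ∈ p, r ∉ q) ∨ y ∉ q := by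
    intro q hq hqm
    by_cases h : p ≤ q
    · right
      intro hy
      have hlt : p < q := lt_of_le_of_ne h (by rintro rfl; exact hyp hy)
      exact hqm (eq_max_of_lt hdim p q hpbot hlt)
    · left
      exact Set.not_subset.1 h
  let f : T →ₗ[R] T := LinearMap.lsmul R T y
  have hf : Function.Injective f := by
    rw [← LinearMap.ker_eq_bot, Submodule.eq_bot_iff]
    intro z hz
    refine eq_zero_of_locally hT.d1 z fun q hq hqm => ?_
    rcases hloc q hq hqm with ⟨r, hr, hr'⟩ | h
    · exact ⟨r, hr', hpT r hr z⟩
    · exact ⟨y, h, hz⟩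
  have hsurj : ∀ z : T, z ∈ LinearMap.range f := fun z =>
    hT.mem_range' f hf hT.d1 z fun q hq hqm => by
      rcases hloc q hq hqm with ⟨r, hr, hr'⟩ | h
      · exact ⟨r, hr', by rw [hpT r hr]; exact zero_mem _⟩
      · exact ⟨y, h, z, rfl⟩
  have htop : (⊤ : Submodule R T) = ⊥ := by
    refine Submodule.eq_bot_of_le_smul_of_le_jacobson_bot (Ideal.span {y}) ⊤
      (IsNoetherian.noetherian _) ?_ ?_
    · intro z _
      obtain ⟨w, rfl⟩ := hsurj z
      exact Submodule.smul_mem_smul (Ideal.mem_span_singleton_self y) trivial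
    · rw [Ideal.span_singleton_le_iff_mem, IsLocalRing.jacobson_eq_maximalIdeal _ bot_ne_top]
      exact hym
  have : (⟨t0, htT⟩ : T) ∈ (⊤ : Submodule R T) := trivial
  rw [htop] at this
  exact ht0 (congrArg Subtype.val this)

variable [IsIntegrallyClosed R]

/-- Away from the maximal ideal, the localizations of a two-dimensional normal local domain are
principal ideal domains. -/
theorem pid_localization (hdim : ringKrullDim R = 2) (p : Ideal R) [p.IsPrime]
    (hp : p ≠ maximalIdeal R) : IsPrincipalIdealRing (Localization.AtPrime p) := by
  have hic : IsIntegrallyClosed (Localization.AtPrime p) :=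
    isIntegrallyClosed_of_isLocalization _ p.primeCompl p.primeCompl_le_nonZeroDivisors
  have tfae := (tfae_of_isNoetherianRing_of_isLocalRing_of_isDomain
    (Localization.AtPrime p)).out 0 3
  refine tfae.2 ⟨hic, fun P hP hP' => ?_⟩
  have h1 : P.under R ≤ p :=
    (Ideal.comap_mono (le_maximalIdeal hP'.ne_top)).trans_eq
      (Localization.AtPrime.under_maximalIdeal (I := p))
  have h2 : P.under R ≠ ⊥ := by
    intro h
    apply hP
    rw [← IsLocalization.map_under p.primeCompl _ P, h, Ideal.map_bot]
  have h3 : P.under R = p := by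
    by_contra hne
    exact hp (eq_max_of_lt hdim _ p h2 (lt_of_le_of_ne h1 hne))
  rw [← IsLocalization.map_under p.primeCompl _ P, h3, Localization.AtPrime.map_eq_maximalIdeal]

/-- Away from the maximal ideal, a finitely generated torsion-free module has a dual basis,
up to multiplication by an element outside the given prime. -/
theorem exists_dualBasis (hdim : ringKrullDim R = 2) (p : Ideal R) [p.IsPrime]
    (hp : p ≠ maximalIdeal R) (M : Type u) [AddCommGroup M] [Module R M] [Module.Finite R M]
    [Module.IsTorsionFree R M] :
    ∃ s ∉ p, ∃ (n : ℕ) (g : Fin n → Dual R M) (m : Fin n → M),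
      (∀ x, s • x = ∑ i, g i x • m i) ∧ ∀ i, g i (m i) = s := by
  let A := Localization.AtPrime p
  have := pid_localization hdim p hp
  let MA := LocalizedModule p.primeCompl M
  let b := Module.finBasis A MA
  let ι := LocalizedModule.mkLinearMap p.primeCompl M
  have hinj : Function.Injective (algebraMap R A) :=
    IsLocalization.injective A p.primeCompl_le_nonZeroDivisors
  have hι : Function.Injective ι := by
    refine (IsLocalizedModule.injective_iff_isRegular p.primeCompl ι).2 fun c => ?_
    exact IsSMulRegular.of_ne_zero fun h => c.2 (h ▸ p.zero_mem)
  have hfp := Module.finitePresentation_of_finite R M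
  choose g s hg using fun i => Module.FinitePresentation.exists_lift_of_isLocalizedModule
    p.primeCompl (Algebra.linearMap R A) ((b.coord i).restrictScalars R ∘ₗ ι)
  have hg' : ∀ i x, algebraMap R A (g i x) = algebraMap R A (s i) * b.repr (ι x) i := by
    intro i x
    have := LinearMap.congr_fun (hg i) x
    rw [← Algebra.smul_def]
    exact this
  choose y hy using fun i => IsLocalizedModule.surj p.primeCompl ι (b i)
  let t : Fin (finrank A MA) → R := fun i => (s i : R) * (y i).2
  have ht : ∀ i, t i ∈ p.primeCompl := fun i => mul_mem (s i).2 (y i).2.2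
  have hgm : ∀ i, g i (y i).1 = t i := by
    intro i
    apply hinj
    rw [hg', ← hy, map_mul]
    congr 1
    change b.repr (((y i).2 : R) • b i) i = _
    rw [← algebraMap_smul A, map_smul]
    simp [Algebra.algebraMap_eq_smul_one]
  refine ⟨∏ i, t i, prod_mem (S := p.primeCompl) fun i _ => ht i, finrank A MA,
    fun i => (∏ j ∈ Finset.univ.erase i, t j) • g i, fun i => (y i).1, fun x => hι ?_, fun i => ?_⟩
  · rw [map_smul, map_sum, ← b.sum_repr (ι x), Finset.smul_sum]
    refine Finset.sum_congr rfl fun i _ => ?_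
    rw [map_smul, ← hy]
    change _ = _ • (((y i).2 : R) • b i)
    rw [LinearMap.smul_apply, smul_eq_mul, ← Finset.mul_prod_erase Finset.univ t (Finset.mem_univ i)]
    rw [← algebraMap_smul A, ← algebraMap_smul A ((y i).2 : R), ← algebraMap_smul A (_ * _ : R),
      smul_smul, smul_smul]
    congr 1
    simp only [map_mul, hg', t]
    ring
  · rw [LinearMap.smul_apply, hgm, smul_eq_mul, Finset.prod_erase_mul _ _ (Finset.mem_univ i)]

/-- The trace ideal of a nonzero torsion-free module is not contained in a nonmaximal prime. -/
theorem exists_trace (hdim : ringKrullDim R = 2) (p : Ideal R) [p.IsPrime]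
    (hp : p ≠ maximalIdeal R) (M : Type u) [AddCommGroup M] [Module R M] [Module.Finite R M]
    [Module.IsTorsionFree R M] [Nontrivial M] : ∃ (g : Dual R M) (m : M), g m ∉ p := by
  obtain ⟨s, hs, n, g, m, h1, h2⟩ := exists_dualBasis hdim p hp M
  rcases n with _ | n
  · obtain ⟨x, hx⟩ := exists_ne (0 : M)
    have := h1 x
    rw [Finset.univ_eq_empty, Finset.sum_empty] at this
    rcases smul_eq_zero.1 this with h | h
    · exact absurd (h ▸ p.zero_mem) hs
    · exact absurd h hx
  · exact ⟨g 0, m 0, by rwa [h2]⟩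

end Punctured

/-! ### Depth two and reflexivity -/

section Reflexive
variable {R : Type u} [CommRing R] [IsLocalRing R] [IsNoetherianRing R] [IsDomain R]
  [IsIntegrallyClosed R]

variable {M X Y : Type u} [AddCommGroup M] [Module R M] [AddCommGroup X] [Module R X]
  [AddCommGroup Y] [Module R Y]

/-- Finitely generated modules of depth two are reflexive: the evaluation map is an isomorphism
on the punctured spectrum, and depth extends this over the closed point. -/
theorem DepthTwo.reflexive (hdim : ringKrullDim R = 2) [Module.Finite R X]
    (hX : DepthTwo R X) : Module.IsReflexive R X := by
  have := hX.torsionFree hdim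
  have hinj : Function.Injective (Dual.eval R X) := by
    rw [← LinearMap.ker_eq_bot, Submodule.eq_bot_iff]
    intro x hx
    obtain ⟨s, hs, n, g, m, h1, -⟩ := exists_dualBasis hdim ⊥ (ne_bot_max hdim) X
    have h2 : ∀ i, g i x = 0 := fun i => LinearMap.congr_fun hx (g i)
    have h3 := h1 x
    simp only [h2, zero_smul, Finset.sum_const_zero] at h3
    exact (smul_eq_zero.1 h3).resolve_left hs
  refine ⟨⟨hinj, fun ξ => ?_⟩⟩
  refine hX.mem_range' (Dual.eval R X) hinj (depthTwo_self hdim).hom.d1 ξ fun p hp hpm => ?_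
  obtain ⟨s, hs, n, g, m, h1, -⟩ := exists_dualBasis hdim p hpm X
  refine ⟨s, hs, ∑ i, ξ (g i) • m i, LinearMap.ext fun φ => ?_⟩
  have h2 : s • φ = ∑ i, φ (m i) • g i := by
    ext x
    rw [LinearMap.smul_apply, ← map_smul, h1]
    simp [mul_comm]
  rw [LinearMap.smul_apply, ← map_smul, h2]
  simp [mul_comm]

/-- A reflexive module is a dual, and duals have depth two because `R` has. -/
theorem depthTwo_of_reflexive (hdim : ringKrullDim R = 2) [Module.IsReflexive R X] :
    DepthTwo R X :=
  DepthTwo.of_equiv (DepthTwo.hom (X := Dual R X) (depthTwo_self hdim)) (evalEquiv R X).symm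

end Reflexive

/-! ### Summands of powers of `M` when `End M` has global dimension two -/

section Auslander
variable {R : Type u} [CommRing R] [IsLocalRing R] [IsNoetherianRing R] [IsDomain R]
  [IsIntegrallyClosed R]

variable {M X : Type u} [AddCommGroup M] [Module R M] [AddCommGroup X] [Module R X]

/-- Every finitely generated module `X` receives a map from a power of `M` that is surjective on
the punctured spectrum. -/
theorem exists_approx (hdim : ringKrullDim R = 2) [Module.Finite R M] [Nontrivial M]
    [Module.IsTorsionFree R M] [Module.Finite R X] :
    ∃ (a : ℕ) (h : Fin a → M →ₗ[R] X), ∀ p : Ideal R, p.IsPrime → p ≠ maximalIdeal R →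
      ∃ r ∉ p, ∀ x, ∃ y : Fin a → M, ∑ i, h i (y i) = r • x := by
  obtain ⟨a, h, hspan⟩ := Module.Finite.exists_fin (R := R) (M := M →ₗ[R] X)
  refine ⟨a, h, fun p hp hpm => ?_⟩
  obtain ⟨g, m, hgm⟩ := exists_trace hdim p hpm M
  refine ⟨g m, hgm, fun x => ?_⟩
  have hmem : g.smulRight x ∈ Submodule.span R (Set.range h) := by rw [hspan]; trivial
  obtain ⟨c, hc⟩ := (Submodule.mem_span_range_iff_exists_fun R).1 hmem
  refine ⟨fun i => c i • m, ?_⟩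
  have := LinearMap.congr_fun hc m
  simpa using this

/-- If `End M` has global dimension at most two, then `Hom(X, M)` is a projective `End M`-module,
being a kernel of a map between free modules. -/
theorem projective_hom (hdim : ringKrullDim R = 2) [Module.Finite R M] [Nontrivial M]
    (hM : DepthTwo R M) (hΛ : GlobalDimLE (Module.End R M) 2) [Module.Finite R X] :
    Module.Projective (Module.End R M) (X →ₗ[R] M) := by
  have := hM.torsionFree hdim
  obtain ⟨a, h, hh⟩ := exists_approx (M := M) (X := X) hdim
  let π : (Fin a → M) →ₗ[R] X := ∑ i, h i ∘ₗ LinearMap.proj i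
  have hπ : ∀ y, π y = ∑ i, h i (y i) := fun y => by simp [π]
  obtain ⟨b, k, hk⟩ := exists_approx (M := M) (X := LinearMap.ker π) hdim
  let Λ := Module.End R M
  let sm : (Fin a → Λ) → ((Fin a → M) →ₗ[R] M) := fun l => ∑ i, l i ∘ₗ LinearMap.proj i
  have hsm : ∀ l y, sm l y = ∑ i, l i (y i) := fun l y => by simp [sm]
  let Φ : (Fin a → Λ) →ₗ[Λ] (Fin b → Λ) :=
    { toFun := fun l j => sm l ∘ₗ (LinearMap.ker π).subtype ∘ₗ k j
      map_add' := fun l l' => by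
        refine funext fun j => LinearMap.ext fun x => ?_
        change sm (l + l') (k j x) = sm l (k j x) + sm l' (k j x)
        rw [hsm, hsm, hsm, ← Finset.sum_add_distrib]
        rfl
      map_smul' := fun c l => by
        refine funext fun j => LinearMap.ext fun x => ?_
        change sm (c • l) (k j x) = (show M →ₗ[R] M from c) (sm l (k j x))
        rw [hsm, hsm, map_sum]
        rfl }
  let F : (X →ₗ[R] M) →ₗ[Λ] (Fin a → Λ) :=
    { toFun := fun ψ i => ψ ∘ₗ h i
      map_add' := fun _ _ => rfl
      map_smul' := fun _ _ => rfl }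
  have hFinj : ∀ ψ : X →ₗ[R] M, (∀ i, ψ ∘ₗ h i = 0) → ψ = 0 := by
    intro ψ hψ
    ext x
    refine eq_zero_of_locally hM.d1 _ fun p hp hpm => ?_
    obtain ⟨r, hr, hr'⟩ := hh p hp hpm
    obtain ⟨y, hy⟩ := hr' x
    refine ⟨r, hr, ?_⟩
    rw [← map_smul, ← hy, map_sum]
    exact Finset.sum_eq_zero fun i _ => LinearMap.congr_fun (hψ i) (y i)
  have hker : ∀ l, l ∈ LinearMap.ker Φ → l ∈ LinearMap.range F := by
    intro l hl
    have hl1 : ∀ j z, sm l (k j z) = 0 := fun j z =>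
      LinearMap.congr_fun (congrFun (show Φ l = 0 from hl) j) z
    have hl2 : ∀ y : LinearMap.ker π, sm l y = 0 := by
      intro y
      refine eq_zero_of_locally hM.d1 _ fun p hp hpm => ?_
      obtain ⟨r, hr, hr'⟩ := hk p hp hpm
      obtain ⟨z, hz⟩ := hr' y
      refine ⟨r, hr, ?_⟩
      rw [← map_smul, ← Submodule.coe_smul, ← hz, Submodule.coe_sum, map_sum]
      exact Finset.sum_eq_zero fun j _ => hl1 j (z j)
    let G : (X →ₗ[R] M) →ₗ[R] ((Fin a → M) →ₗ[R] M) := LinearMap.lcomp R M π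
    have hG : Function.Injective G := by
      rw [← LinearMap.ker_eq_bot, Submodule.eq_bot_iff]
      intro ψ hψ
      refine hFinj ψ fun i => LinearMap.ext fun y => ?_
      have := LinearMap.congr_fun (show G ψ = 0 from hψ) (Pi.single i y)
      have h2 : π (Pi.single i y) = h i y := by
        rw [hπ, Finset.sum_eq_single i] <;> simp +contextual
      rw [LinearMap.lcomp_apply, h2] at this
      exact this
    obtain ⟨ψ, hψ⟩ := (hM.hom (X := X)).mem_range' G hG hM.hom.d1 (sm l) fun p hp hpm => by
      obtain ⟨r, hr, hr'⟩ := hh p hp hpm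
      choose y hy using hr'
      have huniq : ∀ y y' : Fin a → M, π y = π y' → sm l y = sm l y' := by
        intro y y' hyy
        have := hl2 ⟨y - y', by rw [LinearMap.mem_ker, map_sub, hyy, sub_self]⟩
        rwa [map_sub, sub_eq_zero] at this
      have hy' : ∀ x, π (y x) = r • x := fun x => (hπ _).trans (hy x)
      refine ⟨r, hr, { toFun := fun x => sm l (y x), map_add' := ?_, map_smul' := ?_ }, ?_⟩
      · intro x x'
        rw [← map_add]
        apply huniq
        rw [map_add, hy', hy', hy', smul_add]
      · intro c x
        rw [RingHom.id_apply, ← map_smul]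
        apply huniq
        rw [map_smul, hy', hy', smul_comm]
      · refine LinearMap.ext fun v => ?_
        change sm l (y (π v)) = r • sm l v
        rw [← map_smul]
        apply huniq
        rw [hy', map_smul]
    refine ⟨ψ, funext fun i => LinearMap.ext fun z => ?_⟩
    have h2 : π (Pi.single i z) = h i z := by
      rw [hπ, Finset.sum_eq_single i] <;> simp +contextual
    have h3 : sm l (Pi.single i z) = l i z := by
      rw [hsm, Finset.sum_eq_single i] <;> simp +contextual
    change ψ (h i z) = l i z
    rw [← h2, ← h3, ← hψ]
    rfl
  have hrange : LinearMap.range F = LinearMap.ker Φ := by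
    refine le_antisymm ?_ hker
    rintro _ ⟨ψ, rfl⟩
    change Φ (F ψ) = 0
    funext j
    ext z
    change sm (F ψ) (k j z) = 0
    rw [hsm]
    change ∑ i, ψ (h i ((k j z : Fin a → M) i)) = 0
    rw [← map_sum, ← hπ, (k j z).2, map_zero]
  have hF : Function.Injective F := by
    rw [← LinearMap.ker_eq_bot, Submodule.eq_bot_iff]
    intro ψ hψ
    exact hFinj ψ fun i => congrFun (show F ψ = 0 from hψ) i
  have := projective_ker_of_gldim_two hΛ Φ
  exact Module.Projective.of_equiv
    ((LinearEquiv.ofInjective F hF).trans (LinearEquiv.ofEq _ _ hrange)).symm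

/-- If `End M` has global dimension at most two, then every finitely generated module of depth
two is a direct summand of a power of `M`. With `P = Hom(X, M)`, a retract of some `Λⁿ`, the
module `M' = Hom_Λ(P, M)` is a retract of `Mⁿ`, and evaluation `X → M'` is an isomorphism since
every map `X → M` factors uniquely through it. -/
theorem retract_of_gldim (hdim : ringKrullDim R = 2) [Module.Finite R M] [Nontrivial M]
    (hM : DepthTwo R M) (hΛ : GlobalDimLE (Module.End R M) 2) [Module.Finite R X]
    (hX : DepthTwo R X) :
    ∃ (n : ℕ) (i : X →ₗ[R] (Fin n → M)) (p : (Fin n → M) →ₗ[R] X), p ∘ₗ i = LinearMap.id := by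
  have := hM.torsionFree hdim
  have := hX.torsionFree hdim
  let Λ := Module.End R M
  have hproj : Module.Projective Λ (X →ₗ[R] M) := projective_hom hdim hM hΛ
  have hfin : Module.Finite Λ (X →ₗ[R] M) := Module.Finite.of_restrictScalars_finite R Λ _
  obtain ⟨n, pr, hpr⟩ := Module.Finite.exists_fin' Λ (X →ₗ[R] M)
  obtain ⟨ii, hii⟩ := Module.projective_lifting_property pr LinearMap.id hpr
  have hii' : ∀ ψ, pr (ii ψ) = ψ := fun ψ => LinearMap.congr_fun hii ψ
  let e : Fin n → (X →ₗ[R] M) := fun j => pr (Pi.single j (1 : Λ))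
  have hpr' : ∀ l : Fin n → Λ, pr l = ∑ j, l j • e j := by
    intro l
    conv_lhs => rw [← Finset.univ_sum_single l]
    rw [map_sum]
    refine Finset.sum_congr rfl fun j _ => ?_
    rw [← map_smul]
    congr 1
    ext1 k
    by_cases hkj : k = j
    · subst hkj; simp
    · simp [Pi.single_eq_of_ne hkj]
  let M' := (X →ₗ[R] M) →ₗ[Λ] M
  let f : X →ₗ[R] M' :=
    { toFun := fun x =>
        { toFun := fun ψ => ψ x
          map_add' := fun _ _ => rfl
          map_smul' := fun _ _ => rfl }
      map_add' := fun x y => LinearMap.ext fun ψ => map_add ψ x y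
      map_smul' := fun c x => LinearMap.ext fun ψ => map_smul ψ c x }
  let q : (Fin n → M) →ₗ[R] M' :=
    { toFun := fun y =>
        { toFun := fun ψ => ∑ j, ii ψ j (y j)
          map_add' := fun ψ ψ' => by
            rw [map_add, ← Finset.sum_add_distrib]
            rfl
          map_smul' := fun c ψ => by
            rw [map_smul, RingHom.id_apply, Finset.smul_sum]
            rfl }
      map_add' := fun y y' => LinearMap.ext fun ψ => by
        change ∑ j, ii ψ j (y j + y' j) = ∑ j, ii ψ j (y j) + ∑ j, ii ψ j (y' j)
        simp [Finset.sum_add_distrib]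
      map_smul' := fun c y => LinearMap.ext fun ψ => by
        change ∑ j, ii ψ j (c • y j) = c • ∑ j, ii ψ j (y j)
        simp [Finset.smul_sum] }
  let σ : M' →ₗ[R] (Fin n → M) :=
    { toFun := fun θ j => θ (e j)
      map_add' := fun _ _ => rfl
      map_smul' := fun _ _ => rfl }
  have hqσ : ∀ θ, q (σ θ) = θ := by
    intro θ
    refine LinearMap.ext fun ψ => ?_
    change ∑ j, ii ψ j (θ (e j)) = θ ψ
    conv_rhs => rw [← hii' ψ, hpr', map_sum]
    refine Finset.sum_congr rfl fun j _ => ?_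
    rw [map_smul]
    rfl
  have hrep : ∀ Ψ : M' →ₗ[R] M, ∃ ψ : X →ₗ[R] M, ∀ θ : M', Ψ θ = θ ψ := by
    intro Ψ
    let l : Fin n → Λ := fun j => Ψ ∘ₗ q ∘ₗ LinearMap.single R (fun _ => M) j
    refine ⟨pr l, fun θ => ?_⟩
    rw [hpr', map_sum]
    conv_lhs => rw [← hqσ θ, ← Finset.univ_sum_single (σ θ), map_sum, map_sum]
    refine Finset.sum_congr rfl fun j _ => ?_
    rw [map_smul]
    rfl
  have huniq : ∀ Ψ : M' →ₗ[R] M, Ψ ∘ₗ f = 0 → Ψ = 0 := by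
    intro Ψ hΨ
    obtain ⟨ψ, hψ⟩ := hrep Ψ
    have : ψ = 0 := by
      ext x
      exact (hψ (f x)).symm.trans (LinearMap.congr_fun hΨ x)
    ext θ
    rw [hψ, this, map_zero, LinearMap.zero_apply]
  have huniq' : ∀ Ψ Ψ' : M' →ₗ[R] M', Ψ ∘ₗ f = Ψ' ∘ₗ f → Ψ = Ψ' := by
    intro Ψ Ψ' h
    ext1 θ
    rw [← hqσ (Ψ θ), ← hqσ (Ψ' θ)]
    congr 1
    funext j
    have := huniq (LinearMap.proj j ∘ₗ σ ∘ₗ (Ψ - Ψ')) (by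
      rw [LinearMap.comp_assoc, LinearMap.comp_assoc, LinearMap.sub_comp, h, sub_self]; simp)
    have h2 := LinearMap.congr_fun this θ
    simp only [LinearMap.comp_apply, LinearMap.sub_apply, map_sub, LinearMap.zero_apply,
      sub_eq_zero] at h2
    exact h2
  have hM' : DepthTwo R M' :=
    (DepthTwo.pi (Z := fun _ : Fin n => M) fun _ => hM).of_retract σ q (LinearMap.ext hqσ)
  have hinj : Function.Injective f := by
    rw [← LinearMap.ker_eq_bot, Submodule.eq_bot_iff]
    intro x hx
    have hx' : ∀ ψ : X →ₗ[R] M, ψ x = 0 := fun ψ => LinearMap.congr_fun (show f x = 0 from hx) ψ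
    obtain ⟨s, hs, n, g, m, h1, -⟩ := exists_dualBasis hdim ⊥ (ne_bot_max hdim) X
    obtain ⟨m0, hm0⟩ := exists_ne (0 : M)
    have h2 : ∀ i, g i x = 0 := fun i =>
      (smul_eq_zero.1 (hx' ((g i).smulRight m0))).resolve_right hm0
    have h3 := h1 x
    simp only [h2, zero_smul, Finset.sum_const_zero] at h3
    exact (smul_eq_zero.1 h3).resolve_left hs
  have hsurj : Function.Surjective f := by
    intro θ
    refine hX.mem_range' f hinj hM'.d1 θ fun p hp hpm => ?_
    obtain ⟨s, hs, n, g, m, h1, -⟩ := exists_dualBasis hdim p hpm X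
    obtain ⟨h, m0, hc⟩ := exists_trace hdim p hpm M
    have hmul : s * h m0 ∉ p := hp.mul_notMem hs hc
    -- the functional `h m0 • g i` on `X` extends along `f`
    let v : Fin n → (M' →ₗ[R] R) := fun i =>
      { toFun := fun θ => h (θ ((g i).smulRight m0))
        map_add' := fun θ θ' => map_add h _ _
        map_smul' := fun c θ => map_smul h c _ }
    have hv : ∀ i x, v i (f x) = h m0 * g i x := by
      intro i x
      change h (g i x • m0) = _
      rw [map_smul, smul_eq_mul, mul_comm]
    let w : M' →ₗ[R] X := ∑ i, (v i).smulRight (m i)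
    have hw : f ∘ₗ w = (s * h m0) • LinearMap.id := by
      apply huniq'
      ext1 x
      change f (w (f x)) = (s * h m0) • f x
      rw [← map_smul]
      congr 1
      simp only [w, LinearMap.sum_apply, LinearMap.smulRight_apply, hv]
      rw [mul_comm, mul_smul, h1, Finset.smul_sum]
      simp [mul_smul]
    exact ⟨_, hmul, w θ, LinearMap.congr_fun hw θ⟩
  let E := LinearEquiv.ofBijective f ⟨hinj, hsurj⟩
  refine ⟨n, σ ∘ₗ f, E.symm.toLinearMap ∘ₗ q, LinearMap.ext fun x => ?_⟩
  change E.symm (q (σ (f x))) = x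
  rw [hqσ]
  exact E.symm_apply_apply x

end Auslander

/-! ### Krull–Schmidt over a complete local ring -/

section KrullSchmidt
variable {R : Type u} [CommRing R]
variable {M X Y : Type u} [AddCommGroup M] [Module R M] [AddCommGroup X] [Module R X]
  [AddCommGroup Y] [Module R Y]

/-- Every idempotent endomorphism of a Noetherian module is a finite sum of idempotents with
indecomposable ranges. The induction is on the kernel, which grows when an idempotent is split. -/
theorem exists_list_idempotents [IsNoetherian R X] (f : Module.End R X)
    (hf : IsIdempotentElem f) : ∃ l : List (Module.End R X),
      (∀ e ∈ l, IsIdempotentElem e ∧ IsIndecomposableModule R (LinearMap.range e)) ∧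
        l.sum = f := by
  induction hK : LinearMap.ker f using WellFoundedGT.induction generalizing f with
  | ind K ih =>
  subst hK
  by_cases h0 : f = 0
  · exact ⟨[], by simp, by simp [h0]⟩
  by_cases hind : IsIndecomposableModule R (LinearMap.range f)
  · exact ⟨[f], by simpa using ⟨hf, hind⟩, by simp⟩
  have hnt : Nontrivial (LinearMap.range f) := by
    rw [Submodule.nontrivial_iff_ne_bot]
    exact fun h => h0 (LinearMap.range_eq_bot.1 h)
  have hff : ∀ x, f (f x) = f x := fun x => LinearMap.congr_fun hf x
  have key : ∀ A B : Submodule R (LinearMap.range f), IsCompl A B → B ≠ ⊥ →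
      ∃ f₁ : Module.End R X, IsIdempotentElem f₁ ∧ LinearMap.ker f < LinearMap.ker f₁ ∧
        ∀ (h : IsCompl A B) x, f₁ x = ((A.projection B h) (f.rangeRestrict x) : X) := by
    intro A B h hB
    let f₁ : Module.End R X :=
      (LinearMap.range f).subtype ∘ₗ (A.projection B h) ∘ₗ f.rangeRestrict
    have hrr : ∀ z : LinearMap.range f, f.rangeRestrict (z : X) = z := by
      rintro ⟨_, x, rfl⟩
      exact Subtype.ext (hff x)
    refine ⟨f₁, ?_, ?_, fun _ _ => rfl⟩
    · refine LinearMap.ext fun x => ?_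
      change ((A.projection B h) (f.rangeRestrict
        ((A.projection B h) (f.rangeRestrict x) : X)) : X) = _
      rw [hrr, Submodule.projection_apply_of_mem_left h (Submodule.projection_apply_mem h _)]
      rfl
    · refine lt_of_le_of_ne ?_ ?_
      · intro x hx
        have : f.rangeRestrict x = 0 := Subtype.ext hx
        change ((A.projection B h) (f.rangeRestrict x) : X) = 0
        rw [this, map_zero]; rfl
      · intro heq
        obtain ⟨b, hb, hb0⟩ := B.ne_bot_iff.1 hB
        have h1 : (b : X) ∈ LinearMap.ker f₁ := by
          change ((A.projection B h) (f.rangeRestrict (b : X)) : X) = 0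
          rw [hrr, Submodule.projection_apply_right h ⟨b, hb⟩]; rfl
        rw [← heq] at h1
        apply hb0
        have h2 := hrr b
        rw [← h2]
        exact Subtype.ext h1
  have : ∃ A B : Submodule R (LinearMap.range f), IsCompl A B ∧ A ≠ ⊥ ∧ B ≠ ⊥ := by
    by_contra! hcon
    exact hind ⟨hnt, fun A B h => or_iff_not_imp_left.2 (hcon A B h)⟩
  obtain ⟨A, B, h, hA, hB⟩ := this
  obtain ⟨f₁, hf₁, hk₁, hv₁⟩ := key A B h hB
  obtain ⟨f₂, hf₂, hk₂, hv₂⟩ := key B A h.symm hA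
  obtain ⟨l₁, hl₁, hs₁⟩ := ih _ hk₁ f₁ hf₁ rfl
  obtain ⟨l₂, hl₂, hs₂⟩ := ih _ hk₂ f₂ hf₂ rfl
  refine ⟨l₁ ++ l₂, fun e he => ?_, ?_⟩
  · rcases List.mem_append.1 he with he | he
    exacts [hl₁ e he, hl₂ e he]
  · rw [List.sum_append, hs₁, hs₂]
    refine LinearMap.ext fun x => ?_
    rw [LinearMap.add_apply, hv₁ h, hv₂ h.symm, ← Submodule.coe_add,
      Submodule.projection_add_projection_eq_self h]
    rfl

/-- A finite module over a complete Noetherian local ring is complete. -/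
theorem isAdicComplete_of_finite [IsLocalRing R] [IsNoetherianRing R]
    [IsAdicComplete (maximalIdeal R) R] [Module.Finite R X] :
    IsAdicComplete (maximalIdeal R) X := by
  have h : IsPrecomplete (maximalIdeal R) X := by
    rw [← AdicCompletion.of_surjective_iff]
    intro y
    obtain ⟨t, rfl⟩ := AdicCompletion.ofTensorProduct_surjective_of_finite (maximalIdeal R) X y
    induction t with
    | zero => exact ⟨0, by simp⟩
    | add a b ha hb =>
      obtain ⟨x, hx⟩ := ha
      obtain ⟨z, hz⟩ := hb
      exact ⟨x + z, by rw [map_add, map_add, hx, hz]⟩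
    | tmul r x =>
      obtain ⟨s, rfl⟩ := AdicCompletion.of_surjective (maximalIdeal R) R r
      refine ⟨s • x, ?_⟩
      rw [AdicCompletion.ofTensorProduct_tmul, map_smul]
      ext n
      rfl
  exact { toIsPrecomplete := h }

/-- Idempotents lift modulo an ideal along which the ring is complete. -/
theorem exists_idempotent_lift {S : Type u} [CommRing S] (I : Ideal S) [IsAdicComplete I S]
    (a : S) (ha : a * a - a ∈ I) : ∃ e : S, e * e = e ∧ e - a ∈ I := by
  have hen : HenselianRing S I := inferInstance
  obtain ⟨e, he, hea⟩ := hen.is_henselian (Polynomial.X ^ 2 - Polynomial.X : Polynomial S)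
    (by
      nontriviality S
      apply Polynomial.Monic.sub_of_left (Polynomial.monic_X_pow 2)
      simp) a (by simpa [pow_two] using ha) (by
      simp only [Polynomial.derivative_sub, Polynomial.derivative_X_pow, Polynomial.derivative_X]
      -- `(2a - 1)² = 1 + 4(a² - a)`
      rw [isUnit_iff_exists_inv]
      refine ⟨Ideal.Quotient.mk I (2 * a - 1), ?_⟩
      rw [← map_mul, ← map_one (Ideal.Quotient.mk I), Ideal.Quotient.eq]
      have : (Polynomial.eval a (Polynomial.C ((2 : ℕ) : S) * Polynomial.X ^ (2 - 1) - 1) *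
        (2 * a - 1) - 1) = 4 * (a * a - a) := by
        simp; ring
      rw [this]
      exact I.mul_mem_left _ ha)
  refine ⟨e, ?_, hea⟩
  have := he
  simp [Polynomial.IsRoot, pow_two] at this
  exact sub_eq_zero.1 this

/-- In a commutative ring `S` complete along an ideal `I` with Artinian quotient and without
nontrivial idempotents, one of `f`, `1 - f` is a unit: modulo `I` some power of `f` is
associated to an idempotent. -/
theorem isUnit_or_of_idempotents {S : Type u} [CommRing S] (I : Ideal S) [IsAdicComplete I S]
    [IsArtinianRing (S ⧸ I)] (hS : ∀ e : S, e * e = e → e = 0 ∨ e = 1) (f : S) :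
    IsUnit f ∨ IsUnit (1 - f) := by
  have hjac : I ≤ Ideal.jacobson ⊥ := IsAdicComplete.le_jacobson_bot I
  obtain ⟨n, y, hy⟩ := IsArtinian.exists_pow_succ_smul_dvd (Ideal.Quotient.mk I f) (1 : S ⧸ I)
  obtain ⟨y, rfl⟩ := Ideal.Quotient.mk_surjective y
  simp only [smul_eq_mul, mul_one] at hy
  have hk : ∀ k : ℕ, Ideal.Quotient.mk I f ^ n =
      Ideal.Quotient.mk I f ^ (n + k) * Ideal.Quotient.mk I y ^ k := by
    intro k
    induction k with
    | zero => simp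
    | succ k ih =>
      rw [ih, show n + (k + 1) = (n + 1) + k by ring, pow_add _ (n + 1) k, pow_succ _ k,
        show ∀ a b c d : S ⧸ I, a * b * (c * d) = (a * d) * b * c by intros; ring, hy, pow_add]
  have hkn := hk n
  have ha : (f ^ n * y ^ n) * (f ^ n * y ^ n) - f ^ n * y ^ n ∈ I := by
    rw [← Ideal.Quotient.eq]
    simp only [map_mul, map_pow]
    conv_rhs => rw [hkn]
    ring
  obtain ⟨e, he, hea⟩ := exists_idempotent_lift I _ ha
  rcases hS e he with rfl | rfl
  · right
    have h1 : f ^ n ∈ I := by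
      rw [← Ideal.Quotient.eq_zero_iff_mem, map_pow, hkn]
      have : Ideal.Quotient.mk I (f ^ n * y ^ n) = 0 := by
        rw [Ideal.Quotient.eq_zero_iff_mem]
        simpa using hea
      rw [map_mul, map_pow, map_pow] at this
      rw [pow_add, mul_assoc, this, mul_zero]
    have h2 : IsUnit (1 - f ^ n) := by
      have := Ideal.mem_jacobson_bot.1 (hjac h1) (-1)
      rwa [show f ^ n * -1 + 1 = 1 - f ^ n by ring] at this
    exact isUnit_of_dvd_unit (one_sub_dvd_one_sub_pow f n) h2
  · left
    have h2 : IsUnit (f ^ n * y ^ n) := by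
      have := Ideal.mem_jacobson_bot.1 (hjac hea) (-1)
      rwa [show (1 - f ^ n * y ^ n) * -1 + 1 = f ^ n * y ^ n by ring] at this
    rcases Nat.eq_zero_or_pos n with rfl | hn
    · simp only [pow_zero, pow_one] at hy
      rw [← map_mul, ← map_one (Ideal.Quotient.mk I), Ideal.Quotient.eq] at hy
      have := Ideal.mem_jacobson_bot.1 (hjac hy) 1
      rw [show (f * y - 1) * 1 + 1 = f * y by ring] at this
      exact isUnit_of_mul_isUnit_left this
    · exact (isUnit_pow_iff hn.ne').1 (isUnit_of_mul_isUnit_left h2)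

/-- The endomorphism ring of a finitely generated indecomposable module over a complete local
ring is local. -/
theorem isUnit_or_of_indecomposable [IsLocalRing R] [IsNoetherianRing R]
    [IsAdicComplete (maximalIdeal R) R] [Module.Finite R X] (hX : IsIndecomposableModule R X)
    (f : Module.End R X) : IsUnit f ∨ IsUnit (1 - f) := by
  let S := Algebra.adjoin R {f}
  have hfin : Module.Finite R S :=
    inferInstanceAs (Module.Finite R (Subalgebra.toSubmodule S))
  have : IsMulCommutative S := Algebra.isMulCommutative_adjoin R (by
    intro a ha b hb
    rw [Set.mem_singleton_iff.1 ha, Set.mem_singleton_iff.1 hb])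
  let _ : CommRing S := inferInstance
  let I : Ideal S := (maximalIdeal R).map (algebraMap R S)
  have : IsAdicComplete I S :=
    (IsAdicComplete.map_algebraMap_iff _ _).2 isAdicComplete_of_finite
  have : IsArtinianRing (S ⧸ I) := by
    have : Module.Finite (R ⧸ maximalIdeal R) (S ⧸ I) :=
      Module.Finite.of_restrictScalars_finite R _ _
    let _ : Field (R ⧸ maximalIdeal R) := Ideal.Quotient.field _
    exact IsArtinianRing.of_finite (R ⧸ maximalIdeal R) (S ⧸ I)
  have hS : ∀ e : S, e * e = e → e = 0 ∨ e = 1 := by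
    intro e he
    have he' : IsIdempotentElem (e : Module.End R X) := congrArg Subtype.val he
    rcases hX.2 _ _ (LinearMap.IsIdempotentElem.isCompl he') with h | h
    · left
      exact Subtype.ext (LinearMap.range_eq_bot.1 h)
    · right
      refine Subtype.ext (LinearMap.ext fun x => ?_)
      have h2 : (e : Module.End R X) ((e : Module.End R X) x - x) = 0 := by
        rw [map_sub, sub_eq_zero]
        exact LinearMap.congr_fun he' x
      exact sub_eq_zero.1 ((LinearMap.ker_eq_bot'.1 h) _ h2)
  let f' : S := ⟨f, Algebra.self_mem_adjoin_singleton R f⟩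
  rcases isUnit_or_of_idempotents I hS f' with h | h
  · left
    exact h.map S.val
  · right
    exact h.map S.val

/-- Krull–Schmidt exchange: if `M` is decomposed by the idempotents in `l`, an indecomposable
retract of a power of `M` is one of the summands. Some composite `X → M → M → X` through an
idempotent of `l` is invertible, because `End X` is local and these composites add up to one. -/
theorem equiv_of_retract [IsLocalRing R] [IsNoetherianRing R]
    [IsAdicComplete (maximalIdeal R) R] [Module.Finite R X] (hX : IsIndecomposableModule R X)
    (l : List (Module.End R M))
    (hl : ∀ e ∈ l, IsIdempotentElem e ∧ IsIndecomposableModule R (LinearMap.range e))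
    (hsum : l.sum = 1) {n : ℕ} (i : X →ₗ[R] (Fin n → M)) (p : (Fin n → M) →ₗ[R] X)
    (hip : p ∘ₗ i = LinearMap.id) : ∃ e ∈ l, Nonempty (X ≃ₗ[R] LinearMap.range e) := by
  have := hX.1
  have hloc : ∀ a b : Module.End R X, IsUnit (a + b) → IsUnit a ∨ IsUnit b := by
    rintro a b ⟨w, hw⟩
    rcases isUnit_or_of_indecomposable hX (a * ↑w⁻¹) with h | h
    · left
      simpa using h.mul w.isUnit
    · right
      have := h.mul w.isUnit
      rw [sub_mul, mul_assoc, Units.inv_mul, mul_one, one_mul, hw, add_sub_cancel_left] at this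
      exact this
  have hlist : ∀ l : List (Module.End R X), IsUnit l.sum → ∃ a ∈ l, IsUnit a := by
    intro l
    induction l with
    | nil => intro h; simp at h
    | cons a l ih =>
      intro h
      rw [List.sum_cons] at h
      rcases hloc _ _ h with h | h
      · exact ⟨a, by simp, h⟩
      · obtain ⟨b, hb, hb'⟩ := ih h
        exact ⟨b, by simp [hb], hb'⟩
  let ii : Fin n → X →ₗ[R] M := fun j => LinearMap.proj j ∘ₗ i
  let pp : Fin n → M →ₗ[R] X := fun j => p ∘ₗ LinearMap.single R (fun _ => M) j
  have h1 : ((List.finRange n).map fun j => (pp j ∘ₗ ii j : Module.End R X)).sum = 1 := by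
    rw [← List.ofFn_eq_map, List.sum_ofFn]
    refine LinearMap.ext fun x => ?_
    rw [LinearMap.sum_apply]
    have := LinearMap.congr_fun hip x
    change p (i x) = x at this
    change ∑ j, p (Pi.single j (i x j)) = x
    rw [← map_sum, Finset.univ_sum_single, this]
  obtain ⟨a, ha, hau⟩ := hlist _ (h1 ▸ isUnit_one)
  obtain ⟨j, -, rfl⟩ := List.mem_map.1 ha
  let c : Module.End R M →+ Module.End R X :=
    { toFun := fun e => pp j ∘ₗ e ∘ₗ ii j
      map_zero' := by simp
      map_add' := fun a b => by rw [LinearMap.add_comp, LinearMap.comp_add] }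
  have h2 : c 1 = (pp j ∘ₗ ii j : Module.End R X) := rfl
  rw [← h2, ← hsum, map_list_sum] at hau
  obtain ⟨a, ha, hau⟩ := hlist _ hau
  obtain ⟨e, he, rfl⟩ := List.mem_map.1 ha
  refine ⟨e, he, ?_⟩
  obtain ⟨hee, hei⟩ := hl e he
  obtain ⟨w, hw⟩ := hau
  -- `X` is a nonzero direct summand of the indecomposable module `range e`
  let α : X →ₗ[R] LinearMap.range e := e.rangeRestrict ∘ₗ ii j
  let β : LinearMap.range e →ₗ[R] X :=
    (↑w⁻¹ : Module.End R X) ∘ₗ pp j ∘ₗ (LinearMap.range e).subtype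
  have hβα : ∀ x, β (α x) = x := fun x => by
    have h3 : (↑w⁻¹ : Module.End R X) * ↑w = 1 := w.inv_mul
    rw [hw] at h3
    exact LinearMap.congr_fun h3 x
  have hid : IsIdempotentElem (α ∘ₗ β : Module.End R (LinearMap.range e)) :=
    LinearMap.ext fun z => congrArg α (hβα (β z))
  have hinj : Function.Injective α := Function.LeftInverse.injective hβα
  refine ⟨LinearEquiv.ofLinearMap α β ?_ (LinearMap.ext hβα)⟩
  rcases hei.2 _ _ (LinearMap.IsIdempotentElem.isCompl hid) with h | h
  · exfalso
    obtain ⟨x, hx⟩ := exists_ne (0 : X)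
    have h4 : (α ∘ₗ β) (α x) = 0 := LinearMap.congr_fun (LinearMap.range_eq_bot.1 h) (α x)
    change α (β (α x)) = 0 at h4
    rw [hβα, ← map_zero α] at h4
    exact hx (hinj h4)
  · refine LinearMap.ext fun z => ?_
    have h2 : (α ∘ₗ β) ((α ∘ₗ β) z - z) = 0 := by
      rw [map_sub, sub_eq_zero]
      exact LinearMap.congr_fun hid z
    exact sub_eq_zero.1 ((LinearMap.ker_eq_bot'.1 h) _ h2)

end KrullSchmidt

/-! ### Additive closures and finite representation type -/

section AddClosure
variable {R : Type u} [CommRing R]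
variable {M X : Type u} [AddCommGroup M] [Module R M] [AddCommGroup X] [Module R X]

/-- A retract of a power of `M` lies in `add M`: the complement is `ker p`. -/
theorem memAdd_of_retract {n : ℕ} (i : X →ₗ[R] (Fin n → M)) (p : (Fin n → M) →ₗ[R] X)
    (h : p ∘ₗ i = LinearMap.id) : MemAdd R M X := by
  have h' : ∀ x, p (i x) = x := fun x => LinearMap.congr_fun h x
  refine ⟨n, ModuleCat.of R (LinearMap.ker p), ⟨?_⟩⟩
  let α : (X × LinearMap.ker p) →ₗ[R] (Fin n → M) := i.coprod (LinearMap.ker p).subtype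
  refine LinearEquiv.ofBijective α ⟨?_, ?_⟩
  · rw [← LinearMap.ker_eq_bot, Submodule.eq_bot_iff]
    rintro ⟨x, z⟩ hxz
    change i x + (z : Fin n → M) = 0 at hxz
    have h1 := congrArg p hxz
    rw [map_add, h', z.2, add_zero, map_zero] at h1
    subst h1
    rw [map_zero, zero_add] at hxz
    exact Prod.ext rfl (Subtype.ext hxz)
  · intro y
    refine ⟨(p y, ⟨y - i (p y), by rw [LinearMap.mem_ker, map_sub, h', sub_self]⟩), ?_⟩
    change i (p y) + (y - i (p y)) = y
    abel

/-- A module whose identity is a sum of endomorphisms factoring through `M` is a retract of a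
power of `M`. -/
theorem retract_of_list (l : List (Module.End R X))
    (hl : ∀ e ∈ l, ∃ (i : X →ₗ[R] M) (p : M →ₗ[R] X), e = p ∘ₗ i) (hsum : l.sum = 1) :
    ∃ (n : ℕ) (i : X →ₗ[R] (Fin n → M)) (p : (Fin n → M) →ₗ[R] X), p ∘ₗ i = LinearMap.id := by
  choose i p h using fun j : Fin l.length => hl (l.get j) (l.get_mem j)
  refine ⟨l.length, LinearMap.pi i, ∑ j, p j ∘ₗ LinearMap.proj j, ?_⟩
  rw [← List.ofFn_get l, List.sum_ofFn] at hsum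
  refine LinearMap.ext fun x => ?_
  have := LinearMap.congr_fun hsum x
  rw [LinearMap.sum_apply] at this
  refine Eq.trans ?_ this
  rw [LinearMap.comp_apply, LinearMap.sum_apply]
  refine Finset.sum_congr rfl fun j _ => ?_
  rw [h j]
  rfl

end AddClosure

section ClosedPoint
variable {R : Type u} [CommRing R] [IsLocalRing R]

theorem closedPoint_units (u : (maximalIdeal R).primeCompl) : IsUnit (u : R) := by
  by_contra h
  exact u.2 ((mem_maximalIdeal _).2 h)

/-- Localizing at the closed point changes nothing. -/
noncomputable def closedPointEquiv (Λ : Type u) [Ring Λ] [Algebra R Λ] :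
    (Localization.AtPrime (maximalIdeal R) ⊗[R] Λ) ≃+* Λ :=
  ((Algebra.TensorProduct.congr
    (IsLocalization.atUnits R (maximalIdeal R).primeCompl
      (S := Localization.AtPrime (maximalIdeal R))
      (fun x hx => closedPoint_units ⟨x, hx⟩)).symm AlgEquiv.refl).trans
    (Algebra.TensorProduct.lid R Λ)).toRingEquiv

theorem ringKrullDim_closedPoint :
    ringKrullDim (Localization.AtPrime (maximalIdeal R)) = ringKrullDim R :=
  ringKrullDim_eq_of_ringEquiv (IsLocalization.atUnits R (maximalIdeal R).primeCompl
      (S := Localization.AtPrime (maximalIdeal R))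
      (fun x hx => closedPoint_units ⟨x, hx⟩)).symm.toRingEquiv

end ClosedPoint

section FiniteType
variable {R : Type u} [CommRing R] [IsLocalRing R] [IsNoetherianRing R] [IsDomain R]
  [IsIntegrallyClosed R]

/-- If `End M` has global dimension two, the indecomposable modules of depth two are exactly the
indecomposable summands of `M`. -/
theorem finiteType_of_NCCR [IsAdicComplete (maximalIdeal R) R] (hdim : ringKrullDim R = 2)
    (h : HasNCCR R) : HasFiniteCMType R := by
  obtain ⟨M, hfin, hrefl, hnt, -, -, hgl⟩ := h
  have hM : DepthTwo R M := depthTwo_of_reflexive hdim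
  have hΛ : GlobalDimLE (Module.End R M) 2 := by
    have h1 := hgl ⟨maximalIdeal R, inferInstance⟩
    change (globalDim (Localization.AtPrime (maximalIdeal R) ⊗[R] Module.End R M) : WithBot ℕ∞) =
      ringKrullDim (Localization.AtPrime (maximalIdeal R)) at h1
    rw [ringKrullDim_closedPoint, hdim] at h1
    exact gldim_congr (closedPointEquiv _) (gldimLE_of_eq (WithBot.coe_injective h1))
  obtain ⟨l, hl, hsum⟩ := exists_list_idempotents (1 : Module.End R M) IsIdempotentElem.one
  refine ⟨l.length, fun j => ModuleCat.of R (LinearMap.range (l.get j)), fun L hL hind hmcm => ?_⟩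
  obtain ⟨n, i, p, hip⟩ := retract_of_gldim hdim hM hΛ ((isMCM_iff hdim).1 hmcm)
  obtain ⟨e, he, ⟨E⟩⟩ := equiv_of_retract hind l hl hsum i p hip
  obtain ⟨j, rfl⟩ := List.get_of_mem he
  exact ⟨j, ⟨E⟩⟩

end FiniteType

/-! ### The endomorphism ring of an additive generator -/

/-- Nakayama's lemma for a finite algebra `B` over a local ring. -/
theorem one_notMem_smul_top {A B : Type u} [CommRing A] [IsLocalRing A] [Ring B] [Algebra A B]
    [Module.Finite A B] [Nontrivial B] : (1 : B) ∉ (maximalIdeal A • ⊤ : Submodule A B) := by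
  intro h
  have h1 : (⊤ : Submodule A B) ≤ maximalIdeal A • ⊤ := by
    intro b _
    have : ∀ x ∈ (maximalIdeal A • ⊤ : Submodule A B),
        b * x ∈ (maximalIdeal A • ⊤ : Submodule A B) := by
      intro x hx
      refine Submodule.smul_induction_on hx (fun r hr y _ => ?_) fun y z hy hz => ?_
      · rw [mul_smul_comm]
        exact Submodule.smul_mem_smul hr trivial
      · rw [mul_add]
        exact add_mem hy hz
    simpa using this 1 h
  have h2 := Submodule.eq_bot_of_le_smul_of_le_jacobson_bot _ _ Module.Finite.fg_top h1
    (maximalIdeal_le_jacobson _)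
  exact top_ne_bot h2

section ClosedPointDim
variable {R : Type u} [CommRing R] [IsLocalRing R] [IsNoetherianRing R] [IsDomain R]
  [IsIntegrallyClosed R]

variable {M X : Type u} [AddCommGroup M] [Module R M] [AddCommGroup X] [Module R X]

omit [IsLocalRing R] [IsNoetherianRing R] [IsDomain R] [IsIntegrallyClosed R] in
/-- `Hom(-, M)` turns retracts of powers of `M` into projective `End M`-modules. -/
theorem projective_hom_of_retract {n : ℕ} (i : X →ₗ[R] (Fin n → M)) (p : (Fin n → M) →ₗ[R] X)
    (h : p ∘ₗ i = LinearMap.id) : Module.Projective (Module.End R M) (X →ₗ[R] M) := by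
  let s : (X →ₗ[R] M) →ₗ[Module.End R M] (Fin n → Module.End R M) :=
    { toFun := fun φ j => φ ∘ₗ p ∘ₗ LinearMap.single R (fun _ => M) j
      map_add' := fun _ _ => rfl
      map_smul' := fun _ _ => rfl }
  let t : (Fin n → Module.End R M) →ₗ[Module.End R M] (X →ₗ[R] M) :=
    { toFun := fun l => ∑ j, (l j : M →ₗ[R] M) ∘ₗ LinearMap.proj j ∘ₗ i
      map_add' := fun l l' => by
        rw [← Finset.sum_add_distrib]
        rfl
      map_smul' := fun c l => by
        rw [RingHom.id_apply, Finset.smul_sum]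
        rfl }
  refine Module.Projective.of_split s t (LinearMap.ext fun φ => LinearMap.ext fun x => ?_)
  change (∑ j, (φ ∘ₗ p ∘ₗ LinearMap.single R (fun _ => M) j) ∘ₗ LinearMap.proj j ∘ₗ i) x = φ x
  rw [LinearMap.sum_apply]
  change ∑ j, φ (p (Pi.single j (i x j))) = φ x
  rw [← map_sum, ← map_sum, Finset.univ_sum_single]
  exact congrArg φ (LinearMap.congr_fun h x)

/-- If `M` is reflexive and every finitely generated module of depth two is a summand of a power
of `M`, then `Hom(X, M)`, a retract of `Hom(X**, M)`, is projective over `End M`. -/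
theorem projective_hom_of_add (hdim : ringKrullDim R = 2) [Module.IsReflexive R M]
    (hadd : ∀ (X : Type u) [AddCommGroup X] [Module R X] [Module.Finite R X], DepthTwo R X →
      ∃ (n : ℕ) (i : X →ₗ[R] (Fin n → M)) (p : (Fin n → M) →ₗ[R] X), p ∘ₗ i = LinearMap.id)
    [Module.Finite R X] : Module.Projective (Module.End R M) (X →ₗ[R] M) := by
  have hX : DepthTwo R (Dual R (Dual R X)) := (depthTwo_self hdim).hom
  obtain ⟨n, i, p, hip⟩ := hadd _ hX
  have := projective_hom_of_retract i p hip
  let ev := (evalEquiv R M).symm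
  have hev : ∀ x, ev (Dual.eval R M x) = x := fun x => (evalEquiv R M).symm_apply_apply x
  let s : (X →ₗ[R] M) →ₗ[Module.End R M] (Dual R (Dual R X) →ₗ[R] M) :=
    { toFun := fun φ => ev.toLinearMap ∘ₗ φ.dualMap.dualMap
      map_add' := fun φ ψ => LinearMap.ext fun x => by
        have : (φ + ψ).dualMap.dualMap x = φ.dualMap.dualMap x + ψ.dualMap.dualMap x := by
          refine LinearMap.ext fun f => ?_
          change x ((φ + ψ).dualMap f) = x (φ.dualMap f) + x (ψ.dualMap f)
          rw [← map_add]
          congr 1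
          refine LinearMap.ext fun y => ?_
          exact map_add f _ _
        change ev ((φ + ψ).dualMap.dualMap x) = _
        rw [this, map_add]
        rfl
      map_smul' := fun c φ => LinearMap.ext fun x => by
        obtain ⟨y, hy⟩ := (bijective_dual_eval R M).2 (φ.dualMap.dualMap x)
        have h1 : (c • φ).dualMap.dualMap x = Dual.eval R M (c y) := by
          refine LinearMap.ext fun f => ?_
          exact (LinearMap.congr_fun hy (f ∘ₗ c)).symm
        change ev ((c • φ).dualMap.dualMap x) = c (ev (φ.dualMap.dualMap x))
        rw [h1, ← hy, hev, hev] }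
  let t : (Dual R (Dual R X) →ₗ[R] M) →ₗ[Module.End R M] (X →ₗ[R] M) :=
    { toFun := fun ψ => ψ ∘ₗ Dual.eval R X
      map_add' := fun _ _ => rfl
      map_smul' := fun _ _ => rfl }
  refine Module.Projective.of_split s t (LinearMap.ext fun φ => LinearMap.ext fun x => ?_)
  exact hev (φ x)

/-- Second syzygies over `End M` have the form `Hom(X, M)`, so `End M` has global dimension at
most two. -/
theorem gldim_end_le_two (hdim : ringKrullDim R = 2) [Module.Finite R M] [Module.IsReflexive R M]
    (hadd : ∀ (X : Type u) [AddCommGroup X] [Module R X] [Module.Finite R X], DepthTwo R X →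
      ∃ (n : ℕ) (i : X →ₗ[R] (Fin n → M)) (p : (Fin n → M) →ₗ[R] X), p ∘ₗ i = LinearMap.id) :
    GlobalDimLE (Module.End R M) 2 := by
  have hnoeth : IsNoetherian (Module.End R M) (Module.End R M) := isNoetherian_of_tower R inferInstance
  refine gldim_of_cyclic 2 fun I => ?_
  rw [pd_succ_iff I.mkQ I.mkQ_surjective 1, Submodule.ker_mkQ]
  obtain ⟨a, f, hf⟩ := Module.Finite.exists_fin' (Module.End R M) I
  rw [pd_succ_iff f hf 0, pd_zero_iff]
  let g : Fin a → Module.End R M := fun j => (f (Pi.single j 1) : Module.End R M)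
  have hfg : ∀ l, (f l : Module.End R M) = ∑ j, l j * g j := by
    intro l
    conv_lhs => rw [← Finset.univ_sum_single l]
    rw [map_sum, Submodule.coe_sum]
    refine Finset.sum_congr rfl fun j _ => ?_
    change _ = ((l j • f (Pi.single j 1) : I) : Module.End R M)
    rw [← map_smul, ← Pi.single_smul, smul_eq_mul, mul_one]
  let G : M →ₗ[R] (Fin a → M) := LinearMap.pi g
  have := projective_hom_of_add (M := M) (X := (Fin a → M) ⧸ LinearMap.range G) hdim hadd
  let F : (((Fin a → M) ⧸ LinearMap.range G) →ₗ[R] M) →ₗ[Module.End R M]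
      (Fin a → Module.End R M) :=
    { toFun := fun θ j => θ ∘ₗ (LinearMap.range G).mkQ ∘ₗ LinearMap.single R (fun _ => M) j
      map_add' := fun _ _ => rfl
      map_smul' := fun _ _ => rfl }
  have hF : Function.Injective F := by
    rw [← LinearMap.ker_eq_bot, Submodule.eq_bot_iff]
    intro θ hθ
    refine Submodule.linearMap_qext _ (LinearMap.pi_ext' fun j => ?_)
    exact congrFun (show F θ = 0 from hθ) j
  have hrange : LinearMap.range F = LinearMap.ker f := by
    ext l
    have hsum : ∀ x, (f l : Module.End R M) x = ∑ j, l j (g j x) := by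
      intro x
      rw [hfg, LinearMap.sum_apply]
      rfl
    constructor
    · rintro ⟨θ, rfl⟩
      refine Subtype.ext (LinearMap.ext fun x => ?_)
      rw [hsum]
      change ∑ j, θ ((LinearMap.range G).mkQ (Pi.single j (g j x))) = 0
      rw [← map_sum, ← map_sum]
      have : ∑ j, (Pi.single j (g j x) : Fin a → M) = G x :=
        Finset.univ_sum_single (fun j => g j x)
      have h0 : (LinearMap.range G).mkQ (G x) = 0 :=
        (Submodule.Quotient.mk_eq_zero _).2 ⟨x, rfl⟩
      rw [this, h0, map_zero]
    · intro hl
      let τ : (Fin a → M) →ₗ[R] M := ∑ j, (l j : M →ₗ[R] M) ∘ₗ LinearMap.proj j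
      have hτ : ∀ y, τ y = ∑ j, l j (y j) := fun y => by
        rw [LinearMap.sum_apply]; rfl
      refine ⟨(LinearMap.range G).liftQ τ ?_, funext fun j => LinearMap.ext fun x => ?_⟩
      · rintro _ ⟨x, rfl⟩
        rw [LinearMap.mem_ker, hτ]
        change ∑ j, l j (g j x) = 0
        rw [← hsum, show f l = 0 from hl]
        rfl
      · change τ (Pi.single j x) = l j x
        rw [hτ, Finset.sum_eq_single j] <;> simp +contextual
  exact Module.Projective.of_equiv
    ((LinearEquiv.ofInjective F hF).trans (LinearEquiv.ofEq _ _ hrange))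

omit [IsDomain R] [IsIntegrallyClosed R] in
/-- If `End M` had global dimension at most one, its left ideal generated by the maximal ideal
would be projective, hence of depth two, and so would contain `1`. -/
theorem not_gldim_end_le_one [Module.Finite R M] [Nontrivial M]
    (hM : DepthTwo R M) : ¬ GlobalDimLE (Module.End R M) 1 := by
  intro h
  have hnoeth : IsNoetherian (Module.End R M) (Module.End R M) := isNoetherian_of_tower R inferInstance
  let K : Submodule (Module.End R M) (Module.End R M) :=
    Submodule.span _ (Set.range fun r : maximalIdeal R => algebraMap R (Module.End R M) r)
  have hproj := projective_of_gldim_one h K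
  obtain ⟨n, pr, hpr⟩ := Module.Finite.exists_fin' (Module.End R M) K
  obtain ⟨ii, hii⟩ := Module.projective_lifting_property pr LinearMap.id hpr
  have hΛ : DepthTwo R (Module.End R M) := hM.hom
  have hK : DepthTwo R K :=
    (DepthTwo.pi (Z := fun _ : Fin n => Module.End R M) fun _ => hΛ).of_retract
      (ii.restrictScalars R) (pr.restrictScalars R)
      (LinearMap.ext fun x => LinearMap.congr_fun hii x)
  have hone : (1 : Module.End R M) ∈ LinearMap.range (K.subtype.restrictScalars R) := by
    refine hK.mem_range _ Subtype.val_injective hΛ.d1 1 1 fun r hr => ?_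
    rw [pow_one] at hr
    refine ⟨⟨r • 1, ?_⟩, rfl⟩
    rw [← Algebra.algebraMap_eq_smul_one]
    exact Submodule.subset_span ⟨⟨r, hr⟩, rfl⟩
  obtain ⟨⟨y, hy⟩, rfl : y = 1⟩ := hone
  refine one_notMem_smul_top (A := R) (B := Module.End R M) ?_
  refine Submodule.span_induction (p := fun y _ => y ∈ (maximalIdeal R • ⊤ : Submodule R _))
    ?_ (zero_mem _) (fun _ _ _ _ => add_mem) ?_ hy
  · rintro _ ⟨r, rfl⟩
    simp only
    rw [Algebra.algebraMap_eq_smul_one]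
    exact Submodule.smul_mem_smul r.2 trivial
  · intro b x _ hx
    refine Submodule.smul_induction_on hx (fun r hr y _ => ?_) fun y z hy hz => ?_
    · rw [smul_comm]
      exact Submodule.smul_mem_smul hr trivial
    · rw [smul_add]
      exact add_mem hy hz

end ClosedPointDim

/-! ### The endomorphism ring on the punctured spectrum -/

/-- An averaging argument: if `∑ aᵢ ⊗ bᵢ` is a separability element of `B` over `A` (it multiplies
to `1`, and `hc` makes it commute with `B`), then every `B`-module that is projective over `A` is
projective over `B`. -/
theorem projective_of_average {A B P : Type u} [CommRing A] [Ring B] [Algebra A B]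
    [AddCommGroup P] [Module A P] [Module B P] [IsScalarTower A B P] [Module.Projective A P]
    {n : ℕ} (a b : Fin n → B) (hab : ∑ i, a i * b i = 1)
    (hc : ∀ l : B, ∃ c : Fin n → Fin n → A, (∀ i, l * a i = ∑ k, c k i • a k) ∧
      ∀ k, b k * l = ∑ i, c k i • b i) : Module.Projective B P := by
  let π : (P →₀ B) →ₗ[B] P := Finsupp.linearCombination B id
  have hπ : Function.Surjective π := Finsupp.linearCombination_id_surjective B P
  obtain ⟨s, hs⟩ := Module.projective_lifting_property (π.restrictScalars A) LinearMap.id hπ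
  have hs' : ∀ y, π (s y) = y := fun y => LinearMap.congr_fun hs y
  let t : P →ₗ[B] (P →₀ B) :=
    { toFun := fun y => ∑ i, a i • s (b i • y)
      map_add' := fun y z => by
        simp only [smul_add, map_add, Finset.sum_add_distrib]
      map_smul' := fun l y => by
        obtain ⟨c, h1, h2⟩ := hc l
        have e1 : ∀ k, s (b k • l • y) = ∑ i, c k i • s (b i • y) := fun k => by
          rw [smul_smul, h2, Finset.sum_smul, map_sum]
          exact Finset.sum_congr rfl fun i _ => by rw [smul_assoc, map_smul]
        have e2 : ∀ i, l • a i • s (b i • y) = ∑ k, a k • c k i • s (b i • y) := fun i => by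
          rw [smul_smul, h1, Finset.sum_smul]
          exact Finset.sum_congr rfl fun k _ => by rw [smul_assoc, smul_comm]
        simp only [e1, RingHom.id_apply, Finset.smul_sum, e2]
        exact Finset.sum_comm }
  refine Module.Projective.of_split t π (LinearMap.ext fun y => ?_)
  change π (∑ i, a i • s (b i • y)) = y
  simp only [map_sum, map_smul, hs', smul_smul]
  rw [← Finset.sum_smul, hab, one_smul]

section Punctured
variable {R : Type u} [CommRing R] [IsLocalRing R] [IsNoetherianRing R] [IsDomain R]
  [IsIntegrallyClosed R]

variable {M : Type u} [AddCommGroup M] [Module R M]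

/-- For a nonmaximal prime `p`, an `(End M)ₚ`-module that is projective over `Rₚ` is projective:
`Mₚ` is free of positive rank, so `(End M)ₚ` is a matrix ring. The matrix units are replaced by
the rank-one maps `h ⊗ mᵢ` and `gᵢ ⊗ m₀`, with `g`, `m` a dual basis up to the unit `s` and
`h m₀` a unit. -/
theorem projective_localized (hdim : ringKrullDim R = 2) [Module.Finite R M] [Nontrivial M]
    [Module.IsTorsionFree R M] (p : Ideal R) [p.IsPrime] (hp : p ≠ maximalIdeal R)
    (P : Type u) [AddCommGroup P] [Module (Localization.AtPrime p) P]
    [Module (Localization.AtPrime p ⊗[R] Module.End R M) P]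
    [IsScalarTower (Localization.AtPrime p) (Localization.AtPrime p ⊗[R] Module.End R M) P]
    [Module.Projective (Localization.AtPrime p) P] :
    Module.Projective (Localization.AtPrime p ⊗[R] Module.End R M) P := by
  obtain ⟨s, hs, n, g, m, hgm, -⟩ := exists_dualBasis hdim p hp M
  obtain ⟨h, m0, hc⟩ := exists_trace hdim p hp M
  let A := Localization.AtPrime p
  obtain ⟨us, hus⟩ : IsUnit (algebraMap R A s) :=
    IsLocalization.map_units A (⟨s, hs⟩ : p.primeCompl)
  obtain ⟨uc, huc⟩ : IsUnit (algebraMap R A (h m0)) :=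
    IsLocalization.map_units A (⟨h m0, hc⟩ : p.primeCompl)
  let α : Fin n → Module.End R M := fun i => h.smulRight (m i)
  let β : Fin n → Module.End R M := fun i => (g i).smulRight m0
  let v : A := ↑us⁻¹ * ↑uc⁻¹
  have hus' : (↑us⁻¹ : A) * algebraMap R A s = 1 := by rw [← hus]; exact us.inv_mul
  have huc' : (↑uc⁻¹ : A) * algebraMap R A (h m0) = 1 := by rw [← huc]; exact uc.inv_mul
  refine projective_of_average (A := A) (fun i => v ⊗ₜ α i) (fun i => 1 ⊗ₜ β i) ?_ ?_
  · have h1 : ∑ i, α i * β i = (s * h m0) • (1 : Module.End R M) := by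
      refine LinearMap.ext fun x => ?_
      rw [LinearMap.sum_apply]
      change ∑ i, h (g i x • m0) • m i = (s * h m0) • x
      rw [mul_comm, mul_smul, hgm, Finset.smul_sum]
      refine Finset.sum_congr rfl fun i _ => ?_
      rw [map_smul, smul_eq_mul, mul_comm, mul_smul]
    simp only [Algebra.TensorProduct.tmul_mul_tmul, mul_one]
    rw [← TensorProduct.tmul_sum, h1, TensorProduct.tmul_smul, TensorProduct.smul_tmul',
      Algebra.TensorProduct.one_def]
    congr 1
    rw [Algebra.smul_def, map_mul]
    calc _ = (↑us⁻¹ * algebraMap R A s) * (↑uc⁻¹ * algebraMap R A (h m0)) := by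
            simp only [v]; ring
      _ = 1 := by rw [hus', huc', mul_one]
  · intro l
    induction l with
    | zero => exact ⟨0, by simp, by simp⟩
    | add x y hx hy =>
      obtain ⟨c, h1, h2⟩ := hx
      obtain ⟨c', h1', h2'⟩ := hy
      refine ⟨c + c', fun i => ?_, fun k => ?_⟩
      · rw [add_mul, h1, h1', ← Finset.sum_add_distrib]
        exact Finset.sum_congr rfl fun k _ => (add_smul _ _ _).symm
      · rw [mul_add, h2, h2', ← Finset.sum_add_distrib]
        exact Finset.sum_congr rfl fun k _ => (add_smul _ _ _).symm
    | tmul a l =>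
      let c : Fin n → Fin n → R := fun k i => g k (l (m i))
      have e1 : ∀ i, s • (l * α i) = ∑ k, c k i • α k := fun i => by
        refine LinearMap.ext fun x => ?_
        rw [LinearMap.sum_apply]
        change s • l (h x • m i) = ∑ k, g k (l (m i)) • h x • m k
        rw [map_smul, smul_comm, hgm, Finset.smul_sum]
        exact Finset.sum_congr rfl fun k _ => smul_comm _ _ _
      have e2 : ∀ k, s • (β k * l) = ∑ i, c k i • β i := fun k => by
        refine LinearMap.ext fun x => ?_
        rw [LinearMap.sum_apply]
        change s • g k (l x) • m0 = ∑ i, g k (l (m i)) • g i x • m0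
        rw [smul_smul, ← smul_eq_mul, ← map_smul, ← map_smul, hgm, map_sum, map_sum,
          Finset.sum_smul]
        refine Finset.sum_congr rfl fun i _ => ?_
        rw [map_smul, map_smul, smul_eq_mul, smul_smul, mul_comm]
      have key : ∀ (w : A) (x : Module.End R M) (c : Fin n → R) (y : Fin n → Module.End R M),
          s • x = ∑ k, c k • y k →
          (a * w) ⊗ₜ[R] x = ∑ k, (a * ↑us⁻¹ * algebraMap R A (c k)) • (w ⊗ₜ[R] y k) := by
        intro w x c y hx
        have : (a * w) ⊗ₜ[R] x = (a * ↑us⁻¹ * w) ⊗ₜ[R] (s • x) := by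
          rw [TensorProduct.tmul_smul, TensorProduct.smul_tmul']
          congr 1
          rw [Algebra.smul_def]
          calc a * w = a * w * (↑us⁻¹ * algebraMap R A s) := by rw [hus', mul_one]
            _ = _ := by ring
        rw [this, hx, TensorProduct.tmul_sum]
        refine Finset.sum_congr rfl fun k _ => ?_
        rw [TensorProduct.tmul_smul, TensorProduct.smul_tmul', TensorProduct.smul_tmul']
        congr 1
        rw [Algebra.smul_def, smul_eq_mul]
        ring
      refine ⟨fun k i => a * ↑us⁻¹ * algebraMap R A (c k i), fun i => ?_, fun k => ?_⟩
      · rw [Algebra.TensorProduct.tmul_mul_tmul]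
        exact key _ _ _ _ (e1 i)
      · rw [Algebra.TensorProduct.tmul_mul_tmul, one_mul, ← mul_one a]
        simp only [mul_one]
        have := key 1 _ _ _ (e2 k)
        rwa [mul_one] at this

theorem projective_of_isField {A : Type u} [CommRing A] (hA : IsField A) (X : Type u)
    [AddCommGroup X] [Module A X] : Module.Projective A X := by
  let := hA.toField
  exact Module.Projective.of_free

/-- A finite torsion-free algebra over a local domain that is not a field is not semisimple. -/
theorem not_gldim_zero {A B : Type u} [CommRing A] [IsDomain A] [IsLocalRing A] [Ring B]
    [Algebra A B] [Module.Finite A B] [Nontrivial B] [Module.IsTorsionFree A B]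
    (hA : ¬ IsField A) : ¬ GlobalDimLE B 0 := by
  intro h
  rw [gldim_iff] at h
  obtain ⟨x, hx, hx0⟩ := Submodule.exists_mem_ne_zero_of_ne_bot
    (fun h0 => hA (IsLocalRing.isField_iff_maximalIdeal_eq.2 h0) : maximalIdeal A ≠ ⊥)
  let K : Submodule B B := Submodule.span B {algebraMap A B x}
  have hproj : Module.Projective B (B ⧸ K) := (pd_zero_iff _).1 (h (ModuleCat.of B (B ⧸ K)))
  obtain ⟨σ, hσ⟩ := Module.projective_lifting_property K.mkQ LinearMap.id K.mkQ_surjective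
  have h1 : K.mkQ (σ (K.mkQ 1)) = K.mkQ 1 := LinearMap.congr_fun hσ _
  have h2 : algebraMap A B x • K.mkQ 1 = 0 := by
    rw [← map_smul, smul_eq_mul, mul_one]
    exact (Submodule.Quotient.mk_eq_zero K).2 (Submodule.mem_span_singleton_self _)
  have h3 : x • σ (K.mkQ 1) = 0 := by
    rw [Algebra.smul_def, ← smul_eq_mul, ← map_smul, h2, map_zero]
  rw [(smul_eq_zero_iff_right hx0).1 h3, map_zero] at h1
  have h4 : (1 : B) ∈ K := (Submodule.Quotient.mk_eq_zero K).1 h1.symm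
  obtain ⟨b, hb⟩ := Submodule.mem_span_singleton.1 h4
  refine one_notMem_smul_top (A := A) (B := B) ?_
  rw [← hb, smul_eq_mul, ← Algebra.commutes, ← Algebra.smul_def]
  exact Submodule.smul_mem_smul hx trivial

/-- `gl.dim (End M)ₚ = dim Rₚ` for every nonmaximal prime `p`. -/
theorem globalDim_localized (hdim : ringKrullDim R = 2) [Module.Finite R M] [Nontrivial M]
    (hM : DepthTwo R M) (p : Ideal R) [p.IsPrime] (hp : p ≠ maximalIdeal R) :
    (globalDim (Localization.AtPrime p ⊗[R] Module.End R M) : WithBot ℕ∞) =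
      ringKrullDim (Localization.AtPrime p) := by
  have := hM.torsionFree hdim
  have hΛ : DepthTwo R (Module.End R M) := hM.hom
  have := hΛ.torsionFree hdim
  let A := Localization.AtPrime p
  let B := A ⊗[R] Module.End R M
  have hpid : IsPrincipalIdealRing A := pid_localization hdim p hp
  have htf : Module.IsTorsionFree A B :=
    IsLocalizedModule.isTorsionFree (TensorProduct.mk R A (Module.End R M) 1) p.primeCompl
  have hnt : Nontrivial B := by
    refine ⟨1, 0, fun h => ?_⟩
    have h' : TensorProduct.mk R A (Module.End R M) 1 1 =
        TensorProduct.mk R A (Module.End R M) 1 0 := by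
      rw [map_zero]; exact h
    obtain ⟨c, hc⟩ := (IsLocalizedModule.eq_iff_exists p.primeCompl
      (TensorProduct.mk R A (Module.End R M) 1)).1 h'
    rw [smul_zero] at hc
    have hc0 : (c : R) ≠ 0 := fun h0 => c.2 (h0 ▸ p.zero_mem)
    exact one_ne_zero ((smul_eq_zero_iff_right hc0).1 hc)
  have hnoeth : IsNoetherian B B := isNoetherian_of_tower A inferInstance
  by_cases hA : IsField A
  · rw [ringKrullDim_eq_zero_of_isField hA]
    have h0 : GlobalDimLE B 0 := by
      rw [gldim_iff]
      intro X
      refine (pd_zero_iff X).2 ?_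
      let _ : Module A X := Module.compHom X (algebraMap A B)
      have : IsScalarTower A B X := ⟨fun a b x =>
        (congrArg (· • x) (Algebra.smul_def a b)).trans (mul_smul (algebraMap A B a) b x)⟩
      have := projective_of_isField hA X
      exact projective_localized hdim p hp X
    rw [globalDim_eq h0 (by omega)]
    rfl
  · rw [IsPrincipalIdealRing.ringKrullDim_eq_one A hA]
    have h1 : GlobalDimLE B 1 := by
      refine gldim_of_cyclic 1 fun I => ?_
      rw [pd_succ_iff I.mkQ I.mkQ_surjective 0, Submodule.ker_mkQ, pd_zero_iff]
      have : Module.Finite A I := by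
        have hn : IsNoetherian A B := inferInstance
        exact Module.Finite.of_fg (hn.noetherian (I.restrictScalars A))
      have : Module.IsTorsionFree A I :=
        (I.restrictScalars A).subtype_injective.moduleIsTorsionFree _ (fun _ _ => rfl)
      have : Module.Projective A I := inferInstance
      exact projective_localized hdim p hp I
    have h2 : ¬ GlobalDimLE B 0 := not_gldim_zero hA
    rw [globalDim_eq h1 (by rintro e he; obtain rfl : e = 0 := (by omega); exact h2)]
    rfl

end Punctured

/-! ### The additive generator gives a steady NCCR -/

section Steady
variable {R : Type u} [CommRing R] [IsLocalRing R] [IsNoetherianRing R] [IsDomain R]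
  [IsIntegrallyClosed R]

omit [IsNoetherianRing R] [IsIntegrallyClosed R] [IsLocalRing R] in
theorem indecomposable_self : IsIndecomposableModule R R := by
  refine ⟨inferInstance, fun A B hAB => ?_⟩
  by_contra! h
  obtain ⟨a, ha, ha0⟩ := Submodule.exists_mem_ne_zero_of_ne_bot h.1
  obtain ⟨b, hb, hb0⟩ := Submodule.exists_mem_ne_zero_of_ne_bot h.2
  have h1 : a * b ∈ A := by
    rw [mul_comm]
    exact A.smul_mem b ha
  have h2 : a * b ∈ B := B.smul_mem a hb
  exact mul_ne_zero ha0 hb0 (Submodule.disjoint_def.1 hAB.disjoint _ h1 h2)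

/-- A finite module of depth two whose additive closure contains every finite module of depth two
gives an NCCR. -/
theorem givesNCCR_of_add (hdim : ringKrullDim R = 2) {M : Type u} [AddCommGroup M] [Module R M]
    [Module.Finite R M] [Nontrivial M] (hM : DepthTwo R M)
    (hadd : ∀ (X : Type u) [AddCommGroup X] [Module R X] [Module.Finite R X], DepthTwo R X →
      ∃ (n : ℕ) (i : X →ₗ[R] (Fin n → M)) (p : (Fin n → M) →ₗ[R] X), p ∘ₗ i = LinearMap.id) :
    GivesNCCR R M := by
  have hrefl := hM.reflexive hdim
  have hΛ : DepthTwo R (Module.End R M) := hM.hom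
  refine ⟨inferInstance, hrefl, inferInstance, inferInstance, (isMCM_iff hdim).2 hΛ, ?_⟩
  rintro ⟨p, hp⟩
  change (globalDim (Localization.AtPrime p ⊗[R] Module.End R M) : WithBot ℕ∞) =
    ringKrullDim (Localization.AtPrime p)
  by_cases hpm : p = maximalIdeal R
  · subst hpm
    have e := closedPointEquiv (R := R) (Module.End R M)
    have h2 := gldim_congr e.symm (gldim_end_le_two hdim hadd)
    have h1 : ¬ GlobalDimLE (Localization.AtPrime (maximalIdeal R) ⊗[R] Module.End R M) 1 :=
      fun h => not_gldim_end_le_one hM (gldim_congr e h)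
    rw [ringKrullDim_closedPoint, hdim,
      globalDim_eq h2 (by rintro d hd; obtain rfl : d = 1 := (by omega); exact h1)]
    rfl
  · exact globalDim_localized hdim hM p hpm

/-- The direct sum of all indecomposable maximal Cohen–Macaulay modules: its additive closure is
the class of all finite modules of depth two. -/
theorem exists_additive_generator (hdim : ringKrullDim R = 2) (h : HasFiniteCMType R) :
    ∃ (m : ℕ) (N : Fin m → ModuleCat.{u} R), (∀ i, Module.Finite R (N i)) ∧
      (∀ i, IsIndecomposableModule R (N i)) ∧ (∀ i, DepthTwo R (N i)) ∧
      Nontrivial (∀ i, N i) ∧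
      ∀ (X : Type u) [AddCommGroup X] [Module R X] [Module.Finite R X], DepthTwo R X →
      ∃ (n : ℕ) (i : X →ₗ[R] (Fin n → ∀ i, N i)) (p : (Fin n → ∀ i, N i) →ₗ[R] X),
        p ∘ₗ i = LinearMap.id := by
  obtain ⟨m₀, N₀, hN₀⟩ := h
  let S := {j : Fin m₀ // Module.Finite R (N₀ j) ∧ IsIndecomposableModule R (N₀ j) ∧
    DepthTwo R (N₀ j)}
  obtain ⟨m, ⟨σ⟩⟩ := Finite.exists_equiv_fin S
  let N : Fin m → ModuleCat.{u} R := fun i => N₀ (σ.symm i).1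
  have hN : ∀ (L : Type u) [AddCommGroup L] [Module R L] [Module.Finite R L],
      IsIndecomposableModule R L → DepthTwo R L → ∃ i, Nonempty (L ≃ₗ[R] N i) := by
    intro L _ _ hL hind hd
    obtain ⟨j, ⟨E⟩⟩ := hN₀ (ModuleCat.of R L) hL hind ((isMCM_iff hdim).2 hd)
    let E' : L ≃ₗ[R] N₀ j := E
    have hS : Module.Finite R (N₀ j) ∧ IsIndecomposableModule R (N₀ j) ∧ DepthTwo R (N₀ j) := by
      refine ⟨Module.Finite.equiv E', ⟨E'.symm.toEquiv.nontrivial_congr.2 hind.1, ?_⟩,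
        hd.of_equiv E'⟩
      intro A B hAB
      let Φ := Submodule.orderIsoMapComap E'.symm
      exact (hind.2 (Φ A) (Φ B) (Φ.isCompl hAB)).imp (map_eq_bot_iff Φ).1 (map_eq_bot_iff Φ).1
    refine ⟨σ ⟨j, hS⟩, ?_⟩
    change Nonempty (L ≃ₗ[R] N₀ (σ.symm (σ ⟨j, hS⟩)).1)
    rw [σ.symm_apply_apply]
    exact ⟨E'⟩
  refine ⟨m, N, fun i => (σ.symm i).2.1, fun i => (σ.symm i).2.2.1, fun i => (σ.symm i).2.2.2,
    ?_, ?_⟩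
  · obtain ⟨i, ⟨E⟩⟩ := hN R indecomposable_self (depthTwo_self hdim)
    have : Nontrivial (N i) := E.symm.toEquiv.nontrivial
    have : ∀ i, Nonempty (N i) := fun i => ⟨0⟩
    exact Pi.nontrivial_at i
  · intro X _ _ _ hX
    obtain ⟨l, hl, hsum⟩ := exists_list_idempotents (1 : Module.End R X) IsIdempotentElem.one
    refine retract_of_list l (fun e he => ?_) hsum
    obtain ⟨hid, hind⟩ := hl e he
    have hret : e.rangeRestrict ∘ₗ (LinearMap.range e).subtype = LinearMap.id := by
      refine LinearMap.ext fun x => Subtype.ext ?_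
      obtain ⟨y, hy⟩ := x.2
      change e x = x
      rw [← hy]
      exact LinearMap.congr_fun hid y
    obtain ⟨i, ⟨E⟩⟩ := hN (LinearMap.range e) hind (hX.of_retract _ _ hret)
    refine ⟨LinearMap.single R (fun i => N i) i ∘ₗ E.toLinearMap ∘ₗ e.rangeRestrict,
      (LinearMap.range e).subtype ∘ₗ E.symm.toLinearMap ∘ₗ LinearMap.proj i,
      LinearMap.ext fun x => ?_⟩
    simp

/-- The sum of the indecomposable maximal Cohen–Macaulay modules gives an NCCR which is both
steady and semi-steady, because every Hom module into it has depth two. -/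
theorem steady_of_finiteType (hdim : ringKrullDim R = 2) (h : HasFiniteCMType R) :
    HasSteadyNCCR R ∧ HasSemiSteadyNCCR R := by
  obtain ⟨m, N, hfin, hind, hd, hnt, hadd⟩ := exists_additive_generator hdim h
  have hM : DepthTwo R (∀ i, N i) := DepthTwo.pi hd
  have hN := givesNCCR_of_add hdim hM hadd
  have hmem : ∀ (X : Type u) [AddCommGroup X] [Module R X] [Module.Finite R X], DepthTwo R X →
      MemAdd R (∀ i, N i) X := by
    intro X _ _ _ hX
    obtain ⟨n, i, p, hip⟩ := hadd X hX
    exact memAdd_of_retract i p hip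
  have hgen : IsGeneratorModule R (∀ i, N i) := hmem R (depthTwo_self hdim)
  exact ⟨⟨ModuleCat.of R (∀ i, N i), hN, hgen, hmem (Module.End R (∀ i, N i)) hM.hom⟩,
    ⟨m, N, hfin, hind, hN, hgen, fun i => Or.inl (hmem _ hM.hom)⟩⟩

end Steady

end NCCR

/-- Let `R` be a 2-dimensional complete Noetherian local normal domain
containing an algebraically closed field of characteristic zero. Then the following are
equivalent: (i) `R` has a steady NCCR; (ii) `R` has a semi-steady NCCR; (iii) `R` has an
NCCR; (iv) `R` is of finite Cohen-Macaulay representation type. -/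
theorem tfae_NCCR_two_dimensional
    (R : Type u) [CommRing R] [IsNoetherianRing R] [IsDomain R] [IsIntegrallyClosed R]
    [IsLocalRing R] [IsAdicComplete (IsLocalRing.maximalIdeal R) R]
    (hdim : ringKrullDim R = 2)
    (k : Type u) [Field k] [IsAlgClosed k] [CharZero k] [Algebra k R] :
    List.TFAE [HasSteadyNCCR R, HasSemiSteadyNCCR R, HasNCCR R, HasFiniteCMType R] := by
  tfae_have 1 → 3 := fun ⟨M, hM, _⟩ => ⟨M, hM⟩
  tfae_have 2 → 3 := fun ⟨_, M, _, _, hM, _⟩ => ⟨ModuleCat.of R (∀ i, M i), hM⟩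
  tfae_have 3 → 4 := NCCR.finiteType_of_NCCR hdim
  tfae_have 4 → 1 := fun h => (NCCR.steady_of_finiteType hdim h).1
  tfae_have 4 → 2 := fun h => (NCCR.steady_of_finiteType hdim h).2
  tfae_finish
end
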